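/- Let (W,T) be an affine dual Coxeter system and let w ∈ W be a parabolic quasi-Coxeter element for (W,T). Then the Hurwitz action of the braid group on the set Red_T(w) of reduced reflection factorizations of w is transitive. -/

import Mathlib

open scoped RealInnerProductSpace

noncomputable section

variable {V : Type*} [NormedAddCommGroup V] [InnerProductSpace ℝ V]

/-- The coroot `α^∨ = 2α/(α|α)` of a vector `α`. -/
def coroot (α : V) : V := (2 / ⟪α, α⟫) • α

/-- The affine reflection `s_{α,k} : v ↦ v - ((v|α) - k)α^∨`, as a function. -/
def sAffFun (α : V) (k : ℝ) (v : V) : V := v - (⟪v, α⟫ - k) • coroot α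

theorem sAffFun_involutive (α : V) (k : ℝ) : Function.Involutive (sAffFun α k) := by
  intro v
  by_cases h : α = 0
  · simp [sAffFun, coroot, h]
  · have h2 : ⟪α, α⟫ ≠ 0 := by
      intro hz
      exact h (inner_self_eq_zero.mp hz)
    have hr : ⟪coroot α, α⟫ = 2 := by
      simp only [coroot, real_inner_smul_left]
      field_simp
    simp only [sAffFun, inner_sub_left, real_inner_smul_left, hr]
    have : ⟪v, α⟫ - (⟪v, α⟫ - k) * 2 - k = -(⟪v, α⟫ - k) := by ring
    rw [this, neg_smul, sub_neg_eq_add, sub_add_cancel]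

/-- The affine reflection `s_{α,k}` as a permutation of `V`. -/
def sAff (α : V) (k : ℝ) : Equiv.Perm V :=
  Function.Involutive.toPerm _ (sAffFun_involutive α k)

/-- The translation `Tr(x) : v ↦ v + x`, as a function. -/
def trFun (x : V) (v : V) : V := v + x

/-- The translation `Tr(x) : v ↦ v + x`, as a permutation of `V`. -/
def trPerm (x : V) : Equiv.Perm V := Equiv.addRight x

/-- A crystallographic (reduced) root system in a Euclidean space `V`. -/
structure IsCrystRootSystem (Φ : Set V) : Prop where
  finite : Φ.Finite
  nonempty : Φ.Nonempty
  ne_zero : ∀ α ∈ Φ, α ≠ 0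
  spanning : Submodule.span ℝ Φ = ⊤
  refl_mem : ∀ α ∈ Φ, ∀ β ∈ Φ, sAffFun α 0 β ∈ Φ
  reduced : ∀ α ∈ Φ, ∀ c : ℝ, c • α ∈ Φ → c = 1 ∨ c = -1
  cryst : ∀ α ∈ Φ, ∀ β ∈ Φ, ∃ n : ℤ, 2 * ⟪β, α⟫ / ⟪α, α⟫ = (n : ℝ)

/-- The (finite) Weyl group of `Φ`, generated by the reflections `s_α`. -/
def WeylGroup (Φ : Set V) : Subgroup (Equiv.Perm V) :=
  Subgroup.closure {g | ∃ α ∈ Φ, g = sAff α 0}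

/-- The affine Weyl group of `Φ`, generated by all affine reflections `s_{α,k}`, `k ∈ ℤ`. -/
def AffWeylGroup (Φ : Set V) : Subgroup (Equiv.Perm V) :=
  Subgroup.closure {g | ∃ α ∈ Φ, ∃ k : ℤ, g = sAff α k}

/-- The set of reflections of the affine Weyl group. -/
def AffReflections (Φ : Set V) : Set (Equiv.Perm V) :=
  {g | ∃ α ∈ Φ, ∃ k : ℤ, g = sAff α k}

/-- The coweight lattice `P(Φ^∨) = {x | (x|α) ∈ ℤ for all α ∈ Φ}`. -/
def coweightLattice (Φ : Set V) : Set V :=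
  {x | ∀ α ∈ Φ, ∃ n : ℤ, ⟪x, α⟫ = (n : ℝ)}

/-- `Φ` is irreducible: it admits no decomposition into two nonempty orthogonal parts. -/
def IsIrreducibleRS (Φ : Set V) : Prop :=
  ∀ Φ₁ Φ₂ : Set V, Φ₁ ∪ Φ₂ = Φ → (∀ α ∈ Φ₁, ∀ β ∈ Φ₂, ⟪α, β⟫ = 0) →
    Φ₁ = ∅ ∨ Φ₂ = ∅

end


section Hurwitz

variable {G : Type*} [Group G]

/-- One Hurwitz move: replace two adjacent entries `(a, b)` by `(a * b * a⁻¹, a)`. -/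
def HurwitzMove (l l' : List G) : Prop :=
  ∃ (u v : List G) (a b : G),
    l = u ++ a :: b :: v ∧ l' = u ++ (a * b * a⁻¹) :: a :: v

/-- Hurwitz equivalence: two tuples are Hurwitz equivalent iff they lie in the same
orbit of the Hurwitz action of the braid group. -/
def HurwitzEquiv (l l' : List G) : Prop := Relation.EqvGen HurwitzMove l l'

/-- The reflection length `ℓ_T(w)` of `w` with respect to a generating set `T`. -/
noncomputable def reflLength (T : Set G) (w : G) : ℕ :=
  sInf {k | ∃ l : List G, (∀ t ∈ l, t ∈ T) ∧ l.prod = w ∧ l.length = k}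

/-- `l` is a reduced `T`-factorization of `w`, i.e. an element of `Red_T(w)`. -/
def IsRedFac (T : Set G) (w : G) (l : List G) : Prop :=
  (∀ t ∈ l, t ∈ T) ∧ l.prod = w ∧ l.length = reflLength T w

end Hurwitz


section DualCox

variable {W : Type*} [Group W]

/-- `(W,T)` is a dual Coxeter system: `T` is the set of reflections of some
Coxeter system on `W`. -/
def IsDualCoxeterSystem (W : Type*) [Group W] (T : Set W) : Prop :=
  ∃ (B : Type) (M : CoxeterMatrix B) (cs : CoxeterSystem M W),
    T = {t | cs.IsReflection t}

/-- `(W,T)` is a dual Coxeter system of rank `n`. -/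
def IsDualCoxeterSystemOfRank (W : Type*) [Group W] (T : Set W) (n : ℕ) : Prop :=
  ∃ (B : Type) (M : CoxeterMatrix B) (cs : CoxeterSystem M W),
    Nat.card B = n ∧ T = {t | cs.IsReflection t}

/-- `S ⊆ T` is a simple system for the dual Coxeter system `(W,T)`. -/
def IsSimpleSystem (T S : Set W) : Prop :=
  ∃ (B : Type) (M : CoxeterMatrix B) (cs : CoxeterSystem M W),
    S = Set.range cs.simple ∧ T = {t | cs.IsReflection t}

end DualCox


/-- `w` is a parabolic quasi-Coxeter element for the dual Coxeter system `(W,T)`: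
there are a simple system `s_1, …, s_n` for `(W,T)` and a reduced reflection
factorization `(t_1, …, t_m)` of `w` with `m ≤ n` such that
`⟨t_1, …, t_m⟩ = ⟨s_1, …, s_m⟩`. -/
def IsParabolicQuasiCoxeter {W : Type*} [Group W] (T : Set W) (w : W) : Prop :=
  ∃ (n m : ℕ) (hmn : m ≤ n) (s : Fin n → W) (t : Fin m → W),
    Function.Injective s ∧
    IsSimpleSystem T (Set.range s) ∧
    IsRedFac T w (List.ofFn t) ∧
    Subgroup.closure (Set.range t) =
      Subgroup.closure (Set.range fun j : Fin m => s (Fin.castLE hmn j))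

/-- A witness that the dual Coxeter system `(W,T)` is affine: an isomorphism of `W`
with the affine Weyl group of a crystallographic root system, carrying `T` onto the
set of affine reflections. -/
structure AffineDualCoxeterModel (W : Type*) [Group W] (T : Set W) where
  /-- the ambient Euclidean space -/
  E : Type
  [normed : NormedAddCommGroup E]
  [ips : InnerProductSpace ℝ E]
  [fd : FiniteDimensional ℝ E]
  /-- the crystallographic root system -/
  Φ : Set E
  isRoot : IsCrystRootSystem Φ
  /-- the isomorphism onto the affine Weyl group -/
  iso : W ≃* ↥(AffWeylGroup Φ)
  mem_T_iff : ∀ w : W, w ∈ T ↔ ∃ α ∈ Φ, ∃ k : ℤ, ((iso w : Equiv.Perm E)) = sAff α k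



section HZ
variable {G : Type*} [Group G]

/-- conjugation of a list -/
def cjl (g : G) (l : List G) : List G := l.map (fun x => g * x * g⁻¹)

@[simp] theorem cjl_nil (g : G) : cjl g [] = [] := rfl
@[simp] theorem cjl_cons (g x : G) (l : List G) : cjl g (x :: l) = (g * x * g⁻¹) :: cjl g l := rfl
@[simp] theorem cjl_append (g : G) (l l' : List G) : cjl g (l ++ l') = cjl g l ++ cjl g l' := by
  simp [cjl]
@[simp] theorem cjl_length (g : G) (l : List G) : (cjl g l).length = l.length := by simp [cjl]
theorem cjl_cjl (g h : G) (l : List G) : cjl g (cjl h l) = cjl (g * h) l := by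
  simp [cjl, mul_assoc]
@[simp] theorem cjl_one (l : List G) : cjl 1 l = l := by simp [cjl]
theorem mem_cjl {g y : G} {l : List G} : y ∈ cjl g l ↔ ∃ x ∈ l, g * x * g⁻¹ = y := by
  simp [cjl]
theorem cjl_prod (g : G) (l : List G) : (cjl g l).prod = g * l.prod * g⁻¹ := by
  induction l with
  | nil => simp
  | cons a l ih => simp [ih, mul_assoc]

namespace HurwitzEquiv

theorem refl (l : List G) : HurwitzEquiv l l := Relation.EqvGen.refl l
theorem symm {l l' : List G} (h : HurwitzEquiv l l') : HurwitzEquiv l' l := Relation.EqvGen.symm _ _ h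
theorem trans {l l' l'' : List G} (h : HurwitzEquiv l l') (h' : HurwitzEquiv l' l'') :
    HurwitzEquiv l l'' := Relation.EqvGen.trans _ _ _ h h'

theorem ofEq {l l' : List G} (h : l = l') : HurwitzEquiv l l' := h ▸ refl l

theorem move (u v : List G) (a b : G) :
    HurwitzEquiv (u ++ a :: b :: v) (u ++ (a * b * a⁻¹) :: a :: v) :=
  Relation.EqvGen.rel _ _ ⟨u, v, a, b, rfl, rfl⟩

/-- induction principle: a reflexive-transitive-symmetric relation containing moves -/
theorem ind {R : List G → List G → Prop} (hr : ∀ l, R l l) (hs : ∀ l l', R l l' → R l' l)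
    (ht : ∀ l l' l'', R l l' → R l' l'' → R l l'')
    (hm : ∀ u v a b, R (u ++ a :: b :: v) (u ++ (a * b * a⁻¹) :: a :: v))
    {l l' : List G} (h : HurwitzEquiv l l') : R l l' := by
  induction h with
  | rel x y h => obtain ⟨u, v, a, b, rfl, rfl⟩ := h; exact hm u v a b
  | refl x => exact hr x
  | symm x y _ ih => exact hs _ _ ih
  | trans x y z _ _ h1 h2 => exact ht _ _ _ h1 h2

theorem ctx (u v : List G) {l l' : List G} (h : HurwitzEquiv l l') :
    HurwitzEquiv (u ++ l ++ v) (u ++ l' ++ v) := by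
  refine ind (R := fun l l' => HurwitzEquiv (u ++ l ++ v) (u ++ l' ++ v)) ?_ ?_ ?_ ?_ h
  · intro l; exact refl _
  · intro l l' h; exact h.symm
  · intro l l' l'' h h'; exact h.trans h'
  · intro u' v' a b
    have := move (u ++ u') (v' ++ v) a b
    simpa using this

theorem appR (v : List G) {l l' : List G} (h : HurwitzEquiv l l') :
    HurwitzEquiv (l ++ v) (l' ++ v) := by simpa using ctx [] v h
theorem appL (u : List G) {l l' : List G} (h : HurwitzEquiv l l') :
    HurwitzEquiv (u ++ l) (u ++ l') := by simpa using ctx u [] h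

theorem prod_eq {l l' : List G} (h : HurwitzEquiv l l') : l.prod = l'.prod := by
  refine ind (R := fun l l' => l.prod = l'.prod) ?_ ?_ ?_ ?_ h
  · intro l; rfl
  · intro l l' h; exact h.symm
  · intro l l' l'' h h'; exact h.trans h'
  · intro u' v' a b; simp [mul_assoc]

theorem length_eq {l l' : List G} (h : HurwitzEquiv l l') : l.length = l'.length := by
  refine ind (R := fun l l' => l.length = l'.length) ?_ ?_ ?_ ?_ h
  · intro l; rfl
  · intro l l' h; exact h.symm
  · intro l l' l'' h h'; exact h.trans h'
  · intro u' v' a b; simp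

theorem closure_eq {l l' : List G} (h : HurwitzEquiv l l') :
    Subgroup.closure {x | x ∈ l} = Subgroup.closure {x | x ∈ l'} := by
  refine ind (R := fun l l' => Subgroup.closure {x | x ∈ l} = Subgroup.closure {x | x ∈ l'}) ?_ ?_ ?_ ?_ h
  · intro l; rfl
  · intro l l' h; exact h.symm
  · intro l l' l'' h h'; exact h.trans h'
  · intro u v a b
    apply le_antisymm
    · rw [Subgroup.closure_le]
      intro x hx
      have hS : ∀ y ∈ (u ++ (a * b * a⁻¹) :: a :: v), y ∈ Subgroup.closure {x | x ∈ (u ++ (a * b * a⁻¹) :: a :: v)} :=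
        fun y hy => Subgroup.subset_closure hy
      simp only [Set.mem_setOf_eq, List.mem_append, List.mem_cons] at hx
      have ha := hS a (by simp)
      have hb := hS (a * b * a⁻¹) (by simp)
      rcases hx with hx | rfl | rfl | hx
      · exact hS _ (by simp [hx])
      · exact ha
      · have := mul_mem (mul_mem (inv_mem ha) hb) ha
        simpa [mul_assoc] using this
      · exact hS _ (by simp [hx])
    · rw [Subgroup.closure_le]
      intro x hx
      have hS : ∀ y ∈ (u ++ a :: b :: v), y ∈ Subgroup.closure {x | x ∈ (u ++ a :: b :: v)} :=
        fun y hy => Subgroup.subset_closure hy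
      simp only [Set.mem_setOf_eq, List.mem_append, List.mem_cons] at hx
      have ha := hS a (by simp)
      have hb := hS b (by simp)
      rcases hx with hx | rfl | rfl | hx
      · exact hS _ (by simp [hx])
      · exact mul_mem (mul_mem ha hb) (inv_mem ha)
      · exact ha
      · exact hS _ (by simp [hx])

theorem all_mem {Q : G → Prop} {l l' : List G} (h : HurwitzEquiv l l')
    (hQ : ∀ a b, Q a → (Q (a * b * a⁻¹) ↔ Q b)) :
    (∀ x ∈ l, Q x) ↔ (∀ x ∈ l', Q x) := by
  refine ind (R := fun l l' => (∀ x ∈ l, Q x) ↔ (∀ x ∈ l', Q x)) ?_ ?_ ?_ ?_ h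
  · intro l; rfl
  · intro l l' h; exact h.symm
  · intro l l' l'' h h'; exact h.trans h'
  · intro u v a b
    simp only [List.mem_append, List.mem_cons]
    constructor
    · intro h x hx
      have ha : Q a := h a (by simp)
      have hb : Q b := h b (by simp)
      rcases hx with hx | rfl | rfl | hx
      · exact h _ (by simp [hx])
      · exact (hQ a b ha).2 hb
      · exact ha
      · exact h _ (by simp [hx])
    · intro h x hx
      have ha : Q a := h a (by simp)
      have hb : Q (a * b * a⁻¹) := h _ (by simp)
      rcases hx with hx | rfl | rfl | hx
      · exact h _ (by simp [hx])
      · exact ha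
      · exact (hQ a _ ha).1 hb
      · exact h _ (by simp [hx])

theorem cons_rot (a : G) (l : List G) : HurwitzEquiv (a :: l) (cjl a l ++ [a]) := by
  induction l with
  | nil => exact refl _
  | cons b l ih =>
    have h1 := move [] l a b
    have h2 := appL [a * b * a⁻¹] ih
    simp only [List.nil_append, List.cons_append, cjl_cons] at *
    exact h1.trans h2

theorem app_swap (l1 l2 : List G) : HurwitzEquiv (l1 ++ l2) (cjl l1.prod l2 ++ l1) := by
  induction l1 generalizing l2 with
  | nil => simpa using refl _
  | cons a l ih =>
    have h1 := appL [a] (ih l2)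
    have h2 := appR l (cons_rot a (cjl l.prod l2))
    simp only [List.cons_append, List.nil_append, cjl_cjl, List.prod_cons, List.append_assoc] at *
    exact h1.trans h2

/-- move right part past, leaving right unchanged -/
theorem app_swap' (l1 l2 : List G) : HurwitzEquiv (l1 ++ l2) (l2 ++ cjl l2.prod⁻¹ l1) := by
  have := app_swap l2 (cjl l2.prod⁻¹ l1)
  rw [cjl_cjl] at this
  simpa using this.symm

theorem cjl_of {l l' : List G} (g : G) (h : HurwitzEquiv l l') :
    HurwitzEquiv (cjl g l) (cjl g l') := by
  refine ind (R := fun l l' => HurwitzEquiv (cjl g l) (cjl g l')) ?_ ?_ ?_ ?_ h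
  · intro l; exact refl _
  · intro l l' h; exact h.symm
  · intro l l' l'' h h'; exact h.trans h'
  · intro u v a b
    have := move (cjl g u) (cjl g v) (g * a * g⁻¹) (g * b * g⁻¹)
    simpa [mul_assoc] using this

theorem conj_prod (l : List G) : HurwitzEquiv l (cjl l.prod l) := by
  induction l with
  | nil => simpa using refl _
  | cons a l ih =>
    -- a :: l ~ cjl a l ++ [a] ~ cjl (a*prod l) l... 
    have h1 := cons_rot a l
    have h2 := appR [a] (cjl_of a ih)
    have h3 := app_swap' (cjl a (cjl l.prod l)) [a]
    have h4 := app_swap (cjl (a * l.prod) l) [a]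
    have h5 := app_swap' (cjl (a * l.prod) l) [a]
    have h6 := cons_rot (a * l.prod * a * (a * l.prod)⁻¹) (cjl (a * l.prod) l)
    rw [cjl_cjl] at h2
    rw [cjl_prod] at h4
    refine h1.trans (h2.trans (h4.trans (ofEq ?_)))
    simp [mul_assoc]

theorem conj_zpow (l : List G) (k : ℤ) : HurwitzEquiv l (cjl (l.prod ^ k) l) := by
  have hp : ∀ k : ℕ, HurwitzEquiv l (cjl (l.prod ^ k) l) := by
    intro k
    induction k with
    | zero => simpa using refl _
    | succ k ih =>
      have := cjl_of l.prod ih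
      rw [cjl_cjl, ← pow_succ'] at this
      exact (conj_prod l).trans this
  obtain ⟨k, rfl | rfl⟩ := k.eq_nat_or_neg
  · simpa using hp k
  · have := cjl_of (l.prod ^ k)⁻¹ (hp k)
    rw [cjl_cjl] at this
    simpa using this.symm

theorem conj_zpow_of {l : List G} {w : G} (hw : l.prod = w) (k : ℤ) :
    HurwitzEquiv l (cjl (w ^ k) l) := hw ▸ conj_zpow l k

/-- bring an element to the end -/
theorem to_last {l : List G} {t : G} (h : t ∈ l) : ∃ l', HurwitzEquiv l (l' ++ [t]) := by
  obtain ⟨l1, l2, rfl⟩ := List.append_of_mem h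
  exact ⟨l1 ++ cjl t l2, by simpa using appL l1 (cons_rot t l2)⟩

theorem swap_comm (l : List G) (p : G → Bool)
    (h : ∀ x ∈ l, ∀ y ∈ l, p x = true → p y = false → x * y = y * x) :
    HurwitzEquiv l (l.filter p ++ l.filter (fun x => !p x)) := by
  induction l with
  | nil => exact refl _
  | cons a l ih =>
    have ih' := appL [a] (ih (fun x hx y hy => h x (by simp [hx]) y (by simp [hy])))
    simp only [List.cons_append, List.nil_append] at ih'
    cases hpa : p a with
    | true => simpa [List.filter_cons, hpa] using ih'
    | false =>
      refine ih'.trans ?_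
      have h2 := appR (l.filter (fun x => !p x)) (cons_rot a (l.filter p))
      have h3 : cjl a (l.filter p) = l.filter p := by
        unfold cjl
        conv_rhs => rw [← List.map_id (l.filter p)]
        apply List.map_congr_left
        intro x hx
        simp only [List.mem_filter] at hx
        have := h x (by simp [hx.1]) a (by simp) hx.2 hpa
        simp [← this]
      rw [h3] at h2
      simpa [List.filter_cons, hpa] using h2

end HurwitzEquiv
end HZ


namespace BDSW
open CoxeterSystem
variable {B : Type*} {W : Type*} [Group W] {M : CoxeterMatrix B} (cs : CoxeterSystem M W)

theorem end_mul {α : Type*} (f g : Function.End α) (x : α) : (f * g) x = f (g x) := rfl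

open Classical in
/-- generator of the parity action -/
noncomputable def eta (b : B) : Function.End (W × ZMod 2) :=
  fun p => (cs.simple b * p.1 * cs.simple b, p.2 + if p.1 = cs.simple b then 1 else 0)

open Classical in
theorem eta_pow (b c : B) (k : ℕ) (t : W) (e : ZMod 2) :
    ((eta cs b * eta cs c) ^ k) (t, e) =
      ((cs.simple b * cs.simple c) ^ k * t * ((cs.simple b * cs.simple c) ^ k)⁻¹,
        e + ∑ i ∈ Finset.range (2 * k),
          if t = (cs.simple c * cs.simple b) ^ i * cs.simple c then 1 else 0) := by
  induction k with
  | zero => simp [Function.End.one_def]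
  | succ k ih =>
    rw [pow_succ', end_mul, ih]
    set x := cs.simple b with hx
    set y := cs.simple c with hy
    have hxx : x * x = 1 := cs.simple_mul_simple_self b
    have hyy : y * y = 1 := cs.simple_mul_simple_self c
    have hxi : x⁻¹ = x := inv_eq_of_mul_eq_one_left hxx
    have hyi : y⁻¹ = y := inv_eq_of_mul_eq_one_left hyy
    have hinv : (x * y)⁻¹ = y * x := by simp [hxi, hyi]
    have hinvk : ((x * y) ^ k)⁻¹ = (y * x) ^ k := by rw [← inv_pow, hinv]
    rw [show 2 * (k + 1) = 2 * k + 1 + 1 by ring, Finset.sum_range_succ, Finset.sum_range_succ]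
    rw [end_mul]
    have hmv : ∀ k : ℕ, (y * x) ^ k * y = y * (x * y) ^ k := by
      intro k
      exact ((SemiconjBy.pow_right (a := y) (x := x*y) (y := y * x) (by simp [SemiconjBy, mul_assoc]) k).eq).symm
    have e1 : ((x * y) ^ k * t * ((x * y) ^ k)⁻¹ = y) ↔ t = (y * x) ^ (2 * k) * y := by
      rw [two_mul, pow_add, mul_assoc _ _ y, hmv k, ← hinvk]
      constructor
      · intro h
        calc t = ((x * y) ^ k)⁻¹ * ((x * y) ^ k * t * ((x * y) ^ k)⁻¹) * (x * y) ^ k := by group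
          _ = _ := by rw [h, mul_assoc]
      · intro h; rw [h]; simp [mul_assoc]
    have e2 : (y * ((x * y) ^ k * t * ((x * y) ^ k)⁻¹) * y = x) ↔ t = (y * x) ^ (2 * k + 1) * y := by
      rw [show 2 * k + 1 = k + (1 + k) by ring, pow_add, pow_add, mul_assoc ((y * x) ^ k) _ y, mul_assoc ((y * x) ^ 1) _ y, hmv k, ← hinvk]
      have : y * x = (x*y)⁻¹ := by rw [hinv]
      constructor
      · intro h
        have : (x * y) ^ k * t * ((x * y) ^ k)⁻¹ = y * x * y := by
          generalize (x * y) ^ k * t * ((x * y) ^ k)⁻¹ = z at h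
          rw [← h]; simp only [mul_assoc]; rw [hyy]; simp [← mul_assoc, hyy]
        calc t = ((x * y) ^ k)⁻¹ * ((x * y) ^ k * t * ((x * y) ^ k)⁻¹) * (x * y) ^ k := by group
          _ = _ := by rw [this]; simp [mul_assoc]
      · intro h
        rw [h]
        simp only [pow_one]
        have : (x * y) ^ k * (((x * y) ^ k)⁻¹ * (y * x * (y * (x * y) ^ k))) * ((x * y) ^ k)⁻¹ = y * x * y := by
          simp [mul_assoc]
        rw [this]
        simp only [mul_assoc]; rw [hyy]; simp [← mul_assoc, hyy]
    simp only [eta, ← hx, ← hy, e1, e2]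
    ext
    · simp only [pow_succ', mul_inv_rev, hxi, hyi]; simp only [mul_assoc]
    · simp only [add_assoc]

theorem eta_liftable : M.IsLiftable (eta cs) := by
  classical
  intro b c
  funext ⟨t, e⟩
  rw [eta_pow]
  have h1 : (cs.simple b * cs.simple c) ^ M b c = 1 := cs.simple_mul_simple_pow b c
  have h2 : (cs.simple c * cs.simple b) ^ M b c = 1 := by
    rw [M.symmetric]; exact cs.simple_mul_simple_pow c b
  rw [h1, two_mul, Finset.sum_range_add]
  simp only [pow_add, h2, one_mul, inv_one, mul_one]
  have : ∀ z : ZMod 2, z + z = 0 := by decide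
  rw [this]; simp [Function.End.one_def]

/-- The parity action -/
noncomputable def par : W →* Function.End (W × ZMod 2) := cs.lift ⟨eta cs, eta_liftable cs⟩

theorem par_simple (b : B) : par cs (cs.simple b) = eta cs b := by
  simp [par, cs.lift_apply_simple]

/-- parity function -/
noncomputable def nn (w t : W) : ZMod 2 := (par cs w (t, 0)).2

theorem par_eq (w t : W) (e : ZMod 2) : par cs w (t, e) = (w * t * w⁻¹, e + nn cs w t) := by
  have : ∀ t e, par cs w (t, e) = (w * t * w⁻¹, e + (par cs w (t, 0)).2) := by
    induction w using cs.simple_induction_left with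
    | one => intro t e; simp [Function.End.one_def]
    | mul_simple_left w i ih =>
      intro t e
      rw [map_mul, end_mul, end_mul, ih t e, ih t 0, par_simple]
      simp only [eta]
      ext
      · simp [mul_assoc]
      · simp [add_assoc]
  exact this t e

theorem nn_mul (g h t : W) : nn cs (g * h) t = nn cs h t + nn cs g (h * t * h⁻¹) := by
  conv_lhs => rw [nn, map_mul, end_mul, par_eq, par_eq]
  simp

theorem nn_one (t : W) : nn cs 1 t = 0 := by simp [nn, Function.End.one_def]

open Classical in
theorem nn_simple (b : B) (t : W) : nn cs (cs.simple b) t = if t = cs.simple b then 1 else 0 := by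
  simp [nn, par_simple, eta]

theorem nn_conj_inv (g t : W) : nn cs g⁻¹ (g * t * g⁻¹) = nn cs g t := by
  have := nn_mul cs g⁻¹ g t
  rw [inv_mul_cancel, nn_one] at this
  have h2 : ∀ a b : ZMod 2, 0 = a + b → b = a := by decide
  exact h2 _ _ this

theorem nn_self {t : W} (ht : cs.IsReflection t) : nn cs t t = 1 := by
  obtain ⟨g, i, rfl⟩ := ht
  rw [nn_mul, nn_conj_inv, nn_mul, nn_simple]
  have e : g⁻¹ * (g * cs.simple i * g⁻¹) * g⁻¹⁻¹ = cs.simple i := by group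
  have e2 : cs.simple i * cs.simple i * (cs.simple i)⁻¹ = cs.simple i := by simp
  rw [e, e2]
  simp only [if_true]
  have h2 : ∀ a : ZMod 2, a + (1 + a) = 1 := by decide
  exact h2 _

theorem mem_ris_of_nn {ω : List B} {t : W} (h : nn cs (cs.wordProd ω) t = 1) :
    t ∈ cs.rightInvSeq ω := by
  classical
  induction ω with
  | nil => simp [nn_one] at h
  | cons i ω ih =>
    rw [cs.wordProd_cons, nn_mul] at h
    rw [rightInvSeq]
    by_cases h1 : nn cs (cs.wordProd ω) t = 1
    · exact List.mem_cons_of_mem _ (ih h1)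
    · have h0 : nn cs (cs.simple i) (cs.wordProd ω * t * (cs.wordProd ω)⁻¹) ≠ 0 := by
        have h2 : ∀ a b : ZMod 2, a + b = 1 → a ≠ 1 → b ≠ 0 := by decide
        exact h2 _ _ h h1
      rw [nn_simple] at h0
      have := (ite_ne_right_iff.1 h0).1
      have : t = (cs.wordProd ω)⁻¹ * cs.simple i * cs.wordProd ω := by rw [← this]; group
      simp [this]

theorem lt_of_nn {w t : W} (h : nn cs w t = 1) : cs.length (w * t) < cs.length w := by
  obtain ⟨ω, h1, rfl⟩ := cs.exists_isReduced w
  exact (cs.isRightInversion_of_mem_rightInvSeq h1 (mem_ris_of_nn cs h)).2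

theorem nn_iff {w t : W} (ht : cs.IsReflection t) :
    nn cs w t = 1 ↔ cs.length (w * t) < cs.length w := by
  refine ⟨lt_of_nn cs, fun h => ?_⟩
  by_contra hn
  have h1 : nn cs (w * t) t = 1 := by
    rw [nn_mul, nn_self cs ht]
    have h2 : ∀ a : ZMod 2, a ≠ 1 → 1 + a = 1 := by decide
    apply h2
    simpa using hn
  have := lt_of_nn cs h1
  rw [mul_assoc, ht.mul_self, mul_one] at this
  omega

theorem nn_zero_iff {w t : W} (ht : cs.IsReflection t) :
    nn cs w t = 0 ↔ cs.length w < cs.length (w * t) := by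
  have h2 : ∀ a : ZMod 2, a = 0 ↔ ¬ a = 1 := by decide
  rw [h2, nn_iff cs ht]
  have := ht.length_mul_left_ne w
  omega

/-- dihedral identities -/
theorem conj_zpow_inv {G : Type*} [Group G] {a b : G} (ha : a * a = 1) (hb : b * b = 1) (k : ℤ) :
    a * (a * b) ^ k * a = (a * b) ^ (-k) := by
  have hai : a⁻¹ = a := inv_eq_of_mul_eq_one_left ha
  have hbi : b⁻¹ = b := inv_eq_of_mul_eq_one_left hb
  have h : a * (a * b) * a⁻¹ = (a * b)⁻¹ := by
    rw [mul_inv_rev, hai, hbi, ← mul_assoc, ha, one_mul]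
  have := conj_zpow (i := k) (a := a) (b := a * b)
  rw [hai] at this h
  rw [← this, h, inv_zpow, zpow_neg]

theorem full_eq (ω : List B) (i : B) (t1 t2 : W)
    (h1 : t1 = cs.wordProd ω * cs.simple i * (cs.wordProd ω)⁻¹) (h2 : t2 * t2 = 1)
    (hH : ∀ k l : ℤ, nn cs (t1 * (t1 * t2) ^ k) (t1 * (t1 * t2) ^ l) = 1) : t1 = t2 := by
  classical
  have h11 : t1 * t1 = 1 := by rw [h1]; simp [mul_assoc]
  have ht2 : t1 * (t1 * t2) ^ (1 : ℤ) = t2 := by simp [← mul_assoc, h11]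
  have ht1 : t1 * (t1 * t2) ^ (0 : ℤ) = t1 := by simp
  have key : ∀ (b : B) (k : ℤ), t1 * (t1 * t2) ^ k = cs.simple b → t1 = t2 := by
    intro b k hk
    have a1 := hH k 0
    have a2 := hH k 1
    rw [hk, nn_simple, ht1] at a1
    rw [hk, nn_simple, ht2] at a2
    have a1' := (ite_eq_left_iff.1 a1)
    have a2' := (ite_eq_left_iff.1 a2)
    simp only [zero_ne_one, imp_false, not_not] at a1' a2'
    rw [a1', a2']
  induction ω generalizing t1 t2 with
  | nil =>
    apply key i 0
    rw [ht1, h1]; simp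
  | cons j ω ih =>
    by_cases hex : ∃ k : ℤ, t1 * (t1 * t2) ^ k = cs.simple j
    · obtain ⟨k, hk⟩ := hex
      exact key j k hk
    · push Not at hex
      set s := cs.simple j with hs
      have hss : s * s = 1 := cs.simple_mul_simple_self j
      have hsi : s⁻¹ = s := inv_eq_of_mul_eq_one_left hss
      have hconj : ∀ k : ℤ, (s * t1 * s) * ((s * t1 * s) * (s * t2 * s)) ^ k = s * (t1 * (t1 * t2) ^ k) * s := by
        intro k
        have : (s * t1 * s) * (s * t2 * s) = s * (t1 * t2) * s⁻¹ := by
          rw [hsi]; simp only [mul_assoc]; rw [← mul_assoc s s, hss, one_mul]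
        rw [this, conj_zpow, hsi]
        simp only [mul_assoc]; rw [← mul_assoc s s, hss, one_mul]
      have hbase : s * t1 * s = s * t2 * s → t1 = t2 := by
        intro h; simpa using h
      apply hbase
      have h1' : s * t1 * s = cs.wordProd ω * cs.simple i * (cs.wordProd ω)⁻¹ := by
        rw [h1, cs.wordProd_cons, ← hs]
        simp only [mul_assoc, mul_inv_rev, hsi, hss]
        simp [← mul_assoc, hss]
      have h11' : (s * t1 * s) * (s * t1 * s) = 1 := by
        simp only [mul_assoc]; rw [← mul_assoc s s, hss, one_mul, ← mul_assoc t1 t1, h11, one_mul, hss]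
      have h2' : (s * t2 * s) * (s * t2 * s) = 1 := by
        simp only [mul_assoc]; rw [← mul_assoc s s, hss, one_mul, ← mul_assoc t2 t2, h2, one_mul, hss]
      have hH' : ∀ k l : ℤ, nn cs ((s * t1 * s) * ((s * t1 * s) * (s * t2 * s)) ^ k)
          ((s * t1 * s) * ((s * t1 * s) * (s * t2 * s)) ^ l) = 1 := by
        intro k l
        rw [hconj, hconj, ← hH k l]
        set g := t1 * (t1 * t2) ^ k with hg
        set r := t1 * (t1 * t2) ^ l with hr
        have hrs : r ≠ s := hex l
        have hgr : g * r * g⁻¹ ≠ s := by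
          have : g * r * g⁻¹ = t1 * (t1 * t2) ^ (k + k - l) := by
            have e1 := conj_zpow_inv h11 h2 k
            have e2 : r * ((t1 * t2)^k)⁻¹ * t1 = (t1 * t2) ^ (k-l) := by
              rw [hr, mul_assoc t1, ← zpow_neg, ← zpow_add, conj_zpow_inv h11 h2]; congr 1; ring
            have hti : t1⁻¹ = t1 := inv_eq_of_mul_eq_one_left h11
            rw [hg, mul_inv_rev, hti]
            calc t1 * (t1 * t2) ^ k * r * (((t1 * t2) ^ k)⁻¹ * t1)
                = t1 * (t1 * t2) ^ k * (r * ((t1 * t2)^k)⁻¹ * t1) := by simp only [mul_assoc]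
              _ = _ := by rw [e2, mul_assoc, ← zpow_add]; congr 2; ring
          rw [this]; exact hex _
        have c1 : s * r * s = s ↔ r = s := by
          constructor
          · intro h
            have : s * (s * r * s) * s = s * s * s := by rw [h]
            simpa [mul_assoc, hss, ← mul_assoc s s] using this
          · intro h; rw [h, hss, one_mul]
        rw [mul_assoc s g s, nn_mul, nn_mul, hs, nn_simple, nn_simple, ← hs]
        have c2 : s * (s * r * s) * s⁻¹ = r := by
          rw [hsi]; simp only [mul_assoc]; rw [hss, mul_one, ← mul_assoc, hss, one_mul]
        have c3 : g * s * (s * r * s) * (g * s)⁻¹ = g * r * g⁻¹ := by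
          rw [mul_inv_rev]
          calc g * s * (s * r * s) * (s⁻¹ * g⁻¹) = g * (s * (s * r * s) * s⁻¹) * g⁻¹ := by
                simp only [mul_assoc]
            _ = _ := by rw [c2]
        rw [c2, c3, if_neg hgr, if_neg (fun h => hrs (c1.1 h))]
        simp
      refine ih _ _ h1' h2' hH' h11' ?_ ?_ ?_
      · rw [zpow_one, ← mul_assoc, h11', one_mul]
      · simp
      · intro b k hk
        have a1 := hH' k 0
        have a2 := hH' k 1
        rw [hk, nn_simple] at a1 a2
        have a1' := (ite_eq_left_iff.1 a1)
        have a2' := (ite_eq_left_iff.1 a2)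
        simp only [zero_ne_one, imp_false, not_not] at a1' a2'
        rw [← a2', zpow_zero, mul_one] at a1'
        rw [a1', zpow_one, ← mul_assoc, h11', one_mul]

theorem refl_of_dihedral {t1 t2 : W} (h1 : cs.IsReflection t1) (h2 : cs.IsReflection t2) (k : ℤ) :
    cs.IsReflection (t1 * (t1 * t2) ^ k) := by
  have e := fun k => conj_zpow_inv h1.mul_self h2.mul_self k
  have h : ∀ j : ℤ, t1 * (t1 * t2) ^ j = (t1 * t2) ^ (-j) * t1 := by
    intro j
    rw [← e j, mul_assoc _ t1 t1, h1.mul_self, mul_one]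
  rcases Int.even_or_odd' k with ⟨j, rfl | rfl⟩
  · have : t1 * (t1 * t2) ^ (2 * j) = (t1 * t2) ^ (-j) * t1 * ((t1 * t2) ^ (-j))⁻¹ := by
      rw [← h j, two_mul, zpow_add, ← mul_assoc, zpow_neg, inv_inv]
    rw [this]; exact h1.conj _
  · have : t1 * (t1 * t2) ^ (2 * j + 1) = (t1 * t2) ^ (-j) * t2 * ((t1 * t2) ^ (-j))⁻¹ := by
      rw [show 2 * j + 1 = j + (1 + j) by ring, zpow_add, zpow_add, ← mul_assoc, h j, zpow_neg, inv_inv, zpow_one]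
      simp only [mul_assoc]
      rw [← mul_assoc t1 t1, h1.mul_self, one_mul]
    rw [this]; exact h2.conj _

theorem exists_lower {t1 t2 u : W} (h1 : cs.IsReflection t1) (h2 : cs.IsReflection t2) (hne : t1 ≠ t2) :
    ∃ k : ℤ, cs.length (u * (t1 * (t1 * t2) ^ k)) < cs.length u ∨
      cs.length (u * (t1 * (t1 * t2) ^ k)) < cs.length (u * (t1 * t2)) := by
  by_contra hcon
  push Not at hcon
  set c := t1 * t2 with hc
  clear_value c
  have hR := fun k => refl_of_dihedral cs h1 h2 k
  simp only [← hc] at hR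
  have e := fun k => conj_zpow_inv h1.mul_self h2.mul_self k
  simp only [← hc] at e
  have hcm : ∀ j : ℤ, t1 * c ^ j = c ^ (-j) * t1 := by
    intro j
    rw [← e j, mul_assoc _ t1 t1, h1.mul_self, mul_one]
  have hu : ∀ k : ℤ, nn cs u (t1 * c ^ k) = 0 := by
    intro k
    rw [nn_zero_iff cs (hR k)]
    have := (hcon k).1
    have := (hR k).length_mul_left_ne u
    omega
  have huc : ∀ k : ℤ, nn cs (u * c) (t1 * c ^ k) = 0 := by
    intro k
    rw [nn_zero_iff cs (hR k)]
    have h3 : u * c * (t1 * c ^ k) = u * (t1 * c ^ (k - 1)) := by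
      rw [hcm, hcm, show -(k - 1) = 1 + -k by ring, zpow_add, zpow_one]; simp only [mul_assoc]
    have := (hcon (k - 1)).2
    rw [← h3] at this
    have := (hR k).length_mul_left_ne (u * c)
    omega
  have hcc : ∀ k : ℤ, nn cs c (t1 * c ^ k) = 0 := by
    intro k
    have h3 := huc k
    rw [nn_mul] at h3
    have h4 : c * (t1 * c ^ k) * c⁻¹ = t1 * c ^ (k - 2) := by
      rw [hcm, hcm]
      have : t1 * c⁻¹ = c * t1 := by
        have := hcm (-1); simpa using this
      rw [mul_assoc, mul_assoc, this, ← mul_assoc _ c, ← zpow_add_one, ← mul_assoc, ← zpow_one_add]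
      congr 2; ring
    rw [h4, hu, add_zero] at h3
    exact h3
  have hct : ∀ (j : ℕ) (k : ℤ), nn cs (c ^ j) (t1 * c ^ k) = 0 := by
    intro j
    induction j with
    | zero => intro k; simp [nn_one]
    | succ j ih =>
      intro k
      have h4 : c * (t1 * c ^ k) * c⁻¹ = t1 * c ^ (k - 2) := by
        rw [hcm, hcm]
        have : t1 * c⁻¹ = c * t1 := by
          have := hcm (-1); simpa using this
        rw [mul_assoc, mul_assoc, this, ← mul_assoc _ c, ← zpow_add_one, ← mul_assoc, ← zpow_one_add]
        congr 2; ring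
      rw [pow_succ, nn_mul, h4, hcc, ih, add_zero]
  have hcz : ∀ (j : ℤ) (k : ℤ), nn cs (c ^ j) (t1 * c ^ k) = 0 := by
    intro j k
    obtain ⟨j, rfl | rfl⟩ := j.eq_nat_or_neg
    · rw [zpow_natCast]; exact hct j k
    · have h5 := nn_conj_inv cs (c ^ j) (c ^ (-(j:ℤ)) * (t1 * c ^ k) * (c ^ (-(j : ℤ)))⁻¹)
      have h6 : c ^ (-(j:ℤ)) * (t1 * c ^ k) * (c ^ (-(j : ℤ)))⁻¹ = t1 * c ^ (j + k + j : ℤ) := by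
        rw [← zpow_neg, neg_neg, ← mul_assoc, ← hcm, zpow_add, zpow_add]; simp only [mul_assoc]
      have h7 : c ^ j * (c ^ (-(j:ℤ)) * (t1 * c ^ k) * (c ^ (-(j : ℤ)))⁻¹) * (c ^ j)⁻¹ = t1 * c ^ k := by
        rw [zpow_neg, zpow_natCast]; group
      rw [h7, h6, hct] at h5
      rw [zpow_neg, zpow_natCast]
      exact h5
  have hall : ∀ j k : ℤ, nn cs (t1 * c ^ j) (t1 * c ^ k) = nn cs t1 (t1 * c ^ k) := by
    intro j k
    rw [hcm, nn_mul]
    have : t1 * (t1 * c ^ k) * t1⁻¹ = t1 * c ^ (-k) := by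
      have : t1⁻¹ = t1 := inv_eq_of_mul_eq_one_left h1.mul_self
      rw [this, mul_assoc, hcm k, mul_assoc, h1.mul_self, mul_one]
    rw [this, hcz, add_zero]
  have hH : ∀ k l : ℤ, nn cs (t1 * c ^ k) (t1 * c ^ l) = 1 := by
    intro k l
    rw [hall k l, ← hall l l, nn_self cs (hR l)]
  obtain ⟨g, i, hg⟩ := h1
  obtain ⟨ω, _, rfl⟩ := cs.exists_isReduced g
  subst hc
  exact hne (full_eq cs ω i t1 t2 hg h2.mul_self hH)

theorem hurwitz_pair {G : Type*} [Group G] {t1 t2 : G} (h1 : t1 * t1 = 1) (h2 : t2 * t2 = 1) (k : ℤ) :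
    HurwitzEquiv [t1, t2] [t1 * (t1 * t2) ^ k, t1 * (t1 * t2) ^ (k + 1)] := by
  set c := t1 * t2 with hc
  have e := fun k => conj_zpow_inv h1 h2 k
  simp only [← hc] at e
  have hcm : ∀ j : ℤ, t1 * c ^ j = c ^ (-j) * t1 := by
    intro j
    rw [← e j, mul_assoc _ t1 t1, h1, mul_one]
  have hti : t1⁻¹ = t1 := inv_eq_of_mul_eq_one_left h1
  have step : ∀ k : ℤ, HurwitzEquiv [t1 * c ^ k, t1 * c ^ (k + 1)] [t1 * c ^ (k - 1), t1 * c ^ k] := by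
    intro k
    have := HurwitzEquiv.move [] [] (t1 * c ^ k) (t1 * c ^ (k + 1))
    have e1 : t1 * c ^ k * (t1 * c ^ (k + 1)) * (t1 * c ^ k)⁻¹ = t1 * c ^ (k - 1) := by
      rw [mul_inv_rev, hti, ← zpow_neg]
      calc t1 * c ^ k * (t1 * c ^ (k + 1)) * (c ^ (-k) * t1)
          = t1 * c ^ k * (t1 * (c ^ (k + 1) * c ^ (-k)) * t1) := by simp only [mul_assoc]
        _ = _ := by rw [← zpow_add, e, mul_assoc, ← zpow_add]; congr 2; ring
    rw [e1] at this
    exact this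
  have base : HurwitzEquiv [t1, t2] [t1 * c ^ (0 : ℤ), t1 * c ^ (0 + 1 : ℤ)] := by
    apply HurwitzEquiv.ofEq
    simp [hc, ← mul_assoc, h1]
  induction k using Int.induction_on with
  | zero => exact base
  | succ k ih =>
    have := step (k + 1)
    simp only [add_sub_cancel_right] at this
    exact ih.trans this.symm
  | pred k ih =>
    have := step (-k)
    refine ih.trans ?_
    simpa using this

/-- total length of the path -/
noncomputable def pathLen : W → List W → ℕ
  | u, [] => cs.length u
  | u, a :: l => cs.length u + pathLen (u * a) l

theorem pathLen_append (u : W) (l : List W) :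
    ∃ N, ∀ b, ∀ l'', pathLen cs u (l ++ b :: l'') = N + pathLen cs (u * l.prod * b) l'' := by
  induction l generalizing u with
  | nil => exact ⟨cs.length u, by intro b l''; simp [pathLen]⟩
  | cons x l ih =>
    obtain ⟨N, hN⟩ := ih (u * x)
    refine ⟨cs.length u + N, fun b l'' => ?_⟩
    simp only [List.cons_append, pathLen, hN, List.prod_cons, mul_assoc, add_assoc]

/-- good reflections -/
def Good (J : Set B) (x : W) : Prop :=
  ∃ g ∈ Subgroup.closure (cs.simple '' J), ∃ i ∈ J, x = g * cs.simple i * g⁻¹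

theorem Good.mem {J : Set B} {x : W} (h : Good cs J x) : x ∈ Subgroup.closure (cs.simple '' J) := by
  obtain ⟨g, hg, i, hi, rfl⟩ := h
  exact mul_mem (mul_mem hg (Subgroup.subset_closure ⟨i, hi, rfl⟩)) (inv_mem hg)

theorem Good.conj {J : Set B} {x a : W} (h : Good cs J x) (ha : a ∈ Subgroup.closure (cs.simple '' J)) :
    Good cs J (a * x * a⁻¹) := by
  obtain ⟨g, hg, i, hi, rfl⟩ := h
  exact ⟨a * g, mul_mem ha hg, i, hi, by simp [mul_assoc]⟩

theorem exists_word {J : Set B} {w : W} (h : w ∈ Subgroup.closure (cs.simple '' J)) :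
    ∃ ω : List B, (∀ b ∈ ω, b ∈ J) ∧ cs.wordProd ω = w := by
  induction h using Subgroup.closure_induction with
  | mem x hx => obtain ⟨i, hi, rfl⟩ := hx; exact ⟨[i], by simpa using hi, by simp⟩
  | one => exact ⟨[], by simp, by simp⟩
  | mul x y _ _ h1 h2 =>
    obtain ⟨a, ha, rfl⟩ := h1
    obtain ⟨b, hb, rfl⟩ := h2
    refine ⟨a ++ b, ?_, by simp [cs.wordProd_append]⟩
    intro c hc; rcases List.mem_append.1 hc with h | h
    · exact ha _ h
    · exact hb _ h
  | inv x _ h =>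
    obtain ⟨a, ha, rfl⟩ := h
    exact ⟨a.reverse, by simpa using ha, by simp⟩

theorem good_of_mem_ris {J : Set B} {ω : List B} (hω : ∀ b ∈ ω, b ∈ J) {t : W}
    (ht : t ∈ cs.rightInvSeq ω) : Good cs J t := by
  induction ω with
  | nil => simp at ht
  | cons i ω ih =>
    rw [rightInvSeq, List.mem_cons] at ht
    rcases ht with rfl | ht
    · refine ⟨(cs.wordProd ω)⁻¹, inv_mem ?_, i, hω i (by simp), by simp⟩
      have : ∀ ω : List B, (∀ b ∈ ω, b ∈ J) → cs.wordProd ω ∈ Subgroup.closure (cs.simple '' J) := by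
        intro ω h
        induction ω with
        | nil => simp
        | cons j ω ih =>
          rw [cs.wordProd_cons]
          exact mul_mem (Subgroup.subset_closure ⟨j, h j (by simp), rfl⟩) (ih (fun b hb => h b (by simp [hb])))
      exact this ω (fun b hb => hω b (by simp [hb]))
    · exact ih (fun b hb => hω b (by simp [hb])) ht

theorem good_of_lt {J : Set B} {w t : W} (hw : w ∈ Subgroup.closure (cs.simple '' J))
    (ht : cs.IsReflection t) (h : cs.length (w * t) < cs.length w) : Good cs J t := by
  obtain ⟨ω, hω, rfl⟩ := exists_word cs hw
  exact good_of_mem_ris cs hω (mem_ris_of_nn cs ((nn_iff cs ht).2 h))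

theorem desc {J : Set B} (Y : List W) (hT : ∀ t ∈ Y, cs.IsReflection t)
    (hinc : ∀ u a v, Y = u ++ a :: v → cs.length u.prod < cs.length (u.prod * a))
    (hP : Y.prod ∈ Subgroup.closure (cs.simple '' J)) : ∀ t ∈ Y, Good cs J t := by
  induction Y using List.reverseRecOn with
  | nil => simp
  | append_singleton Y a ih =>
    have hlt := hinc Y a [] rfl
    have haR := hT a (by simp)
    have hP' : Y.prod * a ∈ Subgroup.closure (cs.simple '' J) := by simpa using hP
    have ha : Good cs J a := by
      apply good_of_lt cs hP' haR
      rwa [mul_assoc, haR.mul_self, mul_one]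
    have hY : Y.prod ∈ Subgroup.closure (cs.simple '' J) := by
      have := mul_mem hP' ha.mem
      rwa [mul_assoc, haR.mul_self, mul_one] at this
    intro t ht
    rcases List.mem_append.1 ht with h | h
    · refine ih (fun t ht => hT t (by simp [ht])) ?_ hY t h
      rintro u b v rfl
      exact hinc u b (v ++ [a]) (by simp)
    · simp at h; subst h; exact ha

theorem isRefl_conj_iff (a b : W) : cs.IsReflection (a * b * a⁻¹) ↔ cs.IsReflection b := by
  constructor
  · intro h
    have := h.conj a⁻¹
    simpa [mul_assoc] using this
  · intro h; exact h.conj a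

/-- minimal-length factorizations of elements of a standard parabolic consist of
reflections of that parabolic -/
theorem main {J : Set B} (Y : List W) (hT : ∀ t ∈ Y, cs.IsReflection t)
    (hmin : ∀ Z : List W, (∀ t ∈ Z, cs.IsReflection t) → Z.prod = Y.prod → Y.length ≤ Z.length)
    (hP : Y.prod ∈ Subgroup.closure (cs.simple '' J)) : ∀ t ∈ Y, Good cs J t := by
  classical
  obtain ⟨Z, hZ, hZm⟩ : ∃ Z, HurwitzEquiv Y Z ∧ ∀ Z', HurwitzEquiv Y Z' → pathLen cs 1 Z ≤ pathLen cs 1 Z' := by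
    have hne : ∃ k, ∃ Z, HurwitzEquiv Y Z ∧ pathLen cs 1 Z = k := ⟨_, Y, HurwitzEquiv.refl Y, rfl⟩
    obtain ⟨Z, h1, h2⟩ := Nat.find_spec hne
    exact ⟨Z, h1, fun Z' h' => h2 ▸ Nat.find_min' hne ⟨Z', h', rfl⟩⟩
  have hTZ : ∀ t ∈ Z, cs.IsReflection t :=
    (hZ.all_mem (Q := cs.IsReflection) (fun a b _ => isRefl_conj_iff cs a b)).1 hT
  have hinc : ∀ u a v, Z = u ++ a :: v → cs.length u.prod < cs.length (u.prod * a) := by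
    intro u
    induction u using List.reverseRecOn with
    | nil =>
      rintro a v rfl
      have := (hTZ a (by simp)).length_mul_left_ne 1
      simp only [cs.length_one, one_mul, List.prod_nil] at *
      omega
    | append_singleton u a ih =>
      intro b v hZeq
      have ha : cs.IsReflection a := hTZ a (by simp [hZeq])
      have hb : cs.IsReflection b := hTZ b (by simp [hZeq])
      have h1 := ih a (b :: v) (by simp [hZeq])
      have hab : a ≠ b := by
        rintro rfl
        have := hmin (u ++ v) (fun t ht => hTZ t (by
          rw [hZeq]; rcases List.mem_append.1 ht with h | h <;> simp [h])) (by
          rw [hZ.prod_eq, hZeq]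
          simp only [List.prod_append, List.prod_cons, List.prod_nil, mul_one]
          rw [← mul_assoc _ a v.prod, mul_assoc u.prod, ha.mul_self, mul_one])
        rw [hZ.length_eq, hZeq] at this
        simp at this
      obtain ⟨k, hk⟩ := exists_lower cs (u := u.prod) ha hb hab
      have hE : HurwitzEquiv Y (u ++ [a * (a * b) ^ k, a * (a * b) ^ (k + 1)] ++ v) := by
        refine hZ.trans ?_
        have := (hurwitz_pair ha.mul_self hb.mul_self k).ctx u v
        rw [hZeq]
        simpa using this
      have h3 := hZm _ hE
      rw [hZeq] at h3
      have q1 : u ++ [a] ++ b :: v = u ++ a :: (b :: v) := by simp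
      have q2 : u ++ [a * (a * b) ^ k, a * (a * b) ^ (k + 1)] ++ v =
        u ++ (a * (a * b) ^ k) :: (a * (a * b) ^ (k + 1) :: v) := by simp
      rw [q1, q2] at h3
      obtain ⟨N, hN⟩ := pathLen_append cs 1 u
      rw [hN, hN] at h3
      simp only [pathLen, one_mul] at h3
      have q3 : u.prod * (a * (a * b) ^ k) * (a * (a * b) ^ (k + 1)) = u.prod * a * b := by
        have := conj_zpow_inv ha.mul_self hb.mul_self k
        calc u.prod * (a * (a * b) ^ k) * (a * (a * b) ^ (k + 1))
            = u.prod * ((a * (a * b) ^ k * a) * (a * b) ^ (k + 1)) := by simp only [mul_assoc]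
          _ = _ := by rw [this, ← zpow_add]; simp [mul_assoc]
      rw [q3] at h3
      have := hb.length_mul_left_ne (u.prod * a)
      simp only [List.prod_append, List.prod_singleton]
      rw [← mul_assoc u.prod a b] at hk
      omega
  have hg := desc cs (J := J) Z hTZ hinc (hZ.prod_eq ▸ hP)
  refine (hZ.all_mem (Q := Good cs J) ?_).2 hg
  intro a b ha
  constructor
  · intro h
    have := h.conj cs (inv_mem (ha.mem))
    simpa [mul_assoc] using this
  · intro h; exact h.conj cs ha.mem

end BDSW


/-- Cartan number `⟨a, α^∨⟩` -/
noncomputable def cf {E : Type*} [NormedAddCommGroup E] [InnerProductSpace ℝ E] (a α : E) : ℝ :=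
  2 * ⟪a, α⟫ / ⟪α, α⟫

section cf
variable {E : Type*} [NormedAddCommGroup E] [InnerProductSpace ℝ E]
theorem cf_add (a b α : E) : cf (a + b) α = cf a α + cf b α := by
  simp [cf, inner_add_left]; ring
theorem cf_smul (c : ℝ) (a α : E) : cf (c • a) α = c * cf a α := by
  simp [cf, real_inner_smul_left]; ring
theorem cf_neg (a α : E) : cf (-a) α = - cf a α := by
  simp [cf]; ring
theorem cf_zero (α : E) : cf 0 α = 0 := by simp [cf]
theorem cf_sub (a b α : E) : cf (a - b) α = cf a α - cf b α := by
  simp [cf, inner_sub_left]; ring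
theorem cf_neg_right (a α : E) : cf a (-α) = - cf a α := by
  simp [cf]; ring
theorem inner_self_pos' {α : E} (h : α ≠ 0) : 0 < ⟪α, α⟫ := by
  rw [real_inner_self_eq_norm_sq]; positivity
theorem cf_self {α : E} (h : α ≠ 0) : cf α α = 2 := by
  have := inner_self_pos' h
  rw [cf]; field_simp
theorem cf_eq_zero {a α : E} (h : α ≠ 0) : cf a α = 0 ↔ ⟪a, α⟫ = 0 := by
  have := inner_self_pos' h
  rw [cf, div_eq_zero_iff]
  constructor
  · rintro (h | h) <;> linarith
  · intro h; left; linarith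
theorem cf_sum {ι : Type*} (s : Finset ι) (f : ι → E) (α : E) :
    cf (∑ i ∈ s, f i) α = ∑ i ∈ s, cf (f i) α := by
  classical
  induction s using Finset.induction_on with
  | empty => simp [cf_zero]
  | insert a s ha ih => rw [Finset.sum_insert ha, Finset.sum_insert ha, cf_add, ih]

theorem cf_ge_two {a α : E} (hα : α ≠ 0) (hle : ⟪a, a⟫ ≤ ⟪α, α⟫) (h : 2 ≤ cf a α) : a = α := by
  have hp := inner_self_pos' hα
  rw [cf, le_div_iff₀ hp] at h
  have : ⟪a - α, a - α⟫ ≤ 0 := by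
    rw [inner_sub_sub_self, real_inner_comm a α]
    linarith
  have h0 : a - α = 0 := by
    by_contra hne
    exact absurd (inner_self_pos' hne) (not_lt.2 this)
  exact sub_eq_zero.1 h0

theorem cf_le_neg_two {a α : E} (hα : α ≠ 0) (hle : ⟪a, a⟫ ≤ ⟪α, α⟫) (h : cf a α ≤ -2) : a = -α := by
  have := cf_ge_two (a := -a) hα (by simpa using hle) (by rw [cf_neg]; linarith)
  rw [← this, neg_neg]
end cf

/-- Abstract linear data for the main argument. -/
structure Datum (W : Type*) [Group W] (T : Set W) (U E : Type*) [AddCommGroup U] [Module ℝ U]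
    [NormedAddCommGroup E] [InnerProductSpace ℝ E] where
  Φ : Set E
  isRoot : IsCrystRootSystem Φ
  π : U →ₗ[ℝ] E
  act : W →* Module.End ℝ U
  lin : W →* Module.End ℝ E
  rt : W → U
  π_act : ∀ g u, π (act g u) = lin g (π u)
  lin_inner : ∀ g a b, ⟪lin g a, lin g b⟫ = ⟪a, b⟫
  lin_fin : ∀ g, ∃ h : ℕ, 0 < h ∧ lin g ^ h = 1
  invol : ∀ t ∈ T, t * t = 1
  act_T : ∀ t ∈ T, ∀ u, act t u = u - cf (π u) (π (rt t)) • rt t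
  lin_T : ∀ t ∈ T, ∀ a, lin t a = a - cf a (π (rt t)) • π (rt t)
  π_rt : ∀ t ∈ T, π (rt t) ∈ Φ
  rt_inj : ∀ t ∈ T, ∀ t' ∈ T, (rt t = rt t' ∨ rt t = - rt t') → t = t'
  conj_T : ∀ g, ∀ t ∈ T, g * t * g⁻¹ ∈ T
  rt_conj : ∀ g, ∀ t ∈ T, rt (g * t * g⁻¹) = act g (rt t) ∨ rt (g * t * g⁻¹) = - act g (rt t)
  dep : ∀ t₁ ∈ T, ∀ t₂ ∈ T, ∀ t₃ ∈ T, ∀ r r' : U, π r = 0 → π r' = 0 →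
    (rt t₂ = rt t₁ + r ∨ rt t₂ = -(rt t₁ + r)) → (rt t₃ = rt t₁ + r' ∨ rt t₃ = -(rt t₁ + r')) →
    ∃ p q : ℝ, (p ≠ 0 ∨ q ≠ 0) ∧ p • r + q • r' = 0
  faithful : ∀ X : Set W, X ⊆ T → ∀ g ∈ Subgroup.closure X, (∀ x ∈ X, act g (rt x) = rt x) → g = 1

namespace Datum
variable {W : Type*} [Group W] {T : Set W} {U E : Type*} [AddCommGroup U] [Module ℝ U]
    [NormedAddCommGroup E] [InnerProductSpace ℝ E] (D : Datum W T U E)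

/-- the two weight functions -/
noncomputable def wt (i : Bool) (t : W) : ℝ :=
  if i then 2 / ⟪D.π (D.rt t), D.π (D.rt t)⟫ else 1

/-- the lattice spanned by the scaled roots -/
def Lat (i : Bool) (X : List W) : AddSubgroup U :=
  AddSubgroup.closure {v | ∃ x ∈ X, v = D.wt i x • D.rt x}

/-- the span of the roots -/
def sp (X : List W) : Submodule ℝ U := Submodule.span ℝ {v | ∃ x ∈ X, v = D.rt x}

/-- `t` is a root in the lattice of `X` -/
def InLat (X : List W) (t : W) : Prop := ∀ i, D.wt i t • D.rt t ∈ D.Lat i X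

/-- rank condition -/
def RC (X : List W) : Prop := Module.finrank ℝ (D.sp X) = X.length

/-- all reflections -/
def _root_.AllT (T : Set W) (X : List W) : Prop := ∀ x ∈ X, x ∈ T

theorem ne0 {t : W} (ht : t ∈ T) : D.π (D.rt t) ≠ 0 := D.isRoot.ne_zero _ (D.π_rt t ht)

theorem wt_pos (i : Bool) {t : W} (ht : t ∈ T) : 0 < D.wt i t := by
  unfold wt
  have := inner_self_pos' (D.ne0 ht)
  split_ifs
  · positivity
  · exact one_pos

theorem π_conj (g : W) {t : W} (ht : t ∈ T) :
    D.π (D.rt (g * t * g⁻¹)) = D.lin g (D.π (D.rt t)) ∨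
    D.π (D.rt (g * t * g⁻¹)) = - D.lin g (D.π (D.rt t)) := by
  rcases D.rt_conj g t ht with h | h
  · left; rw [h, D.π_act]
  · right; rw [h, map_neg, D.π_act]

theorem inner_conj (g : W) {t : W} (ht : t ∈ T) :
    ⟪D.π (D.rt (g * t * g⁻¹)), D.π (D.rt (g * t * g⁻¹))⟫ = ⟪D.π (D.rt t), D.π (D.rt t)⟫ := by
  rcases D.π_conj g ht with h | h
  · rw [h, D.lin_inner]
  · rw [h, inner_neg_neg, D.lin_inner]

theorem wt_conj (i : Bool) (g : W) {t : W} (ht : t ∈ T) : D.wt i (g * t * g⁻¹) = D.wt i t := by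
  unfold wt; rw [D.inner_conj g ht]

theorem wt_eq_of_inner (i : Bool) {t t' : W}
    (h : ⟪D.π (D.rt t), D.π (D.rt t)⟫ = ⟪D.π (D.rt t'), D.π (D.rt t')⟫) : D.wt i t = D.wt i t' := by
  unfold wt; rw [h]

theorem wt_int (i : Bool) {a b : W} (ha : a ∈ T) (hb : b ∈ T) :
    ∃ n : ℤ, D.wt i a * cf (D.π (D.rt a)) (D.π (D.rt b)) = n * D.wt i b := by
  unfold wt
  have pa := inner_self_pos' (D.ne0 ha)
  have pb := inner_self_pos' (D.ne0 hb)
  cases i with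
  | false =>
    obtain ⟨n, hn⟩ := D.isRoot.cryst _ (D.π_rt b hb) _ (D.π_rt a ha)
    refine ⟨n, ?_⟩
    simp only [Bool.false_eq_true, if_false]
    rw [one_mul, mul_one]; exact hn
  | true =>
    obtain ⟨n, hn⟩ := D.isRoot.cryst _ (D.π_rt a ha) _ (D.π_rt b hb)
    refine ⟨n, ?_⟩
    simp only [if_true]
    rw [← hn, cf]
    field_simp
    rw [real_inner_comm]

theorem mem_Lat (i : Bool) {X : List W} {x : W} (h : x ∈ X) : D.wt i x • D.rt x ∈ D.Lat i X :=
  AddSubgroup.subset_closure ⟨x, h, rfl⟩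

theorem mem_sp {X : List W} {x : W} (h : x ∈ X) : D.rt x ∈ D.sp X :=
  Submodule.subset_span ⟨x, h, rfl⟩

theorem sp_mono {X Y : List W} (h : ∀ x ∈ X, x ∈ Y) : D.sp X ≤ D.sp Y :=
  Submodule.span_mono (by rintro v ⟨x, hx, rfl⟩; exact ⟨x, h x hx, rfl⟩)

theorem Lat_mono (i : Bool) {X Y : List W} (h : ∀ x ∈ X, x ∈ Y) : D.Lat i X ≤ D.Lat i Y :=
  AddSubgroup.closure_mono (by rintro v ⟨x, hx, rfl⟩; exact ⟨x, h x hx, rfl⟩)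

theorem Lat_le_sp (i : Bool) (X : List W) : D.Lat i X ≤ (D.sp X).toAddSubgroup := by
  rw [Lat, AddSubgroup.closure_le]
  rintro v ⟨x, hx, rfl⟩
  exact (D.sp X).smul_mem _ (D.mem_sp hx)

theorem sp_of_InLat {X : List W} {t : W} (h : D.InLat X t) : D.rt t ∈ D.sp X := by
  have := D.Lat_le_sp false X (h false)
  simpa [wt] using this

theorem act_inv_act (g : W) (u : U) : D.act g⁻¹ (D.act g u) = u := by
  rw [← Module.End.mul_apply, ← map_mul]; simp
theorem act_act_inv (g : W) (u : U) : D.act g (D.act g⁻¹ u) = u := by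
  rw [← Module.End.mul_apply, ← map_mul]; simp
theorem act_mul (g h : W) (u : U) : D.act (g * h) u = D.act g (D.act h u) := by
  rw [map_mul]; rfl
theorem act_one (u : U) : D.act 1 u = u := by simp

theorem inv_T (D : Datum W T U E) {t : W} (ht : t ∈ T) : t⁻¹ = t := inv_eq_of_mul_eq_one_left (D.invol t ht)

theorem act_Lat_gen (i : Bool) {X : List W} (hX : AllT T X) {x : W} (hx : x ∈ X) {v : U}
    (hv : v ∈ D.Lat i X) : D.act x v ∈ D.Lat i X := by
  unfold Lat at hv
  induction hv using AddSubgroup.closure_induction with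
  | mem v hv =>
    obtain ⟨a, ha, rfl⟩ := hv
    rw [map_smul, D.act_T x (hX x hx), smul_sub]
    refine sub_mem (D.mem_Lat i ha) ?_
    obtain ⟨n, hn⟩ := D.wt_int i (hX a ha) (hX x hx)
    rw [smul_smul, hn, mul_smul, Int.cast_smul_eq_zsmul]
    exact zsmul_mem (D.mem_Lat i hx) n
  | zero => rw [map_zero]; exact zero_mem _
  | add u v _ _ h1 h2 => rw [map_add]; exact add_mem h1 h2
  | neg v _ h => rw [map_neg]; exact neg_mem h

theorem act_Lat (i : Bool) {X : List W} (hX : AllT T X) {g : W} (hg : g ∈ Subgroup.closure {x | x ∈ X})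
    {v : U} (hv : v ∈ D.Lat i X) : D.act g v ∈ D.Lat i X := by
  induction hg using Subgroup.closure_induction'' generalizing v with
  | mem x hx => exact D.act_Lat_gen i hX hx hv
  | inv_mem x hx => rw [D.inv_T (hX x hx)]; exact D.act_Lat_gen i hX hx hv
  | one => simpa using hv
  | mul x y _ _ h1 h2 => rw [D.act_mul]; exact h1 (h2 hv)

theorem act_sub_sp {X : List W} (hX : AllT T X) {g : W} (hg : g ∈ Subgroup.closure {x | x ∈ X})
    (u : U) : D.act g u - u ∈ D.sp X := by
  have hgen : ∀ x ∈ X, ∀ u, D.act x u - u ∈ D.sp X := by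
    intro x hx u
    rw [D.act_T x (hX x hx), sub_sub_cancel_left]
    exact neg_mem ((D.sp X).smul_mem _ (D.mem_sp hx))
  induction hg using Subgroup.closure_induction'' generalizing u with
  | mem x hx => exact hgen x hx u
  | inv_mem x hx => rw [D.inv_T (hX x hx)]; exact hgen x hx u
  | one => simp
  | mul x y _ _ h1 h2 =>
    rw [D.act_mul]
    have := add_mem (h1 (D.act y u)) (h2 u)
    simpa using this

theorem act_sp {X : List W} (hX : AllT T X) {g : W} (hg : g ∈ Subgroup.closure {x | x ∈ X})
    {u : U} (hu : u ∈ D.sp X) : D.act g u ∈ D.sp X := by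
  have := add_mem (D.act_sub_sp hX hg u) hu
  simpa using this

theorem act_fix {X : List W} (hX : AllT T X) {g : W} (hg : g ∈ Subgroup.closure {x | x ∈ X})
    {u : U} (hu : ∀ x ∈ X, ⟪D.π u, D.π (D.rt x)⟫ = 0) : D.act g u = u := by
  have hgen : ∀ x ∈ X, D.act x u = u := by
    intro x hx
    rw [D.act_T x (hX x hx), (cf_eq_zero (D.ne0 (hX x hx))).2 (hu x hx)]; simp
  induction hg using Subgroup.closure_induction'' with
  | mem x hx => exact hgen x hx
  | inv_mem x hx => rw [D.inv_T (hX x hx)]; exact hgen x hx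
  | one => simp
  | mul x y _ _ h1 h2 => rw [D.act_mul, h2, h1]

theorem act_ker {X : List W} (hX : AllT T X) {g : W} (hg : g ∈ Subgroup.closure {x | x ∈ X})
    {u : U} (hu : D.π u = 0) : D.act g u = u :=
  D.act_fix hX hg (by simp [hu])

theorem prod_mem {X : List W} : X.prod ∈ Subgroup.closure {x | x ∈ X} :=
  Subgroup.list_prod_mem _ (fun _ hx => Subgroup.subset_closure hx)

theorem allT_iff (D : Datum W T U E) {X Y : List W} (h : HurwitzEquiv X Y) : AllT T X ↔ AllT T Y := by
  refine h.all_mem (Q := fun x => x ∈ T) ?_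
  intro a b _
  constructor
  · intro h
    have := D.conj_T a⁻¹ _ h
    simpa [mul_assoc] using this
  · exact D.conj_T a b

theorem Lat_eq (i : Bool) {X Y : List W} (h : HurwitzEquiv X Y) (hX : AllT T X) :
    D.Lat i X = D.Lat i Y := by
  have key : (AllT T X ↔ AllT T Y) ∧ (AllT T X → D.Lat i X = D.Lat i Y) := by
    refine HurwitzEquiv.ind (R := fun X Y => (AllT T X ↔ AllT T Y) ∧ (AllT T X → D.Lat i X = D.Lat i Y))
      ?_ ?_ ?_ ?_ h
    · intro l; simp
    · rintro l l' ⟨h1, h2⟩; exact ⟨h1.symm, fun h => (h2 (h1.2 h)).symm⟩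
    · rintro l l' l'' ⟨h1, h2⟩ ⟨h3, h4⟩; exact ⟨h1.trans h3, fun h => (h2 h).trans (h4 (h1.1 h))⟩
    · intro u v a b
      have hall := D.allT_iff (HurwitzEquiv.move u v a b)
      refine ⟨hall, fun hX => ?_⟩
      have hX' := hall.1 hX
      have ha : a ∈ T := hX a (by simp)
      have hb : b ∈ T := hX b (by simp)
      apply le_antisymm
      · conv_lhs => rw [Lat]
        rw [AddSubgroup.closure_le]
        rintro _ ⟨x, hx, rfl⟩
        simp only [List.mem_append, List.mem_cons] at hx
        rcases hx with hx | rfl | rfl | hx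
        · exact D.mem_Lat i (by simp [hx])
        · exact D.mem_Lat i (by simp)
        · have h1 : D.wt i (a * x * a⁻¹) • D.rt (a * x * a⁻¹) ∈ D.Lat i (u ++ (a * x * a⁻¹) :: a :: v) :=
            D.mem_Lat i (by simp)
          have h2 := D.act_Lat_gen i hX' (x := a) (by simp) h1
          rw [D.wt_conj i a hb, map_smul] at h2
          rcases D.rt_conj a x hb with e | e
          · rw [e, ← D.act_mul, D.invol a ha, D.act_one] at h2; exact h2
          · rw [e, map_neg, ← D.act_mul, D.invol a ha, D.act_one, smul_neg] at h2
            simpa using neg_mem h2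
        · exact D.mem_Lat i (by simp [hx])
      · conv_lhs => rw [Lat]
        rw [AddSubgroup.closure_le]
        rintro _ ⟨x, hx, rfl⟩
        simp only [List.mem_append, List.mem_cons] at hx
        rcases hx with hx | rfl | rfl | hx
        · exact D.mem_Lat i (by simp [hx])
        · have h1 : D.wt i b • D.rt b ∈ D.Lat i (u ++ a :: b :: v) := D.mem_Lat i (by simp)
          have h2 := D.act_Lat_gen i hX (x := a) (by simp) h1
          rw [map_smul] at h2
          rw [D.wt_conj i a hb]
          rcases D.rt_conj a b hb with e | e
          · rw [e]; exact h2
          · rw [e, smul_neg]; exact neg_mem h2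
        · exact D.mem_Lat i (by simp)
        · exact D.mem_Lat i (by simp [hx])
  exact key.2 hX

theorem sp_eq_span (X : List W) : D.sp X = Submodule.span ℝ (D.Lat false X : Set U) := by
  apply le_antisymm
  · apply Submodule.span_le.2
    rintro _ ⟨x, hx, rfl⟩
    apply Submodule.subset_span
    have := D.mem_Lat false hx
    simpa [wt] using this
  · exact Submodule.span_le.2 (D.Lat_le_sp false X)

theorem sp_eq {X Y : List W} (h : HurwitzEquiv X Y) (hX : AllT T X) : D.sp X = D.sp Y := by
  rw [sp_eq_span, sp_eq_span, D.Lat_eq false h hX]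

theorem RC_iff {X Y : List W} (h : HurwitzEquiv X Y) (hX : AllT T X) : D.RC X ↔ D.RC Y := by
  unfold RC; rw [D.sp_eq h hX, h.length_eq]

theorem InLat_iff {X Y : List W} (h : HurwitzEquiv X Y) (hX : AllT T X) (t : W) :
    D.InLat X t ↔ D.InLat Y t := by
  unfold InLat; simp_rw [D.Lat_eq _ h hX]

theorem InLat_conj {X : List W} (hX : AllT T X) {g : W} (hg : g ∈ Subgroup.closure {x | x ∈ X})
    {t : W} (ht : t ∈ T) (h : D.InLat X t) : D.InLat X (g * t * g⁻¹) := by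
  intro i
  have := D.act_Lat i hX hg (h i)
  rw [map_smul] at this
  rw [D.wt_conj i g ht]
  rcases D.rt_conj g t ht with e | e
  · rw [e]; exact this
  · rw [e, smul_neg]; exact neg_mem this

theorem sp_append (X Y : List W) : D.sp (X ++ Y) = D.sp X ⊔ D.sp Y := by
  unfold sp
  rw [← Submodule.span_union]
  congr 1
  ext v
  simp only [List.mem_append, Set.mem_ofPred_eq, Set.mem_union]
  constructor
  · rintro ⟨x, hx | hx, rfl⟩
    · exact Or.inl ⟨x, hx, rfl⟩
    · exact Or.inr ⟨x, hx, rfl⟩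
  · rintro (⟨x, hx, rfl⟩ | ⟨x, hx, rfl⟩)
    · exact ⟨x, Or.inl hx, rfl⟩
    · exact ⟨x, Or.inr hx, rfl⟩

theorem Lat_append (i : Bool) (X Y : List W) : D.Lat i (X ++ Y) = D.Lat i X ⊔ D.Lat i Y := by
  unfold Lat
  rw [← AddSubgroup.closure_union]
  congr 1
  ext v
  simp only [List.mem_append, Set.mem_ofPred_eq, Set.mem_union]
  constructor
  · rintro ⟨x, hx | hx, rfl⟩
    · exact Or.inl ⟨x, hx, rfl⟩
    · exact Or.inr ⟨x, hx, rfl⟩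
  · rintro (⟨x, hx, rfl⟩ | ⟨x, hx, rfl⟩)
    · exact ⟨x, Or.inl hx, rfl⟩
    · exact ⟨x, Or.inr hx, rfl⟩

theorem sp_singleton (x : W) : D.sp [x] = Submodule.span ℝ {D.rt x} := by
  unfold sp; congr 1; ext v; simp

theorem Lat_singleton (i : Bool) {x : W} {v : U} (h : v ∈ D.Lat i [x]) :
    ∃ n : ℤ, v = (n * D.wt i x) • D.rt x := by
  have : D.Lat i [x] = AddSubgroup.zmultiples (D.wt i x • D.rt x) := by
    rw [AddSubgroup.zmultiples_eq_closure]
    unfold Lat; congr 1; ext v; simp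
  rw [this, AddSubgroup.mem_zmultiples_iff] at h
  obtain ⟨n, rfl⟩ := h
  exact ⟨n, by rw [mul_smul, Int.cast_smul_eq_zsmul]⟩

theorem Lat_last (i : Bool) {X : List W} {x : W} {v : U} (h : v ∈ D.Lat i (X ++ [x])) :
    ∃ v'' ∈ D.Lat i X, ∃ n : ℤ, v = v'' + (n * D.wt i x) • D.rt x := by
  rw [Lat_append, AddSubgroup.mem_sup] at h
  obtain ⟨a, ha, b, hb, rfl⟩ := h
  obtain ⟨n, rfl⟩ := D.Lat_singleton i hb
  exact ⟨a, ha, n, rfl⟩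

section fd
variable [FiniteDimensional ℝ U]

theorem finrank_le (X : List W) : Module.finrank ℝ (D.sp X) ≤ X.length := by
  classical
  have h1 : D.sp X = Submodule.span ℝ (((X.map D.rt).toFinset : Finset U) : Set U) := by
    unfold sp; congr 1; ext v; simp [eq_comm]
  rw [h1]
  refine (finrank_span_finset_le_card _).trans ?_
  exact (List.toFinset_card_le _).trans (by simp)

theorem RC_append {X Y : List W} (h : D.RC (X ++ Y)) :
    D.RC X ∧ D.RC Y ∧ Disjoint (D.sp X) (D.sp Y) := by
  have h1 := D.finrank_le X
  have h2 := D.finrank_le Y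
  have h3 := Submodule.finrank_sup_add_finrank_inf_eq (D.sp X) (D.sp Y)
  unfold RC at *
  rw [sp_append, List.length_append] at h
  refine ⟨by omega, by omega, ?_⟩
  rw [disjoint_iff, ← Submodule.finrank_eq_zero (R := ℝ)]
  omega

theorem RC_last {X : List W} {x : W} (hx : x ∈ T) (h : D.RC (X ++ [x])) : D.RC X ∧ D.rt x ∉ D.sp X := by
  obtain ⟨h1, _, h2⟩ := D.RC_append h
  refine ⟨h1, fun hmem => ?_⟩
  have h3 := Submodule.disjoint_def.1 h2 _ hmem (D.mem_sp (by simp))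
  exact D.ne0 hx (by rw [h3, map_zero])

theorem exists_fun {S : Submodule ℝ U} {x : U} (h : x ∉ S) :
    ∃ l : U →ₗ[ℝ] ℝ, (∀ v ∈ S, l v = 0) ∧ l x = 1 := by
  obtain ⟨f, hf, hS⟩ := Submodule.exists_le_ker_of_notMem h
  refine ⟨(f x)⁻¹ • f, fun v hv => ?_, ?_⟩
  · have : f v = 0 := hS hv
    simp [this]
  · simp [inv_mul_cancel₀ hf]

/-- functional killing X and 1 on last -/
theorem exists_lam {X : List W} {x : W} (hx : x ∈ T) (h : D.RC (X ++ [x])) :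
    ∃ l : U →ₗ[ℝ] ℝ, (∀ v ∈ D.sp X, l v = 0) ∧ l (D.rt x) = 1 :=
  exists_fun (D.RC_last hx h).2

end fd

theorem lam_act {X : List W} {x : W} (hX : AllT T (X ++ [x])) {l : U →ₗ[ℝ] ℝ}
    (h0 : ∀ v ∈ D.sp X, l v = 0) (h1 : l (D.rt x) = 1) {w : W} (hw : (X ++ [x]).prod = w) (v : U) :
    l (D.act w v) = l v - cf (D.π v) (D.π (D.rt x)) := by
  have hX' : AllT T X := fun y hy => hX y (by simp [hy])
  have hxT : x ∈ T := hX x (by simp)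
  rw [← hw, List.prod_append, List.prod_singleton, D.act_mul]
  have := h0 _ (D.act_sub_sp hX' prod_mem (D.act x v))
  rw [map_sub, sub_eq_zero] at this
  rw [this, D.act_T x hxT, map_sub, map_smul, h1]; simp

theorem lam_Lat (i : Bool) {X : List W} {x : W} {l : U →ₗ[ℝ] ℝ}
    (h0 : ∀ v ∈ D.sp X, l v = 0) (h1 : l (D.rt x) = 1) {v : U} (hv : v ∈ D.Lat i (X ++ [x])) :
    ∃ n : ℤ, l v = n * D.wt i x := by
  obtain ⟨v'', hv'', n, rfl⟩ := D.Lat_last i hv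
  exact ⟨n, by rw [map_add, h0 _ (D.Lat_le_sp i X hv''), map_smul, h1]; simp⟩

theorem lam_zero (i : Bool) {X : List W} {x : W} (hx : x ∈ T) {l : U →ₗ[ℝ] ℝ}
    (h0 : ∀ v ∈ D.sp X, l v = 0) (h1 : l (D.rt x) = 1) {v : U} (hv : v ∈ D.Lat i (X ++ [x]))
    (hl : l v = 0) : v ∈ D.Lat i X := by
  obtain ⟨v'', hv'', n, rfl⟩ := D.Lat_last i hv
  rw [map_add, h0 _ (D.Lat_le_sp i X hv''), map_smul, h1, zero_add, smul_eq_mul, mul_one] at hl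
  rw [hl]; simpa using hv''

theorem lam_span {X : List W} {x : W} {l : U →ₗ[ℝ] ℝ}
    (h0 : ∀ v ∈ D.sp X, l v = 0) (h1 : l (D.rt x) = 1) {v : U} (hv : v ∈ D.sp (X ++ [x]))
    (hl : l v = 0) : v ∈ D.sp X := by
  rw [sp_append, sp_singleton, Submodule.mem_sup] at hv
  obtain ⟨a, ha, b, hb, rfl⟩ := hv
  obtain ⟨c, rfl⟩ := Submodule.mem_span_singleton.1 hb
  rw [map_add, h0 _ ha, map_smul, h1, zero_add, smul_eq_mul, mul_one] at hl
  rw [hl]; simpa using ha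

theorem fix_lemma [FiniteDimensional ℝ U] {X : List W} (hX : AllT T X) (hR : D.RC X) {v : U}
    (hv : D.act X.prod v = v) : ∀ x ∈ X, ⟪D.π v, D.π (D.rt x)⟫ = 0 := by
  induction X using List.reverseRecOn with
  | nil => simp
  | append_singleton X x ih =>
    have hX' : AllT T X := fun y hy => hX y (by simp [hy])
    have hxT : x ∈ T := hX x (by simp)
    obtain ⟨l, h0, h1⟩ := D.exists_lam hxT hR
    have h2 := D.lam_act hX h0 h1 rfl v
    rw [hv] at h2
    have h3 : cf (D.π v) (D.π (D.rt x)) = 0 := by linarith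
    have h4 := (cf_eq_zero (D.ne0 hxT)).1 h3
    have h5 : D.act X.prod v = v := by
      rw [List.prod_append, List.prod_singleton, D.act_mul, D.act_T x hxT, h3] at hv
      simpa using hv
    intro y hy
    rcases List.mem_append.1 hy with h | h
    · exact ih hX' (D.RC_last hxT hR).1 h5 y h
    · simp at h; subst h; exact h4

/-- vectors in the span orthogonal to everything are isotropic -/
theorem π_zero_of_orth {X : List W} {v : U} (hv : v ∈ D.sp X)
    {a : E} (ha : ∀ x ∈ X, ⟪a, D.π (D.rt x)⟫ = 0) : ⟪a, D.π v⟫ = 0 := by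
  unfold sp at hv
  induction hv using Submodule.span_induction with
  | mem v hv => obtain ⟨x, hx, rfl⟩ := hv; exact ha x hx
  | zero => simp
  | add u v _ _ h1 h2 => rw [map_add, inner_add_right, h1, h2, add_zero]
  | smul c v _ h => rw [map_smul, inner_smul_right, h, mul_zero]

theorem π_zero_of_self_orth {X : List W} {v : U} (hv : v ∈ D.sp X)
    (ha : ∀ x ∈ X, ⟪D.π v, D.π (D.rt x)⟫ = 0) : D.π v = 0 :=
  inner_self_eq_zero.1 (D.π_zero_of_orth hv ha)

end Datum


theorem nat_ivt (n : ℕ) : ∀ e : ℕ → ℤ, (∀ j, |e (j + 1) - e j| ≤ 2) → e 0 ≤ 0 → 0 ≤ e n →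
    ∃ j, e j = 0 ∨ (e j = -1 ∧ e (j + 1) = 1) := by
  induction n with
  | zero => intro e _ h0 h1; exact ⟨0, Or.inl (le_antisymm h0 h1)⟩
  | succ n ih =>
    intro e he h0 h1
    by_cases h : e 0 = 0
    · exact ⟨0, Or.inl h⟩
    by_cases h2 : e 1 ≤ 0
    · obtain ⟨j, hj⟩ := ih (fun j => e (j + 1)) (fun j => he (j + 1)) h2 h1
      exact ⟨j + 1, hj⟩
    · have := abs_le.1 (he 0)
      simp only [zero_add] at this
      exact ⟨0, Or.inr ⟨by omega, by simp only [zero_add]; omega⟩⟩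

theorem int_ivt (e : ℤ → ℤ) (he : ∀ j, |e (j + 1) - e j| ≤ 2) (hp : ∃ p, e p ≤ 0) (hq : ∃ q, 0 ≤ e q) :
    ∃ j, e j = 0 ∨ (e j = -1 ∧ e (j + 1) = 1) ∨ (e j = 1 ∧ e (j + 1) = -1) := by
  obtain ⟨p, hp⟩ := hp
  obtain ⟨q, hq⟩ := hq
  rcases le_total p q with h | h
  · obtain ⟨n, rfl⟩ := Int.le.dest h
    obtain ⟨j, hj⟩ := nat_ivt n (fun j => e (p + j)) (fun j => by
      have := he (p + j); push_cast; rwa [← add_assoc]) (by simpa using hp) hq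
    refine ⟨p + j, ?_⟩
    rcases hj with hj | ⟨h1, h2⟩
    · exact Or.inl hj
    · push_cast at h2
      rw [← add_assoc] at h2
      exact Or.inr (Or.inl ⟨h1, h2⟩)
  · obtain ⟨n, rfl⟩ := Int.le.dest h
    obtain ⟨j, hj⟩ := nat_ivt n (fun j => - e (q + j)) (fun j => by
      have := he (q + j); push_cast; rw [← add_assoc]
      rw [abs_le] at this ⊢; omega) (by simpa using hq) (by simpa using hp)
    refine ⟨q + j, ?_⟩
    rcases hj with hj | ⟨h1, h2⟩
    · exact Or.inl (by omega)
    · push_cast at h2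
      rw [← add_assoc] at h2
      exact Or.inr (Or.inr ⟨by omega, by omega⟩)

namespace Datum
variable {W : Type*} [Group W] {T : Set W} {U E : Type*} [AddCommGroup U] [Module ℝ U]
    [NormedAddCommGroup E] [InnerProductSpace ℝ E] (D : Datum W T U E)

theorem act_zpow_succ (w : W) (j : ℤ) (u : U) : D.act (w ^ (j + 1)) u = D.act w (D.act (w ^ j) u) := by
  rw [← D.act_mul, add_comm, zpow_one_add]

theorem zpow_mem_of {X : List W} {w : W} (hw : X.prod = w) (j : ℤ) :
    w ^ j ∈ Subgroup.closure {x | x ∈ X} := by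
  rw [← hw]; exact zpow_mem prod_mem j

theorem π_act_inner (g : W) (u : U) : ⟪D.π (D.act g u), D.π (D.act g u)⟫ = ⟪D.π u, D.π u⟫ := by
  rw [D.π_act, D.lin_inner]

theorem weight_choice {x t : W} (hx : x ∈ T) (ht : t ∈ T) :
    ∃ i, ∀ a : E, ⟪a, a⟫ = ⟪D.π (D.rt t), D.π (D.rt t)⟫ → a ≠ 0 ∧
      ∃ c : ℝ, D.wt i t * cf a (D.π (D.rt x)) = c * D.wt i x ∧
      (2 ≤ c → a = D.π (D.rt x)) ∧ (c ≤ -2 → a = - D.π (D.rt x)) := by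
  have px := inner_self_pos' (D.ne0 hx)
  have pt := inner_self_pos' (D.ne0 ht)
  rcases le_total ⟪D.π (D.rt t), D.π (D.rt t)⟫ ⟪D.π (D.rt x), D.π (D.rt x)⟫ with h | h
  · refine ⟨false, fun a ha => ⟨?_, cf a (D.π (D.rt x)), by simp [wt], ?_, ?_⟩⟩
    · rintro rfl; rw [← ha] at pt; simp at pt
    · exact cf_ge_two (D.ne0 hx) (by rw [ha]; exact h)
    · exact cf_le_neg_two (D.ne0 hx) (by rw [ha]; exact h)
  · refine ⟨true, fun a ha => ?_⟩
    have ha0 : a ≠ 0 := by rintro rfl; rw [← ha] at pt; simp at pt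
    refine ⟨ha0, cf (D.π (D.rt x)) a, ?_, ?_, ?_⟩
    · simp only [wt, if_true, cf, ha]
      rw [real_inner_comm a]
      field_simp
    · intro hc; exact (cf_ge_two ha0 (by rw [ha]; exact h) hc).symm
    · intro hc; rw [cf_le_neg_two ha0 (by rw [ha]; exact h) hc, neg_neg]

theorem step {X : List W} {x : W} (hX : AllT T (X ++ [x])) {l : U →ₗ[ℝ] ℝ}
    (h0 : ∀ v ∈ D.sp X, l v = 0) (h1 : l (D.rt x) = 1) {w : W} (hw : (X ++ [x]).prod = w)
    {t : W} (ht : t ∈ T) (hL : D.InLat (X ++ [x]) t)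
    (hp : ∃ p : ℤ, l (D.act (w ^ p) (D.rt t)) ≤ 0) (hq : ∃ q : ℤ, 0 ≤ l (D.act (w ^ q) (D.rt t))) :
    ∃ j : ℤ, l (D.act (w ^ j) (D.rt t)) = 0 ∨
      (D.π (D.act (w ^ j) (D.rt t)) = D.π (D.rt x) ∧ l (D.act (w ^ j) (D.rt t)) = 1) ∨
      (D.π (D.act (w ^ j) (D.rt t)) = - D.π (D.rt x) ∧ l (D.act (w ^ j) (D.rt t)) = -1) := by
  have hxT : x ∈ T := hX x (by simp)
  obtain ⟨i, hi⟩ := D.weight_choice hxT ht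
  have wx := D.wt_pos i hxT
  have wt' := D.wt_pos i ht
  have hn : ∀ j : ℤ, ∃ n : ℤ, D.wt i t * l (D.act (w ^ j) (D.rt t)) = n * D.wt i x := by
    intro j
    obtain ⟨n, hn⟩ := D.lam_Lat i h0 h1 (D.act_Lat i hX (zpow_mem_of hw j) (hL i))
    rw [map_smul, map_smul] at hn
    exact ⟨n, hn⟩
  choose e he using hn
  have hstep : ∀ j : ℤ, ∃ c : ℝ, ((e (j + 1) : ℤ) : ℝ) = e j - c ∧ |c| ≤ 2 ∧
      (c = 2 → D.π (D.act (w ^ j) (D.rt t)) = D.π (D.rt x)) ∧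
      (c = -2 → D.π (D.act (w ^ j) (D.rt t)) = - D.π (D.rt x)) := by
    intro j
    obtain ⟨-, c, hc, hc1, hc2⟩ := hi _ (D.π_act_inner (w ^ j) (D.rt t))
    have key : ((e (j + 1) : ℤ) : ℝ) = e j - c := by
      have h3 := D.lam_act hX h0 h1 hw (D.act (w ^ j) (D.rt t))
      rw [← D.act_zpow_succ] at h3
      have h4 := he (j + 1)
      rw [h3, mul_sub, he j, hc, ← sub_mul] at h4
      exact (mul_right_cancel₀ wx.ne' h4).symm
    have hcf := cf_self (D.ne0 hxT)
    have hin := D.π_act_inner (w ^ j) (D.rt t)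
    have c2 : 2 ≤ c → c = 2 := by
      intro h
      have ha := hc1 h
      rw [ha] at hc hin
      rw [D.wt_eq_of_inner i hin, hcf] at hc
      have : (2 - c) * D.wt i t = 0 := by linarith
      rcases mul_eq_zero.1 this with h | h <;> linarith
    have c2' : c ≤ -2 → c = -2 := by
      intro h
      have ha := hc2 h
      rw [ha] at hc hin
      rw [inner_neg_neg] at hin
      rw [D.wt_eq_of_inner i hin, cf_neg, hcf] at hc
      have : (2 + c) * D.wt i t = 0 := by linarith
      rcases mul_eq_zero.1 this with h | h <;> linarith
    refine ⟨c, key, ?_, fun h => hc1 h.ge, fun h => hc2 h.le⟩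
    rw [abs_le]
    constructor
    · by_contra h; push Not at h; linarith [c2' h.le]
    · by_contra h; push Not at h; linarith [c2 h.le]
  obtain ⟨j, hj⟩ := int_ivt e (fun j => by
      obtain ⟨c, hc, hc2, -⟩ := hstep j
      have : ((|e (j + 1) - e j| : ℤ) : ℝ) ≤ 2 := by
        push_cast; rw [hc, sub_sub_cancel_left, abs_neg]; exact hc2
      exact_mod_cast this)
    (by
      obtain ⟨p, hp⟩ := hp
      refine ⟨p, ?_⟩
      have := he p
      have h5 : (e p : ℝ) * D.wt i x ≤ 0 := by rw [← this]; nlinarith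
      have h6 : (e p : ℝ) ≤ 0 := by by_contra h; push Not at h; nlinarith
      exact_mod_cast h6)
    (by
      obtain ⟨p, hp⟩ := hq
      refine ⟨p, ?_⟩
      have := he p
      have h5 : 0 ≤ (e p : ℝ) * D.wt i x := by rw [← this]; nlinarith
      have h6 : 0 ≤ (e p : ℝ) := by by_contra h; push Not at h; nlinarith
      exact_mod_cast h6)
  obtain ⟨c, hc, -, hc1, hc2⟩ := hstep j
  have hin := D.π_act_inner (w ^ j) (D.rt t)
  refine ⟨j, ?_⟩
  have hj' := he j
  rcases hj with hj | ⟨hj, hj2⟩ | ⟨hj, hj2⟩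
  · left
    rw [hj] at hj'
    simp only [Int.cast_zero, zero_mul, mul_eq_zero] at hj'
    exact hj'.resolve_left wt'.ne'
  · right; right
    rw [hj, hj2] at hc; push_cast at hc
    have ha := hc2 (by linarith)
    refine ⟨ha, ?_⟩
    rw [ha, inner_neg_neg] at hin
    rw [hj, D.wt_eq_of_inner i hin] at hj'
    push_cast at hj'
    exact mul_left_cancel₀ wt'.ne' (by linarith)
  · right; left
    rw [hj, hj2] at hc; push_cast at hc
    have ha := hc1 (by linarith)
    refine ⟨ha, ?_⟩
    rw [ha] at hin
    rw [hj, D.wt_eq_of_inner i hin] at hj'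
    push_cast at hj'
    exact mul_left_cancel₀ wt'.ne' (by linarith)

/-- `t` can be brought into `X` -/
def _root_.Reach (X : List W) (t : W) : Prop := ∃ X', HurwitzEquiv X X' ∧ t ∈ X'

theorem _root_.Reach.conj_back {X : List W} {w t : W} (hw : X.prod = w) (j : ℤ)
    (h : Reach X (w ^ j * t * (w ^ j)⁻¹)) : Reach X t := by
  obtain ⟨X', h1, h2⟩ := h
  refine ⟨cjl (w ^ (-j)) X', h1.trans (HurwitzEquiv.conj_zpow_of (h1.prod_eq.symm.trans hw) _), ?_⟩
  exact mem_cjl.2 ⟨_, h2, by rw [zpow_neg]; group⟩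

theorem core {X : List W} {x : W} (hX : AllT T (X ++ [x])) {l : U →ₗ[ℝ] ℝ}
    (h0 : ∀ v ∈ D.sp X, l v = 0) (h1 : l (D.rt x) = 1) {w : W} (hw : (X ++ [x]).prod = w)
    (hdef : ∀ r ∈ D.sp (X ++ [x]), D.π r = 0 → l r = 0 → r = 0)
    (hsub : ∀ t ∈ T, D.InLat X t → Reach X t)
    {t : W} (ht : t ∈ T) (hL : D.InLat (X ++ [x]) t)
    (hp : ∃ p : ℤ, l (D.act (w ^ p) (D.rt t)) ≤ 0) (hq : ∃ q : ℤ, 0 ≤ l (D.act (w ^ q) (D.rt t))) :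
    Reach (X ++ [x]) t := by
  have hxT : x ∈ T := hX x (by simp)
  obtain ⟨j, hj⟩ := D.step hX h0 h1 hw ht hL hp hq
  apply Reach.conj_back hw j
  have hT' := D.conj_T (w ^ j) t ht
  have hsp : D.act (w ^ j) (D.rt t) ∈ D.sp (X ++ [x]) := D.act_sp hX (zpow_mem_of hw j) (D.sp_of_InLat hL)
  have hxsp : D.rt x ∈ D.sp (X ++ [x]) := D.mem_sp (by simp)
  have hlast : (D.act (w ^ j) (D.rt t) = D.rt x ∨ D.act (w ^ j) (D.rt t) = - D.rt x) →
      Reach (X ++ [x]) (w ^ j * t * (w ^ j)⁻¹) := by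
    intro h
    have : w ^ j * t * (w ^ j)⁻¹ = x := by
      apply D.rt_inj _ hT' _ hxT
      rcases D.rt_conj (w ^ j) t ht with e | e <;> rcases h with h | h <;> rw [e, h] <;> simp
    rw [this]
    exact ⟨_, HurwitzEquiv.refl _, by simp⟩
  rcases hj with hj | ⟨hj1, hj2⟩ | ⟨hj1, hj2⟩
  · have hL' := D.InLat_conj hX (zpow_mem_of hw j) ht hL
    have hl : l (D.rt (w ^ j * t * (w ^ j)⁻¹)) = 0 := by
      rcases D.rt_conj (w ^ j) t ht with e | e <;> rw [e]
      · exact hj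
      · rw [map_neg, hj, neg_zero]
    obtain ⟨X', h3, h4⟩ := hsub _ hT' (fun i => D.lam_zero i hxT h0 h1 (hL' i) (by rw [map_smul, hl, smul_zero]))
    exact ⟨X' ++ [x], h3.appR _, by simp [h4]⟩
  · apply hlast
    left
    have := hdef (D.act (w ^ j) (D.rt t) - D.rt x) (sub_mem hsp hxsp) (by rw [map_sub, hj1, sub_self])
      (by rw [map_sub, hj2, h1, sub_self])
    exact sub_eq_zero.1 this
  · apply hlast
    right
    have := hdef (D.act (w ^ j) (D.rt t) + D.rt x) (add_mem hsp hxsp) (by rw [map_add, hj1, neg_add_cancel])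
      (by rw [map_add, hj2, h1, neg_add_cancel])
    exact eq_neg_of_add_eq_zero_left this

end Datum


namespace Datum
variable {W : Type*} [Group W] {T : Set W} {U E : Type*} [AddCommGroup U] [Module ℝ U]
    [NormedAddCommGroup E] [InnerProductSpace ℝ E] (D : Datum W T U E)

/-- orbit sum -/
noncomputable def Sm (w : W) (h : ℕ) (v : U) : U := ∑ j ∈ Finset.range h, D.act (w ^ j) v

theorem act_pow_succ (w : W) (j : ℕ) (u : U) : D.act (w ^ (j + 1)) u = D.act w (D.act (w ^ j) u) := by
  rw [← D.act_mul, pow_succ']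

theorem act_Sm (w : W) (h : ℕ) (v : U) :
    D.act w (D.Sm w h v) = D.Sm w h v + (D.act (w ^ h) v - v) := by
  unfold Sm
  rw [map_sum]
  simp_rw [← D.act_pow_succ]
  have h1 := Finset.sum_range_succ (fun j => D.act (w ^ j) v) h
  have h2 := Finset.sum_range_succ' (fun j => D.act (w ^ j) v) h
  rw [h1] at h2
  simp only [pow_zero, D.act_one] at h2
  rw [← add_sub_assoc, h2, add_sub_cancel_right]

theorem lam_pow {X : List W} {x : W} (hX : AllT T (X ++ [x])) {l : U →ₗ[ℝ] ℝ}
    (h0 : ∀ v ∈ D.sp X, l v = 0) (h1 : l (D.rt x) = 1) {w : W} (hw : (X ++ [x]).prod = w) (h : ℕ) (v : U) :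
    l (D.act (w ^ h) v) = l v - cf (D.π (D.Sm w h v)) (D.π (D.rt x)) := by
  induction h with
  | zero => simp [Sm, cf_zero]
  | succ h ih =>
    rw [D.act_pow_succ, D.lam_act hX h0 h1 hw, ih]
    have : D.Sm w (h + 1) v = D.Sm w h v + D.act (w ^ h) v := Finset.sum_range_succ _ _
    rw [this, map_add, cf_add]; ring

theorem π_pow {w : W} {h : ℕ} (hh : D.lin w ^ h = 1) (v : U) : D.π (D.act (w ^ h) v) = D.π v := by
  rw [D.π_act, map_pow, hh]; rfl

/-- definite -/
def Dfn (X : List W) : Prop := ∀ u ∈ D.sp X, D.π u = 0 → u = 0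

theorem Dfn_mono {X Y : List W} (h : D.sp X ≤ D.sp Y) (hY : D.Dfn Y) : D.Dfn X :=
  fun u hu => hY u (h hu)

theorem allT_left {X Y : List W} (h : AllT T (X ++ Y)) : AllT T X := fun x hx => h x (by simp [hx])
theorem allT_right {X Y : List W} (h : AllT T (X ++ Y)) : AllT T Y := fun x hx => h x (by simp [hx])

variable [FiniteDimensional ℝ U]

theorem EF {X : List W} (hX : AllT T X) (hR : D.RC X) (hD : D.Dfn X) :
    ∀ {t : W}, t ∈ T → D.InLat X t → Reach X t := by
  induction X using List.reverseRecOn with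
  | nil =>
    intro t ht hL
    exfalso
    have := D.sp_of_InLat hL
    have h2 : D.rt t = 0 := by simpa [sp] using this
    exact D.ne0 ht (by rw [h2, map_zero])
  | append_singleton X x ih =>
    intro t ht hL
    have hxT : x ∈ T := hX x (by simp)
    obtain ⟨l, h0, h1⟩ := D.exists_lam hxT hR
    have hle : D.sp X ≤ D.sp (X ++ [x]) := D.sp_mono (by intro y hy; simp [hy])
    obtain ⟨h, hpos, hh⟩ := D.lin_fin (X ++ [x]).prod
    have hmem := D.sp_of_InLat hL
    set w := (X ++ [x]).prod with hw
    have hS : D.Sm w h (D.rt t) ∈ D.sp (X ++ [x]) :=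
      sum_mem fun j _ => D.act_sp hX (pow_mem prod_mem j) hmem
    have hN : D.act (w ^ h) (D.rt t) - D.rt t = 0 := by
      apply hD _ (D.act_sub_sp hX (pow_mem prod_mem h) _)
      rw [map_sub, D.π_pow hh, sub_self]
    have hfix := D.act_Sm w h (D.rt t)
    rw [hN, add_zero] at hfix
    have hS0 := hD _ hS (D.π_zero_of_self_orth hS (D.fix_lemma hX hR hfix))
    have hsum : ∑ j ∈ Finset.range h, l (D.act (w ^ j) (D.rt t)) = 0 := by
      rw [← map_sum]; exact (congrArg l hS0).trans (map_zero l)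
    have hne : (Finset.range h).Nonempty := Finset.nonempty_range_iff.2 hpos.ne'
    refine D.core hX h0 h1 hw.symm (fun r hr h _ => hD r hr h)
      (fun t ht => ih (allT_left hX) (D.RC_last hxT hR).1 (D.Dfn_mono hle hD) ht) ht hL ?_ ?_
    · obtain ⟨j, -, hj⟩ := Finset.exists_le_of_sum_le (f := fun j => l (D.act (w ^ j) (D.rt t)))
        (g := fun _ => (0 : ℝ)) hne (by rw [hsum]; simp)
      exact ⟨j, by simpa using hj⟩
    · obtain ⟨j, -, hj⟩ := Finset.exists_le_of_sum_le (g := fun j => l (D.act (w ^ j) (D.rt t)))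
        (f := fun _ => (0 : ℝ)) hne (by rw [hsum]; simp)
      exact ⟨j, by simpa using hj⟩

theorem sp_eq_of_prod {X Y : List W} (hX : AllT T X) (hR : D.RC X) (hD : D.Dfn X) (hY : AllT T Y)
    (hp : X.prod = Y.prod) (hlen : X.length = Y.length) : D.sp Y = D.sp X := by
  have hmaps : ∀ v ∈ D.sp X, (D.act X.prod - 1) v ∈ D.sp X := by
    intro v hv
    rw [LinearMap.sub_apply, Module.End.one_apply]
    exact D.act_sub_sp hX prod_mem v
  let f : D.sp X →ₗ[ℝ] D.sp X := (D.act X.prod - 1).restrict hmaps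
  have hinj : Function.Injective f := by
    rw [← LinearMap.ker_eq_bot, LinearMap.ker_eq_bot']
    rintro ⟨v, hv⟩ h
    have h' : D.act X.prod v - v = 0 := congrArg Subtype.val h
    have := hD v hv (D.π_zero_of_self_orth hv (D.fix_lemma hX hR (sub_eq_zero.1 h')))
    exact Subtype.ext this
  have hsurj := LinearMap.surjective_of_injective hinj
  have hle : D.sp X ≤ D.sp Y := by
    intro v hv
    obtain ⟨u, hu⟩ := hsurj ⟨v, hv⟩
    have h' : D.act X.prod u.1 - u.1 = v := congrArg Subtype.val hu
    rw [← h', hp]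
    exact D.act_sub_sp hY prod_mem _
  refine (Submodule.eq_of_le_of_finrank_le hle ?_).symm
  have h1 := D.finrank_le Y
  unfold RC at hR
  omega

theorem FT {Y : List W} : ∀ {X : List W}, AllT T X → D.RC X → D.Dfn X → AllT T Y →
    X.prod = Y.prod → X.length = Y.length → (∀ y ∈ Y, D.InLat X y) → HurwitzEquiv X Y := by
  induction Y using List.reverseRecOn with
  | nil =>
    intro X _ _ _ _ _ h _
    have : X = [] := List.length_eq_zero_iff.1 (by simpa using h)
    rw [this]; exact HurwitzEquiv.refl _
  | append_singleton Y y ih =>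
    intro X hX hR hD hY hp hlen hin
    have hyT : y ∈ T := hY y (by simp)
    obtain ⟨X', h1, h2⟩ := D.EF hX hR hD hyT (hin y (by simp))
    obtain ⟨X'', h3⟩ := HurwitzEquiv.to_last h2
    have h4 := h1.trans h3
    have hX'' := (D.allT_iff h4).1 hX
    have hR'' := (D.RC_iff h4 hX).1 hR
    have hD'' : D.Dfn X'' := D.Dfn_mono (by
      rw [D.sp_eq h4 hX]; exact D.sp_mono (by intro a ha; simp [ha])) hD
    have hp'' : X''.prod = Y.prod := by
      have := h4.prod_eq.symm.trans hp
      simpa using this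
    have hl'' : X''.length = Y.length := by
      have := h4.length_eq.symm.trans hlen
      simpa using this
    have hRl := D.RC_last hyT hR''
    obtain ⟨l, e0, e1⟩ := D.exists_lam hyT hR''
    have hsp := D.sp_eq_of_prod (allT_left hX'') hRl.1 hD'' (allT_left hY) hp'' hl''
    refine h4.trans ((ih (allT_left hX'') hRl.1 hD'' (allT_left hY) hp'' hl'' ?_).appR _)
    intro z hz i
    refine D.lam_zero i hyT e0 e1 ((D.InLat_iff h4 hX z).1 (hin z (by simp [hz])) i) ?_
    rw [map_smul, e0 _ (hsp ▸ D.mem_sp hz), smul_zero]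

end Datum


section det
variable {F : Type*} [NormedAddCommGroup F] [InnerProductSpace ℝ F] [FiniteDimensional ℝ F]

theorem det_adj (A : F →ₗ[ℝ] F) : LinearMap.det (LinearMap.adjoint A) = LinearMap.det A := by
  let b := stdOrthonormalBasis ℝ F
  rw [← LinearMap.det_toMatrix b.toBasis, ← LinearMap.det_toMatrix b.toBasis A,
    LinearMap.toMatrix_adjoint b b, Matrix.det_conjTranspose]
  simp

/-- reflection -/
noncomputable def rfl' (α : F) : F →ₗ[ℝ] F :=
  LinearMap.transvection ((-(2 / ⟪α, α⟫)) • (innerₛₗ ℝ α)) α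

theorem rfl'_apply (α a : F) : rfl' α a = a - cf a α • α := by
  simp [rfl', LinearMap.transvection.apply, cf, sub_eq_add_neg]
  congr 1
  rw [real_inner_comm]; ring

theorem rfl'_det {α : F} (h : α ≠ 0) : LinearMap.det (rfl' α) = -1 := by
  have := inner_self_pos' h
  rw [rfl', LinearMap.transvection.det]
  simp only [LinearMap.smul_apply, innerₛₗ_apply_apply, smul_eq_mul]
  field_simp
  norm_num

theorem rfl'_inner (α a b : F) : ⟪rfl' α a, rfl' α b⟫ = ⟪a, b⟫ := by
  by_cases h : α = 0
  · simp [rfl'_apply, h]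
  have := inner_self_pos' h
  rw [rfl'_apply, rfl'_apply]
  simp only [inner_sub_left, inner_sub_right, real_inner_smul_left, real_inner_smul_right, cf]
  rw [real_inner_comm b α]
  field_simp
  ring

theorem exists_fixed (L : List F) (hL : ∀ α ∈ L, α ≠ 0) (hlen : L.length = Module.finrank ℝ F + 1) :
    ∃ v : F, v ≠ 0 ∧ (L.map rfl').prod v = v := by
  have h1 : LinearMap.det (L.map rfl').prod = (-1) ^ L.length := by
    clear hlen
    induction L with
    | nil => simp
    | cons a L ih =>
      rw [List.map_cons, List.prod_cons, map_mul, ih (fun x hx => hL x (by simp [hx])),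
        rfl'_det (hL a (by simp)), List.length_cons, pow_succ']
  have h2 : ∀ a b, ⟪(L.map rfl').prod a, (L.map rfl').prod b⟫ = ⟪a, b⟫ := by
    clear hlen h1 hL
    induction L with
    | nil => simp
    | cons c L ih =>
      intro a b
      rw [List.map_cons, List.prod_cons, Module.End.mul_apply, Module.End.mul_apply, rfl'_inner, ih]
  set A := (L.map rfl').prod with hA
  by_contra hno
  push Not at hno
  have hker : LinearMap.ker (A - 1) = ⊥ := by
    rw [LinearMap.ker_eq_bot']
    intro v hv
    by_contra hne
    exact hno v hne (sub_eq_zero.1 hv)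
  have hdet : LinearMap.det (A - 1) ≠ 0 := by
    intro h
    exact (LinearMap.bot_lt_ker_of_det_eq_zero h).ne' hker
  have h3 : LinearMap.adjoint A * A = 1 := by
    ext v
    apply ext_inner_left ℝ
    intro u
    rw [Module.End.mul_apply, LinearMap.adjoint_inner_right, h2]; rfl
  have h4 : LinearMap.adjoint A * (A - 1) = (-1 : ℝ) • LinearMap.adjoint (A - 1) := by
    have h1a : LinearMap.adjoint (1 : F →ₗ[ℝ] F) = 1 := LinearMap.adjoint_id
    rw [mul_sub, h3, map_sub, h1a, mul_one]
    simp
  have h5 := congrArg LinearMap.det h4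
  rw [map_mul, det_adj, LinearMap.det_smul, det_adj] at h5
  have h6 := mul_right_cancel₀ hdet h5
  rw [h1, hlen, pow_succ] at h6
  have h7 : ((-1 : ℝ)) ^ Module.finrank ℝ F ≠ 0 := by simp
  apply h7
  linarith
end det

namespace Datum
variable {W : Type*} [Group W] {T : Set W} {U E : Type*} [AddCommGroup U] [Module ℝ U]
    [NormedAddCommGroup E] [InnerProductSpace ℝ E] (D : Datum W T U E)

theorem inner_Sm {w : W} {c : E} (hc : D.lin w c = c) (h : ℕ) (b : U) :
    ⟪c, D.π (D.Sm w h b)⟫ = h * ⟪c, D.π b⟫ := by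
  have hj : ∀ j : ℕ, D.lin (w ^ j) c = c := by
    intro j
    induction j with
    | zero => simp
    | succ j ih => rw [pow_succ, map_mul, Module.End.mul_apply, hc, ih]
  unfold Sm
  rw [map_sum, inner_sum]
  have : ∀ j ∈ Finset.range h, ⟪c, D.π (D.act (w ^ j) b)⟫ = ⟪c, D.π b⟫ := by
    intro j _
    conv_lhs => rw [D.π_act, ← hj j]
    rw [hj j]
    conv_lhs => rw [← hj j, D.lin_inner]
  rw [Finset.sum_congr rfl this]; simp

theorem Sm_fixed {w : W} {h : ℕ} (hh : D.lin w ^ h = 1) (v : U) :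
    D.lin w (D.π (D.Sm w h v)) = D.π (D.Sm w h v) := by
  rw [← D.π_act, D.act_Sm, map_add, map_sub, D.π_pow hh, sub_self, add_zero]

theorem Sm_inner_pos {w : W} {h : ℕ} (hh : D.lin w ^ h = 1) {v : U}
    (hne : D.π (D.Sm w h v) ≠ 0) : ⟪D.π (D.Sm w h v), D.π v⟫ ≠ 0 := by
  intro h0
  have := D.inner_Sm (D.Sm_fixed hh v) h v
  rw [h0, mul_zero] at this
  exact hne (inner_self_eq_zero.1 this)

variable [FiniteDimensional ℝ U]

theorem Sm_zero_of_N {X : List W} (hX : AllT T X) (hR : D.RC X) {h : ℕ} {v : U} (hv : v ∈ D.sp X)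
    (hN : D.act (X.prod ^ h) v = v) : D.π (D.Sm X.prod h v) = 0 := by
  have hS : D.Sm X.prod h v ∈ D.sp X := sum_mem fun j _ => D.act_sp hX (pow_mem prod_mem j) hv
  apply D.π_zero_of_self_orth hS
  intro x hx
  obtain ⟨X', hX'⟩ := HurwitzEquiv.to_last hx
  have hT' := (D.allT_iff hX').1 hX
  have hxT : x ∈ T := hX x hx
  obtain ⟨l, h0, h1⟩ := D.exists_lam hxT ((D.RC_iff hX' hX).1 hR)
  have h2 := D.lam_pow hT' h0 h1 hX'.prod_eq.symm h v
  rw [hN] at h2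
  exact (cf_eq_zero (D.ne0 hxT)).1 (by linarith)

theorem ROT {N : U} (hN : N ≠ 0) : ∀ {X : List W}, AllT T X → D.RC X → N ∈ D.sp X →
    ∃ X' x, HurwitzEquiv X (X' ++ [x]) ∧ N ∉ D.sp X' := by
  intro X
  induction X using List.reverseRecOn with
  | nil => intro _ _ h; exact absurd (by simpa [sp] using h) hN
  | append_singleton A x ih =>
    intro hX hR hmem
    by_cases hA : N ∈ D.sp A
    · have hxT : x ∈ T := hX x (by simp)
      obtain ⟨hRA, hxn⟩ := D.RC_last hxT hR
      obtain ⟨A', x', h1, h2⟩ := ih (allT_left hX) hRA hA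
      refine ⟨A' ++ [x' * x * x'⁻¹], x', ?_, ?_⟩
      · have e := HurwitzEquiv.move A' [] x' x
        have e2 := h1.appR [x]
        refine e2.trans ?_
        simpa using e
      · intro hmem'
        have hx'T : x' ∈ T := (D.allT_iff h1).1 (allT_left hX) x' (by simp)
        rw [D.sp_eq h1 (allT_left hX)] at hA hxn
        rw [sp_append, sp_singleton, Submodule.mem_sup] at hmem'
        obtain ⟨a, ha, b, hb, rfl⟩ := hmem'
        obtain ⟨c, rfl⟩ := Submodule.mem_span_singleton.1 hb
        have hle : D.sp A' ≤ D.sp (A' ++ [x']) := D.sp_mono (by intro y hy; simp [hy])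
        have hx'm : D.rt x' ∈ D.sp (A' ++ [x']) := D.mem_sp (by simp)
        have hc : c • D.rt (x' * x * x'⁻¹) ∈ D.sp (A' ++ [x']) := by
          have := sub_mem hA (hle ha)
          simpa using this
        by_cases hc0 : c = 0
        · apply h2; rw [hc0]; simpa using ha
        have hc1 : D.rt (x' * x * x'⁻¹) ∈ D.sp (A' ++ [x']) := by
          have := (D.sp (A' ++ [x'])).smul_mem c⁻¹ hc
          rwa [smul_smul, inv_mul_cancel₀ hc0, one_smul] at this
        have hc2 : D.act x' (D.rt x) ∈ D.sp (A' ++ [x']) := by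
          rcases D.rt_conj x' x hxT with e | e
          · rwa [← e]
          · rw [e] at hc1; simpa using hc1
        rw [D.act_T x' hx'T] at hc2
        apply hxn
        have := add_mem hc2 ((D.sp (A' ++ [x'])).smul_mem (cf (D.π (D.rt x)) (D.π (D.rt x'))) hx'm)
        simpa using this
    · exact ⟨A, x, HurwitzEquiv.refl _, hA⟩

theorem EA {X : List W} (hX : AllT T X) (hR : D.RC X) {h : ℕ} (hh : D.lin X.prod ^ h = 1)
    {t : W} (ht : t ∈ T) (hL : D.InLat X t) (hN : D.act (X.prod ^ h) (D.rt t) - D.rt t ≠ 0)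
    (hline : ∀ r ∈ D.sp X, D.π r = 0 → ∃ c : ℝ, r = c • (D.act (X.prod ^ h) (D.rt t) - D.rt t)) :
    Reach X t := by
  have hNm : D.act (X.prod ^ h) (D.rt t) - D.rt t ∈ D.sp X := D.act_sub_sp hX (pow_mem prod_mem h) _
  have hNπ : D.π (D.act (X.prod ^ h) (D.rt t) - D.rt t) = 0 := by rw [map_sub, D.π_pow hh, sub_self]
  have hak : ∀ k : ℤ, D.act (X.prod ^ ((h : ℤ) * k)) (D.rt t) =
      D.rt t + (k : ℝ) • (D.act (X.prod ^ h) (D.rt t) - D.rt t) := by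
    have hs : ∀ (g : W), g ∈ Subgroup.closure {x | x ∈ X} → D.act g (D.act (X.prod ^ h) (D.rt t) - D.rt t) =
        D.act (X.prod ^ h) (D.rt t) - D.rt t := fun g hg => D.act_ker hX hg hNπ
    intro k
    induction k using Int.induction_on with
    | zero => simp
    | succ k ih =>
      rw [mul_add, mul_one, add_comm, zpow_add, zpow_natCast, D.act_mul, ih, map_add, map_smul,
        hs _ (pow_mem prod_mem h)]
      push_cast
      module
    | pred k ih =>
      have hinv : D.act (X.prod ^ h)⁻¹ (D.rt t) =
          D.rt t - (D.act (X.prod ^ h) (D.rt t) - D.rt t) := by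
        have := hs (X.prod ^ h)⁻¹ (inv_mem (pow_mem prod_mem h))
        rw [map_sub, D.act_inv_act] at this
        rw [← this]; simp
      rw [mul_sub, mul_one, sub_eq_add_neg, add_comm, zpow_add, zpow_neg, zpow_natCast, D.act_mul, ih,
        map_add, map_smul, hs _ (inv_mem (pow_mem prod_mem h)), hinv]
      push_cast
      module
  set N := D.act (X.prod ^ h) (D.rt t) - D.rt t with hNdef
  obtain ⟨X', x, h1, h2⟩ := D.ROT hN hX hR hNm
  have hX' := (D.allT_iff h1).1 hX
  have hR' := (D.RC_iff h1 hX).1 hR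
  have hxT : x ∈ T := hX' x (by simp)
  obtain ⟨l, e0, e1⟩ := D.exists_lam hxT hR'
  have hsp := D.sp_eq h1 hX
  have hlN : l N ≠ 0 := fun h => h2 (D.lam_span e0 e1 (hsp ▸ hNm) h)
  have hle : D.sp X' ≤ D.sp X := by rw [hsp]; exact D.sp_mono (by intro y hy; simp [hy])
  have hdef : ∀ r ∈ D.sp X, D.π r = 0 → l r = 0 → r = 0 := by
    intro r hr hπ hl
    obtain ⟨c, rfl⟩ := hline r hr hπ
    rw [map_smul, smul_eq_mul, mul_eq_zero] at hl
    rw [hl.resolve_right hlN, zero_smul]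
  have hreach : Reach (X' ++ [x]) t := by
    refine D.core hX' e0 e1 h1.prod_eq.symm (by rw [← hsp]; exact hdef)
      (fun t ht hL => D.EF (allT_left hX') (D.RC_last hxT hR').1
        (fun u hu hπ => hdef u (hle hu) hπ (e0 u hu)) ht hL) ht ((D.InLat_iff h1 hX t).1 hL) ?_ ?_
    · obtain ⟨k, hk⟩ : ∃ k : ℤ, l (D.rt t) + k * l N ≤ 0 := by
        rcases lt_or_gt_of_ne hlN with hneg | hpos
        · obtain ⟨n, hn⟩ := exists_nat_ge (l (D.rt t) / (-l N))
          rw [div_le_iff₀ (by linarith)] at hn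
          exact ⟨n, by push_cast; linarith⟩
        · obtain ⟨n, hn⟩ := exists_nat_ge (l (D.rt t) / l N)
          rw [div_le_iff₀ (by linarith)] at hn
          exact ⟨-n, by push_cast; linarith⟩
      exact ⟨h * k, by rw [hak, map_add, map_smul, smul_eq_mul]; exact hk⟩
    · obtain ⟨k, hk⟩ : ∃ k : ℤ, 0 ≤ l (D.rt t) + k * l N := by
        rcases lt_or_gt_of_ne hlN with hneg | hpos
        · obtain ⟨n, hn⟩ := exists_nat_ge (-l (D.rt t) / (-l N))
          rw [div_le_iff₀ (by linarith)] at hn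
          exact ⟨-n, by push_cast; linarith⟩
        · obtain ⟨n, hn⟩ := exists_nat_ge (-l (D.rt t) / l N)
          rw [div_le_iff₀ (by linarith)] at hn
          exact ⟨n, by push_cast; linarith⟩
      exact ⟨h * k, by rw [hak, map_add, map_smul, smul_eq_mul]; exact hk⟩
  obtain ⟨X'', h3, h4⟩ := hreach
  exact ⟨X'', h1.trans h3, h4⟩

end Datum


namespace Datum
variable {W : Type*} [Group W] {T : Set W} {U E : Type*} [AddCommGroup U] [Module ℝ U]
    [NormedAddCommGroup E] [InnerProductSpace ℝ E] (D : Datum W T U E)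

/-- the isotropic part of the span is at most a line -/
def Line (X : List W) : Prop := ∃ ρ : U, ∀ r ∈ D.sp X, D.π r = 0 → ∃ c : ℝ, r = c • ρ

theorem Line.ratio {D : Datum W T U E} {X : List W} (h : D.Line X) {u r : U} (hu : u ∈ D.sp X) (hu0 : D.π u = 0)
    (hune : u ≠ 0) (hr : r ∈ D.sp X) (hr0 : D.π r = 0) : ∃ c : ℝ, r = c • u := by
  obtain ⟨ρ, h⟩ := h
  obtain ⟨a, rfl⟩ := h u hu hu0
  obtain ⟨b, rfl⟩ := h r hr hr0
  have ha : a ≠ 0 := by rintro rfl; simp at hune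
  exact ⟨b / a, by rw [smul_smul, div_mul_cancel₀ _ ha]⟩

variable [FiniteDimensional ℝ U]

theorem refl_list (X : List W) : ∀ L : List W, (∀ x ∈ L, x ∈ T ∧ D.rt x ∈ D.sp X) →
    ∃ L' : List ((D.sp X).map D.π), L'.length = L.length ∧ (∀ α ∈ L', α ≠ 0) ∧
      ∀ v : (D.sp X).map D.π, ((L'.map rfl').prod v : E) = D.lin L.prod v := by
  intro L
  induction L with
  | nil => intro _; exact ⟨[], rfl, by simp, by simp⟩
  | cons x L ih =>
    intro h
    obtain ⟨L', h1, h2, h3⟩ := ih (fun y hy => h y (by simp [hy]))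
    obtain ⟨hxT, hxs⟩ := h x (by simp)
    refine ⟨⟨D.π (D.rt x), Submodule.mem_map_of_mem hxs⟩ :: L', by simp [h1], ?_, ?_⟩
    · intro α hα
      rcases List.mem_cons.1 hα with rfl | hα
      · intro h0; exact D.ne0 hxT (congrArg Subtype.val h0)
      · exact h2 α hα
    · intro v
      rw [List.map_cons, List.prod_cons, Module.End.mul_apply, List.prod_cons, map_mul,
        Module.End.mul_apply, rfl'_apply, D.lin_T x hxT, ← h3 v]
      rfl

theorem finrank_map {X : List W} (hR : D.RC X) (hline : D.Line X) (hnd : ¬ D.Dfn X) :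
    X.length = Module.finrank ℝ ((D.sp X).map D.π) + 1 := by
  unfold Dfn at hnd
  push Not at hnd
  obtain ⟨u, hu, hu0, hune⟩ := hnd
  have h1 := LinearMap.finrank_range_add_finrank_ker (D.π.domRestrict (D.sp X))
  have h2 : Module.finrank ℝ (LinearMap.ker (D.π.domRestrict (D.sp X))) = 1 := by
    rw [finrank_eq_one_iff']
    refine ⟨⟨⟨u, hu⟩, hu0⟩, ?_, ?_⟩
    · intro h; exact hune (congrArg (fun z => (z.1.1 : U)) h)
    · rintro ⟨⟨r, hr⟩, hr0⟩
      obtain ⟨c, hc⟩ := hline.ratio hu hu0 hune hr hr0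
      exact ⟨c, Subtype.ext (Subtype.ext hc.symm)⟩
  rw [LinearMap.range_domRestrict, h2] at h1
  unfold RC at hR
  omega

theorem exists_y {X Y : List W} (hX : AllT T X) (hR : D.RC X) (hline : D.Line X) (hnd : ¬ D.Dfn X)
    (hY : AllT T Y) (hp : X.prod = Y.prod) (hYs : ∀ y ∈ Y, D.rt y ∈ D.sp X) {h : ℕ} (hpos : 0 < h)
    (hh : D.lin X.prod ^ h = 1) : ∃ y ∈ Y, D.act (X.prod ^ h) (D.rt y) - D.rt y ≠ 0 := by
  by_contra hno
  push Not at hno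
  have hposR : (h : ℝ) ≠ 0 := by positivity
  have h1 : ∀ y ∈ Y, D.π (D.Sm X.prod h (D.rt y)) = 0 := fun y hy =>
    D.Sm_zero_of_N hX hR (hYs y hy) (sub_eq_zero.1 (hno y hy))
  have h2 : ∀ v : U, D.act (X.prod ^ h) v = v := by
    intro v
    have h3 : D.act Y.prod (D.Sm X.prod h v) = D.Sm X.prod h v := by
      apply D.act_fix hY prod_mem
      intro y hy
      have := D.inner_Sm (D.Sm_fixed hh v) h (D.rt y)
      rw [h1 y hy, inner_zero_right] at this
      exact (mul_eq_zero.1 this.symm).resolve_left hposR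
    rw [← hp, D.act_Sm] at h3
    exact sub_eq_zero.1 (by simpa using h3)
  obtain ⟨L, hL1, hL2, hL3⟩ := D.refl_list X X (fun x hx => ⟨hX x hx, D.mem_sp hx⟩)
  obtain ⟨⟨v, hv⟩, hvne, hvfix⟩ := exists_fixed L hL2 (hL1.trans (D.finrank_map hR hline hnd))
  obtain ⟨u, hu, rfl⟩ := hv
  have h4 : D.lin X.prod (D.π u) = D.π u := by
    have := hL3 ⟨D.π u, Submodule.mem_map_of_mem hu⟩
    rw [hvfix] at this
    exact this.symm
  have h5 := D.inner_Sm h4 h u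
  rw [D.Sm_zero_of_N hX hR hu (h2 u), inner_zero_right] at h5
  have h6 := inner_self_eq_zero.1 ((mul_eq_zero.1 h5.symm).resolve_left hposR)
  exact hvne (Subtype.ext h6)

theorem AFF {X Y : List W} (hX : AllT T X) (hR : D.RC X) (hline : D.Line X)
    (hY : AllT T Y) (hp : X.prod = Y.prod) (hlen : X.length = Y.length)
    (hcl : ∀ y ∈ Y, y ∈ Subgroup.closure {x | x ∈ X}) (hin : ∀ y ∈ Y, D.InLat X y) :
    HurwitzEquiv X Y := by
  by_cases hD : D.Dfn X
  · exact D.FT hX hR hD hY hp hlen hin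
  obtain ⟨h, hpos, hh⟩ := D.lin_fin X.prod
  obtain ⟨y, hyY, hN⟩ := D.exists_y hX hR hline hD hY hp (fun y hy => D.sp_of_InLat (hin y hy)) hpos hh
  have hNm : D.act (X.prod ^ h) (D.rt y) - D.rt y ∈ D.sp X := D.act_sub_sp hX (pow_mem prod_mem h) _
  have hNπ : D.π (D.act (X.prod ^ h) (D.rt y) - D.rt y) = 0 := by rw [map_sub, D.π_pow hh, sub_self]
  have hyT := hY y hyY
  have hrat := fun r (hr : r ∈ D.sp X) (hr0 : D.π r = 0) => hline.ratio hNm hNπ hN hr hr0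
  obtain ⟨X', h1, h2⟩ := D.EA hX hR hh hyT (hin y hyY) hN hrat
  obtain ⟨X'', h3⟩ := HurwitzEquiv.to_last h2
  have h4 := h1.trans h3
  obtain ⟨Y'', h5⟩ := HurwitzEquiv.to_last hyY
  have hX'' := (D.allT_iff h4).1 hX
  have hR'' := (D.RC_iff h4 hX).1 hR
  have hY'' := (D.allT_iff h5).1 hY
  have hsp := D.sp_eq h4 hX
  have hle : D.sp X'' ≤ D.sp X := by rw [hsp]; exact D.sp_mono (by intro y hy; simp [hy])
  obtain ⟨l, e0, e1⟩ := D.exists_lam hyT hR''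
  have hSne : D.π (D.Sm X.prod h (D.rt y)) ≠ 0 := by
    intro h0
    have h6 := D.act_Sm X.prod h (D.rt y)
    rw [D.act_ker hX prod_mem h0] at h6
    exact hN (by simpa using h6)
  have hlN : l (D.act (X.prod ^ h) (D.rt y) - D.rt y) ≠ 0 := by
    rw [map_sub, D.lam_pow hX'' e0 e1 h4.prod_eq.symm, sub_sub_cancel_left, neg_ne_zero]
    intro h7
    exact D.Sm_inner_pos hh hSne ((cf_eq_zero (D.ne0 hyT)).1 h7)
  have hD'' : D.Dfn X'' := by
    intro u hu hu0
    obtain ⟨c, rfl⟩ := hrat u (hle hu) hu0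
    have := e0 _ hu
    rw [map_smul, smul_eq_mul, mul_eq_zero] at this
    rw [this.resolve_right hlN, zero_smul]
  have hp'' : X''.prod = Y''.prod := by
    have := (h4.prod_eq.symm.trans hp).trans h5.prod_eq
    simpa using this
  have hl'' : X''.length = Y''.length := by
    have := (h4.length_eq.symm.trans hlen).trans h5.length_eq
    simpa using this
  have hsp2 := D.sp_eq_of_prod (allT_left hX'') (D.RC_last hyT hR'').1 hD'' (allT_left hY'') hp'' hl''
  have hall : ∀ z ∈ Y'' ++ [y], z ∈ T ∧ z ∈ Subgroup.closure {x | x ∈ X} ∧ D.InLat X z := by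
    refine (h5.all_mem (Q := fun z => z ∈ T ∧ z ∈ Subgroup.closure {x | x ∈ X} ∧ D.InLat X z) ?_).1
      (fun z hz => ⟨hY z hz, hcl z hz, hin z hz⟩)
    rintro a b ⟨-, ha, -⟩
    have hgen : ∀ g ∈ Subgroup.closure {x | x ∈ X}, ∀ b, (b ∈ T ∧ b ∈ Subgroup.closure {x | x ∈ X} ∧ D.InLat X b) →
      (g * b * g⁻¹ ∈ T ∧ g * b * g⁻¹ ∈ Subgroup.closure {x | x ∈ X} ∧ D.InLat X (g * b * g⁻¹)) := by
      rintro g hg b ⟨h1, h2, h3⟩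
      exact ⟨D.conj_T g b h1, mul_mem (mul_mem hg h2) (inv_mem hg), D.InLat_conj hX hg h1 h3⟩
    constructor
    · intro hb
      have := hgen a⁻¹ (inv_mem ha) _ hb
      simpa [mul_assoc] using this
    · exact hgen a ha b
  have hfin : HurwitzEquiv X'' Y'' := by
    refine D.FT (allT_left hX'') (D.RC_last hyT hR'').1 hD'' (allT_left hY'') hp'' hl'' ?_
    intro z hz i
    refine D.lam_zero i hyT e0 e1 ((D.InLat_iff h4 hX z).1 (hall z (by simp [hz])).2.2 i) ?_
    rw [map_smul, e0 _ (hsp2 ▸ D.mem_sp hz), smul_zero]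
  exact h4.trans ((hfin.appR _).trans h5.symm)

end Datum


namespace Datum
variable {W : Type*} [Group W] {T : Set W} {U E : Type*} [AddCommGroup U] [Module ℝ U]
    [NormedAddCommGroup E] [InnerProductSpace ℝ E] (D : Datum W T U E)

/-- connectedness -/
def Conn (X : List W) : Prop := ∀ p : W → Prop, (∃ x ∈ X, p x) →
  (∀ x ∈ X, ∀ x' ∈ X, p x → ⟪D.π (D.rt x), D.π (D.rt x')⟫ ≠ 0 → p x') → ∀ x ∈ X, p x

/-- roots of the reflection subgroup -/
def Psi (X : List W) : Set U :=
  {v | ∃ g ∈ Subgroup.closure {x | x ∈ X}, ∃ x ∈ X, v = D.act g (D.rt x)}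

theorem Psi_act {X : List W} {g : W} (hg : g ∈ Subgroup.closure {x | x ∈ X}) {v : U} (hv : v ∈ D.Psi X) :
    D.act g v ∈ D.Psi X := by
  obtain ⟨k, hk, x, hx, rfl⟩ := hv
  exact ⟨g * k, mul_mem hg hk, x, hx, by rw [D.act_mul]⟩

theorem Psi_gen {X : List W} {x : W} (hx : x ∈ X) : D.rt x ∈ D.Psi X :=
  ⟨1, one_mem _, x, hx, by simp⟩

theorem Psi_refl {X : List W} (hX : AllT T X) {v : U} (hv : v ∈ D.Psi X) :
    ∃ t ∈ T, t ∈ Subgroup.closure {x | x ∈ X} ∧ (v = D.rt t ∨ v = - D.rt t) := by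
  obtain ⟨g, hg, x, hx, rfl⟩ := hv
  refine ⟨g * x * g⁻¹, D.conj_T g x (hX x hx),
    mul_mem (mul_mem hg (Subgroup.subset_closure hx)) (inv_mem hg), ?_⟩
  rcases D.rt_conj g x (hX x hx) with e | e <;> rw [e] <;> simp

theorem Psi_sp {X : List W} (hX : AllT T X) {v : U} (hv : v ∈ D.Psi X) : v ∈ D.sp X := by
  obtain ⟨g, hg, x, hx, rfl⟩ := hv
  exact D.act_sp hX hg (D.mem_sp hx)

theorem Psi_ne {X : List W} (hX : AllT T X) {v : U} (hv : v ∈ D.Psi X) : D.π v ≠ 0 := by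
  obtain ⟨t, ht, -, rfl | rfl⟩ := D.Psi_refl hX hv
  · exact D.ne0 ht
  · rw [map_neg, neg_ne_zero]; exact D.ne0 ht

/-- reflecting in a root of Psi -/
theorem Psi_reflect {X : List W} (hX : AllT T X) {v u : U} (hv : v ∈ D.Psi X) (hu : u ∈ D.Psi X) :
    u - cf (D.π u) (D.π v) • v ∈ D.Psi X := by
  obtain ⟨t, ht, hc, e⟩ := D.Psi_refl hX hv
  have h := D.Psi_act hc hu
  rw [D.act_T t ht] at h
  rcases e with rfl | rfl
  · exact h
  · rw [map_neg, cf_neg_right, smul_neg, neg_smul, neg_neg]; exact h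

theorem Psi_shift {X : List W} (hX : AllT T X) {z r x : U} (hz : z ∈ D.Psi X) (hr : D.π r = 0)
    (hzr : z + r ∈ D.Psi X) (hx : x ∈ D.Psi X) : x + cf (D.π x) (D.π z) • r ∈ D.Psi X := by
  have h1 := D.Psi_reflect hX hz hx
  have h2 := D.Psi_reflect hX hzr h1
  rw [map_add, hr, add_zero, map_sub, map_smul, cf_sub, cf_smul, cf_self (D.Psi_ne hX hz)] at h2
  convert h2 using 1
  module

theorem Psi_dep {X : List W} (hX : AllT T X) {v r r' : U} (hr : D.π r = 0) (hr' : D.π r' = 0)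
    (h1 : v ∈ D.Psi X) (h2 : v + r ∈ D.Psi X) (h3 : v + r' ∈ D.Psi X) :
    ∃ p q : ℝ, (p ≠ 0 ∨ q ≠ 0) ∧ p • r + q • r' = 0 := by
  obtain ⟨t1, ht1, -, e1⟩ := D.Psi_refl hX h1
  obtain ⟨t2, ht2, -, e2⟩ := D.Psi_refl hX h2
  obtain ⟨t3, ht3, -, e3⟩ := D.Psi_refl hX h3
  rcases e1 with rfl | rfl
  · refine D.dep t1 ht1 t2 ht2 t3 ht3 r r' hr hr' ?_ ?_
    · rcases e2 with e | e <;> rw [e] <;> simp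
    · rcases e3 with e | e <;> rw [e] <;> simp
  · obtain ⟨p, q, hpq, h⟩ := D.dep t1 ht1 t2 ht2 t3 ht3 (-r) (-r') (by simp [hr]) (by simp [hr']) (by
      rcases e2 with e | e
      · right; rw [← e]; abel
      · left; rw [← neg_neg (D.rt t2), ← e]; abel) (by
      rcases e3 with e | e
      · right; rw [← e]; abel
      · left; rw [← neg_neg (D.rt t3), ← e]; abel)
    refine ⟨p, q, hpq, ?_⟩
    have := congrArg Neg.neg h
    simpa [add_comm] using this

theorem Psi_nonorth {X : List W} (hX : AllT T X) {v : U} (hv : v ∈ D.Psi X) :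
    ∃ x ∈ X, ⟪D.π v, D.π (D.rt x)⟫ ≠ 0 := by
  by_contra h
  push Not at h
  exact D.Psi_ne hX hv (D.π_zero_of_self_orth (D.Psi_sp hX hv) h)

theorem exists_rho {X : List W} (hX : AllT T X) (hC : D.Conn X) :
    ∃ ρ : U, D.π ρ = 0 ∧ ∀ v ∈ D.Psi X, ∀ r, D.π r = 0 → v + r ∈ D.Psi X → r ∈ Submodule.span ℝ {ρ} := by
  by_cases hall : ∀ v ∈ D.Psi X, ∀ r, D.π r = 0 → v + r ∈ D.Psi X → r = 0
  · exact ⟨0, map_zero _, fun v hv r hr h => by rw [hall v hv r hr h]; exact zero_mem _⟩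
  push Not at hall
  obtain ⟨z, hz, ρ, hρ, hzρ, hne⟩ := hall
  have hp : ∀ x ∈ X, ∃ k : ℝ, k ≠ 0 ∧ D.rt x + k • ρ ∈ D.Psi X := by
    apply hC (fun x => ∃ k : ℝ, k ≠ 0 ∧ D.rt x + k • ρ ∈ D.Psi X)
    · obtain ⟨x, hx, hzx⟩ := D.Psi_nonorth hX hz
      refine ⟨x, hx, cf (D.π (D.rt x)) (D.π z), ?_, D.Psi_shift hX hz hρ hzρ (D.Psi_gen hx)⟩
      rw [Ne, cf_eq_zero (D.Psi_ne hX hz), real_inner_comm]; exact hzx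
    · rintro x hx x' hx' ⟨k, hk, h⟩ hxx
      refine ⟨cf (D.π (D.rt x')) (D.π (D.rt x)) * k, mul_ne_zero ?_ hk, ?_⟩
      · rw [Ne, cf_eq_zero (D.ne0 (hX x hx)), real_inner_comm]; exact hxx
      · rw [mul_smul]
        exact D.Psi_shift hX (D.Psi_gen hx) (by rw [map_smul, hρ, smul_zero]) h (D.Psi_gen hx')
  refine ⟨ρ, hρ, fun v hv r hr hvr => ?_⟩
  obtain ⟨x, hx, hvx⟩ := D.Psi_nonorth hX hv
  obtain ⟨k, hk, h⟩ := hp x hx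
  have h1 := D.Psi_shift hX (D.Psi_gen hx) (by rw [map_smul, hρ, smul_zero]) h hv
  have hk' : cf (D.π v) (D.π (D.rt x)) ≠ 0 := by
    rw [Ne, cf_eq_zero (D.ne0 (hX x hx))]; exact hvx
  rw [smul_smul] at h1
  obtain ⟨p, q, hpq, he⟩ := D.Psi_dep hX hr (by rw [map_smul, hρ, smul_zero]) hv hvr h1
  rw [smul_smul] at he
  have hp0 : p ≠ 0 := by
    rintro rfl
    rw [zero_smul, zero_add, smul_eq_zero] at he
    rcases he with he | he
    · rcases hpq with h | h
      · exact h rfl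
      · exact (mul_ne_zero h (mul_ne_zero hk' hk)) he
    · exact hne he
  rw [Submodule.mem_span_singleton]
  refine ⟨-(p⁻¹ * (q * (cf (D.π v) (D.π (D.rt x)) * k))), ?_⟩
  have := eq_neg_of_add_eq_zero_left he
  have h2 : r = p⁻¹ • (p • r) := by rw [smul_smul, inv_mul_cancel₀ hp0, one_smul]
  rw [h2, this, neg_smul, smul_neg, smul_smul]

theorem Psi_finite {X : List W} (hX : AllT T X) : (D.π '' D.Psi X).Finite := by
  refine (D.isRoot.finite.union (D.isRoot.finite.image (fun a => -a))).subset ?_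
  rintro _ ⟨v, hv, rfl⟩
  obtain ⟨t, ht, -, rfl | rfl⟩ := D.Psi_refl hX hv
  · exact Or.inl (D.π_rt t ht)
  · exact Or.inr ⟨_, D.π_rt t ht, by rw [map_neg]⟩

theorem line_of_conn {X : List W} (hX : AllT T X) (hC : D.Conn X) : D.Line X := by
  obtain ⟨ρ, hρ, hl⟩ := D.exists_rho hX hC
  by_cases hemp : X = []
  · subst hemp
    exact ⟨0, fun r hr _ => ⟨0, by simpa [sp] using hr⟩⟩
  obtain ⟨x₀, hx₀⟩ := List.exists_mem_of_ne_nil X hemp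
  set R := Submodule.span ℝ {ρ} with hRdef
  have hRπ : ∀ r ∈ R, D.π r = 0 := by
    intro r hr
    obtain ⟨c, rfl⟩ := Submodule.mem_span_singleton.1 hr
    rw [map_smul, hρ, smul_zero]
  have hσ : ∀ α : E, ∃ v : U, α ∈ D.π '' D.Psi X → v ∈ D.Psi X ∧ D.π v = α := by
    intro α
    by_cases h : α ∈ D.π '' D.Psi X
    · obtain ⟨v, hv, e⟩ := h; exact ⟨v, fun _ => ⟨hv, e⟩⟩
    · exact ⟨0, fun h' => absurd h' h⟩
  choose σ hσ using hσ
  let A := (D.Psi_finite hX).toFinset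
  have hA : ∀ α, α ∈ A ↔ α ∈ D.π '' D.Psi X := fun α => Set.Finite.mem_toFinset _
  let Γ : E → U := fun a => ∑ α ∈ A, ⟪a, α⟫ • σ α
  have hΓadd : ∀ a b, Γ (a + b) = Γ a + Γ b := by
    intro a b; simp only [Γ, inner_add_left, add_smul, Finset.sum_add_distrib]
  have hΓsmul : ∀ (c : ℝ) a, Γ (c • a) = c • Γ a := by
    intro c a; simp only [Γ, real_inner_smul_left, mul_smul, Finset.smul_sum]
  have hπΓ : ∀ a b, ⟪D.π (Γ a), b⟫ = ∑ α ∈ A, ⟪a, α⟫ * ⟪α, b⟫ := by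
    intro a b
    simp only [Γ, map_sum, map_smul, sum_inner, real_inner_smul_left]
    refine Finset.sum_congr rfl fun α hα => ?_
    rw [(hσ α ((hA α).1 hα)).2]
  have hsymm : ∀ a b, ⟪D.π (Γ a), b⟫ = ⟪D.π (Γ b), a⟫ := by
    intro a b
    rw [hπΓ, hπΓ]
    refine Finset.sum_congr rfl fun α _ => ?_
    rw [real_inner_comm α a, real_inner_comm b α]; ring
  -- equivariance
  have hlinA : ∀ x ∈ X, ∀ α ∈ A, D.lin x α ∈ A := by
    intro x hx α hα
    rw [hA] at hα ⊢
    obtain ⟨v, hv, rfl⟩ := hα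
    exact ⟨D.act x v, D.Psi_act (Subgroup.subset_closure hx) hv, D.π_act x v⟩
  have hlin2 : ∀ x ∈ X, ∀ a, D.lin x (D.lin x a) = a := by
    intro x hx a
    rw [← Module.End.mul_apply, ← map_mul, D.invol x (hX x hx)]; simp
  have hequiv : ∀ x ∈ X, ∀ a, D.act x (Γ a) - Γ (D.lin x a) ∈ R := by
    intro x hx a
    have h1 : Γ (D.lin x a) = ∑ α ∈ A, ⟪a, α⟫ • σ (D.lin x α) := by
      simp only [Γ]
      refine Finset.sum_nbij' (D.lin x) (D.lin x) (hlinA x hx) (hlinA x hx)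
        (fun α _ => hlin2 x hx α) (fun α _ => hlin2 x hx α) ?_
      intro α _
      rw [hlin2 x hx α, ← D.lin_inner x (D.lin x a) α, hlin2 x hx a]
    rw [h1]
    simp only [Γ, map_sum, map_smul]
    rw [← Finset.sum_sub_distrib]
    refine sum_mem fun α hα => ?_
    rw [← smul_sub]
    refine R.smul_mem _ ?_
    have s1 := hσ α ((hA α).1 hα)
    have s2 := hσ _ ((hA _).1 (hlinA x hx α hα))
    refine hl _ s2.1 _ ?_ ?_
    · rw [map_sub, D.π_act, s1.2, s2.2, sub_self]
    · rw [add_sub_cancel]; exact D.Psi_act (Subgroup.subset_closure hx) s1.1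
  let γ : W → ℝ := fun x => cf (D.π (Γ (D.π (D.rt x)))) (D.π (D.rt x)) / 2
  have hγ : ∀ x ∈ X, Γ (D.π (D.rt x)) - γ x • D.rt x ∈ R := by
    intro x hx
    have h1 := hequiv x hx (D.π (D.rt x))
    have h2 : D.lin x (D.π (D.rt x)) = (-1 : ℝ) • D.π (D.rt x) := by
      rw [D.lin_T x (hX x hx), cf_self (D.ne0 (hX x hx))]; module
    rw [h2, hΓsmul, D.act_T x (hX x hx)] at h1
    have h3 := R.smul_mem (1 / 2 : ℝ) h1
    convert h3 using 1
    simp only [γ]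
    module
  have hγpos : 0 < γ x₀ := by
    have hT := hX x₀ hx₀
    have hp := inner_self_pos' (D.ne0 hT)
    simp only [γ, cf]
    rw [hπΓ]
    have : 0 < ∑ α ∈ A, ⟪D.π (D.rt x₀), α⟫ * ⟪α, D.π (D.rt x₀)⟫ := by
      refine Finset.sum_pos' (fun α _ => ?_) ⟨D.π (D.rt x₀), (hA _).2 ⟨_, D.Psi_gen hx₀, rfl⟩, mul_pos hp hp⟩
      rw [real_inner_comm α]; exact mul_self_nonneg _
    positivity
  have hγin : ∀ x ∈ X, ∀ b, ⟪D.π (Γ (D.π (D.rt x))), b⟫ = γ x * ⟪D.π (D.rt x), b⟫ := by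
    intro x hx b
    have := hRπ _ (hγ x hx)
    rw [map_sub, map_smul, sub_eq_zero] at this
    rw [this, real_inner_smul_left]
  have hconst : ∀ x ∈ X, γ x = γ x₀ := by
    apply hC (fun x => γ x = γ x₀) ⟨x₀, hx₀, rfl⟩
    intro x hx x' hx' h hne
    rw [← h]
    have h1 := hγin x hx (D.π (D.rt x'))
    have h2 := hγin x' hx' (D.π (D.rt x))
    rw [hsymm, h2, real_inner_comm] at h1
    exact mul_right_cancel₀ hne h1
  have hspan : ∀ u ∈ D.sp X, Γ (D.π u) - γ x₀ • u ∈ R := by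
    intro u hu
    unfold sp at hu
    induction hu using Submodule.span_induction with
    | mem v hv => obtain ⟨x, hx, rfl⟩ := hv; rw [← hconst x hx]; exact hγ x hx
    | zero =>
      have : Γ 0 = 0 := by simp [Γ]
      simp [this]
    | add u v _ _ h1 h2 =>
      rw [map_add, hΓadd]
      have := add_mem h1 h2
      convert this using 1
      module
    | smul c v _ h =>
      rw [map_smul, hΓsmul]
      have := R.smul_mem c h
      convert this using 1
      module
  refine ⟨ρ, fun r hr hr0 => ?_⟩
  have h1 := hspan r hr
  have h0 : Γ 0 = 0 := by simp [Γ]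
  rw [hr0, h0, zero_sub] at h1
  have h2 := R.smul_mem (-(γ x₀)⁻¹) h1
  rw [smul_neg, neg_smul, neg_neg, smul_smul, inv_mul_cancel₀ hγpos.ne', one_smul] at h2
  obtain ⟨c, hc⟩ := Submodule.mem_span_singleton.1 h2
  exact ⟨c, hc.symm⟩

end Datum


namespace Datum
variable {W : Type*} [Group W] {T : Set W} {U E : Type*} [AddCommGroup U] [Module ℝ U]
    [NormedAddCommGroup E] [InnerProductSpace ℝ E] (D : Datum W T U E)

/-- orthogonal lists -/
def Orth (X Y : List W) : Prop := ∀ x ∈ X, ∀ y ∈ Y, ⟪D.π (D.rt x), D.π (D.rt y)⟫ = 0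

theorem Orth.symm {D : Datum W T U E} {X Y : List W} (h : D.Orth X Y) : D.Orth Y X := by
  intro y hy x hx; rw [real_inner_comm]; exact h x hx y hy

theorem orth_sp {X Y : List W} (h : D.Orth X Y) {u v : U} (hu : u ∈ D.sp X) (hv : v ∈ D.sp Y) :
    ⟪D.π u, D.π v⟫ = 0 := by
  apply D.π_zero_of_orth hv
  intro y hy
  rw [real_inner_comm]
  exact D.π_zero_of_orth hu (fun x hx => by rw [real_inner_comm]; exact h x hx y hy)

theorem comm_of_orth {x y : W} (hx : x ∈ T) (hy : y ∈ T) (h : ⟪D.π (D.rt x), D.π (D.rt y)⟫ = 0) :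
    x * y = y * x := by
  have h1 : D.act x (D.rt y) = D.rt y := by
    rw [D.act_T x hx, (cf_eq_zero (D.ne0 hx)).2 (by rw [real_inner_comm]; exact h)]; simp
  have h2 : x * y * x⁻¹ = y := by
    apply D.rt_inj _ (D.conj_T x y hy) _ hy
    rw [← h1]
    rcases D.rt_conj x y hy with e | e
    · left; rw [e, h1]
    · right; rw [e, h1]
  rw [mul_inv_eq_iff_eq_mul] at h2
  exact h2

theorem fix_orth {X Y : List W} (h : D.Orth X Y) (hY : AllT T Y) {g : W} (hg : g ∈ Subgroup.closure {x | x ∈ Y})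
    {u : U} (hu : u ∈ D.sp X) : D.act g u = u :=
  D.act_fix hY hg (fun _ hx => D.orth_sp h hu (D.mem_sp hx))

theorem comm_cl {X Y : List W} (h : D.Orth X Y) (hX : AllT T X) (hY : AllT T Y) {g k : W}
    (hg : g ∈ Subgroup.closure {x | x ∈ X}) (hk : k ∈ Subgroup.closure {x | x ∈ Y}) : g * k = k * g := by
  have h1 : ∀ y ∈ Y, g * y = y * g := by
    intro y hy
    have : Subgroup.closure {x | x ∈ X} ≤ Subgroup.centralizer {y} := by
      rw [Subgroup.closure_le]
      intro x hx
      rw [SetLike.mem_coe, Subgroup.mem_centralizer_iff]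
      rintro _ rfl
      exact (D.comm_of_orth (hX x hx) (hY _ hy) (h x hx _ hy)).symm
    exact (Subgroup.mem_centralizer_iff.1 (this hg) y rfl).symm
  have : Subgroup.closure {x | x ∈ Y} ≤ Subgroup.centralizer {g} := by
    rw [Subgroup.closure_le]
    intro y hy
    rw [SetLike.mem_coe, Subgroup.mem_centralizer_iff]
    rintro _ rfl
    exact h1 y hy
  exact Subgroup.mem_centralizer_iff.1 (this hk) g rfl

theorem decomp {X Y : List W} (h : D.Orth X Y) (hX : AllT T X) (hY : AllT T Y) {g : W}
    (hg : g ∈ Subgroup.closure {x | x ∈ X ++ Y}) :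
    ∃ a ∈ Subgroup.closure {x | x ∈ X}, ∃ b ∈ Subgroup.closure {x | x ∈ Y}, g = a * b := by
  induction hg using Subgroup.closure_induction with
  | mem x hx =>
    rcases List.mem_append.1 hx with hx | hx
    · exact ⟨x, Subgroup.subset_closure hx, 1, one_mem _, by simp⟩
    · exact ⟨1, one_mem _, x, Subgroup.subset_closure hx, by simp⟩
  | one => exact ⟨1, one_mem _, 1, one_mem _, by simp⟩
  | mul g k _ _ h1 h2 =>
    obtain ⟨a, ha, b, hb, rfl⟩ := h1
    obtain ⟨c, hc, d, hd, rfl⟩ := h2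
    refine ⟨a * c, mul_mem ha hc, b * d, mul_mem hb hd, ?_⟩
    have := D.comm_cl h hX hY hc hb
    calc a * b * (c * d) = a * (b * c) * d := by group
      _ = a * (c * b) * d := by rw [this]
      _ = _ := by group
  | inv g _ h1 =>
    obtain ⟨a, ha, b, hb, rfl⟩ := h1
    refine ⟨a⁻¹, inv_mem ha, b⁻¹, inv_mem hb, ?_⟩
    rw [D.comm_cl h hX hY ha hb]; group

/-- a reflection with root in the first span lies in the first group -/
theorem mem_cl_of_sp {X Y : List W} (h : D.Orth X Y) (hX : AllT T X) (hY : AllT T Y) {y : W} (hy : y ∈ T)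
    (hg : y ∈ Subgroup.closure {x | x ∈ X ++ Y}) (hs : D.rt y ∈ D.sp X) :
    y ∈ Subgroup.closure {x | x ∈ X} := by
  obtain ⟨a, ha, b, hb, rfl⟩ := D.decomp h hX hY hg
  have : b = 1 := by
    refine D.faithful {x | x ∈ Y} hY b hb ?_
    intro x hx
    have hxs : D.rt x ∈ D.sp Y := D.mem_sp hx
    have h1 : D.act (a * b) (D.rt x) = D.rt x := by
      rw [D.act_T _ hy, (cf_eq_zero (D.ne0 hy)).2 (by rw [real_inner_comm]; exact D.orth_sp h hs hxs)]
      simp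
    rw [D.act_mul, D.fix_orth h.symm hX ha (D.act_sp hY hb hxs)] at h1
    exact h1
  rw [this, mul_one]; exact ha

theorem prod_split {X Y : List W} (h : D.Orth X Y) (hX : AllT T X) (hY : AllT T Y) {a b c d : W}
    (ha : a ∈ Subgroup.closure {x | x ∈ X}) (hc : c ∈ Subgroup.closure {x | x ∈ X})
    (hb : b ∈ Subgroup.closure {x | x ∈ Y}) (hd : d ∈ Subgroup.closure {x | x ∈ Y})
    (he : a * b = c * d) : a = c ∧ b = d := by
  have h1 : c⁻¹ * a = d * b⁻¹ := by
    rw [inv_mul_eq_iff_eq_mul, ← mul_assoc, ← he]; group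
  have h2 : c⁻¹ * a = 1 := by
    refine D.faithful {x | x ∈ X} hX _ (mul_mem (inv_mem hc) ha) ?_
    intro x hx
    rw [h1]
    exact D.fix_orth h hY (mul_mem hd (inv_mem hb)) (D.mem_sp hx)
  have h3 : a = c := by rw [inv_mul_eq_one] at h2; exact h2.symm
  refine ⟨h3, ?_⟩
  rw [h3] at he
  exact mul_left_cancel he

theorem root_split {X Y : List W} (h : D.Orth X Y) (hX : AllT T X) (hY : AllT T Y)
    (hdis : Disjoint (D.sp X) (D.sp Y)) {y : W} (hy : y ∈ T)
    (hg : y ∈ Subgroup.closure {x | x ∈ X ++ Y}) (hs : D.rt y ∈ D.sp (X ++ Y)) :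
    D.rt y ∈ D.sp X ∨ D.rt y ∈ D.sp Y := by
  obtain ⟨a, ha, b, hb, rfl⟩ := D.decomp h hX hY hg
  rw [sp_append, Submodule.mem_sup] at hs
  obtain ⟨u, hu, v, hv, huv⟩ := hs
  have h1 : D.act (a * b) u ∈ D.sp X := by
    rw [D.act_mul, D.fix_orth h hY hb hu]; exact D.act_sp hX ha hu
  have h2 : D.act (a * b) v ∈ D.sp Y := by
    rw [D.act_mul, D.fix_orth h.symm hX ha (D.act_sp hY hb hv)]; exact D.act_sp hY hb hv
  rw [D.act_T _ hy] at h1 h2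
  have hcf : cf (D.π u) (D.π (D.rt (a * b))) + cf (D.π v) (D.π (D.rt (a * b))) = 2 := by
    rw [← cf_add, ← map_add, huv, cf_self (D.ne0 hy)]
  by_cases hc : cf (D.π u) (D.π (D.rt (a * b))) = 0
  · right
    have hc' : cf (D.π v) (D.π (D.rt (a * b))) ≠ 0 := by intro h; rw [hc, h] at hcf; norm_num at hcf
    have h3 := sub_mem hv h2
    rw [sub_sub_cancel] at h3
    have h4 := (D.sp Y).smul_mem (cf (D.π v) (D.π (D.rt (a * b))))⁻¹ h3
    rwa [smul_smul, inv_mul_cancel₀ hc', one_smul] at h4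
  · left
    have h3 := sub_mem hu h1
    rw [sub_sub_cancel] at h3
    have h4 := (D.sp X).smul_mem (cf (D.π u) (D.π (D.rt (a * b))))⁻¹ h3
    rwa [smul_smul, inv_mul_cancel₀ hc, one_smul] at h4

theorem InLat_split {X Y : List W} (hdis : Disjoint (D.sp X) (D.sp Y)) {y : W}
    (hL : D.InLat (X ++ Y) y) (hs : D.rt y ∈ D.sp X) : D.InLat X y := by
  intro i
  have h1 := hL i
  rw [Lat_append, AddSubgroup.mem_sup] at h1
  obtain ⟨a, ha, b, hb, hab⟩ := h1
  have hb' : b ∈ D.sp X := by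
    have := sub_mem ((D.sp X).smul_mem (D.wt i y) hs) (D.Lat_le_sp i X ha)
    rw [← hab] at this
    simpa using this
  have hb0 := Submodule.disjoint_def.1 hdis b hb' (D.Lat_le_sp i Y hb)
  rw [← hab, hb0, add_zero]; exact ha

theorem Lat_comm (i : Bool) (X Y : List W) : D.Lat i (X ++ Y) = D.Lat i (Y ++ X) := by
  rw [Lat_append, Lat_append, sup_comm]

variable [FiniteDimensional ℝ U]

theorem MAIN (n : ℕ) : ∀ {X Y : List W}, X.length = n → AllT T X → AllT T Y → D.RC X → X.prod = Y.prod →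
    X.length = Y.length → (∀ Z, AllT T Z → Z.prod = X.prod → X.length ≤ Z.length) →
    (∀ y ∈ Y, y ∈ Subgroup.closure {x | x ∈ X}) → (∀ y ∈ Y, D.InLat X y) → HurwitzEquiv X Y := by
  classical
  induction n using Nat.strong_induction_on with
  | _ n IH =>
  intro X Y hn hX hY hR hp hlen hmin hcl hin
  by_cases hC : D.Conn X
  · exact D.AFF hX hR (D.line_of_conn hX hC) hY hp hlen hcl hin
  unfold Conn at hC
  push Not at hC
  obtain ⟨p, ⟨x₁, hx₁, hpx₁⟩, hclosed, x₂, hx₂, hpx₂⟩ := hC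
  have horth0 : ∀ x ∈ X, ∀ x' ∈ X, p x → ¬ p x' → ⟪D.π (D.rt x), D.π (D.rt x')⟫ = 0 := by
    intro x hx x' hx' h h'
    by_contra hne
    exact h' (hclosed x hx x' hx' h hne)
  obtain ⟨X1, hX1⟩ : ∃ X1, X1 = X.filter (fun x => decide (p x)) := ⟨_, rfl⟩
  obtain ⟨X2, hX2⟩ : ∃ X2, X2 = X.filter (fun x => !decide (p x)) := ⟨_, rfl⟩
  have hXX : HurwitzEquiv X (X1 ++ X2) := by
    rw [hX1, hX2]
    refine HurwitzEquiv.swap_comm X (fun x => decide (p x)) ?_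
    intro x hx y hy h1 h2
    exact D.comm_of_orth (hX x hx) (hX y hy) (horth0 x hx y hy (by simpa using h1) (by simpa using h2))
  have horth : D.Orth X1 X2 := by
    intro x hx y hy
    rw [hX1, List.mem_filter] at hx
    rw [hX2, List.mem_filter] at hy
    exact horth0 x hx.1 y hy.1 (by simpa using hx.2) (by simpa using hy.2)
  have hXs := (D.allT_iff hXX).1 hX
  have hT1 := allT_left hXs
  have hT2 := allT_right hXs
  obtain ⟨hR1, hR2, hdis⟩ := D.RC_append ((D.RC_iff hXX hX).1 hR)
  have hlX := hXX.length_eq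
  rw [List.length_append] at hlX
  have hl1 : 0 < X1.length := List.length_pos_of_mem (a := x₁) (by rw [hX1, List.mem_filter]; exact ⟨hx₁, by simpa using hpx₁⟩)
  have hl2 : 0 < X2.length := List.length_pos_of_mem (a := x₂) (by rw [hX2, List.mem_filter]; exact ⟨hx₂, by simpa using hpx₂⟩)
  have hcl' : ∀ y ∈ Y, y ∈ Subgroup.closure {x | x ∈ X1 ++ X2} := by
    rw [← hXX.closure_eq]; exact hcl
  have hin' : ∀ y ∈ Y, D.InLat (X1 ++ X2) y := fun y hy => (D.InLat_iff hXX hX y).1 (hin y hy)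
  have hroot : ∀ y ∈ Y, D.rt y ∈ D.sp X1 ∨ D.rt y ∈ D.sp X2 := fun y hy =>
    D.root_split horth hT1 hT2 hdis (hY y hy) (hcl' y hy) (D.sp_of_InLat (hin' y hy))
  obtain ⟨Y1, hY1⟩ : ∃ Y1, Y1 = Y.filter (fun y => decide (D.rt y ∈ D.sp X1)) := ⟨_, rfl⟩
  obtain ⟨Y2, hY2⟩ : ∃ Y2, Y2 = Y.filter (fun y => !decide (D.rt y ∈ D.sp X1)) := ⟨_, rfl⟩
  have hYY : HurwitzEquiv Y (Y1 ++ Y2) := by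
    rw [hY1, hY2]
    refine HurwitzEquiv.swap_comm Y (fun x => decide (D.rt x ∈ D.sp X1)) ?_
    intro x hx y hy h1 h2
    exact D.comm_of_orth (hY x hx) (hY y hy)
      (D.orth_sp horth (by simpa using h1) ((hroot y hy).resolve_left (by simpa using h2)))
  have m1 : ∀ y ∈ Y1, y ∈ Y ∧ D.rt y ∈ D.sp X1 := by
    intro y hy; rw [hY1, List.mem_filter] at hy; exact ⟨hy.1, by simpa using hy.2⟩
  have m2 : ∀ y ∈ Y2, y ∈ Y ∧ D.rt y ∈ D.sp X2 := by
    intro y hy; rw [hY2, List.mem_filter] at hy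
    exact ⟨hy.1, (hroot y hy.1).resolve_left (by simpa using hy.2)⟩
  have c1 : ∀ y ∈ Y1, y ∈ Subgroup.closure {x | x ∈ X1} := fun y hy =>
    D.mem_cl_of_sp horth hT1 hT2 (hY y (m1 y hy).1) (hcl' y (m1 y hy).1) (m1 y hy).2
  have c2 : ∀ y ∈ Y2, y ∈ Subgroup.closure {x | x ∈ X2} := by
    intro y hy
    refine D.mem_cl_of_sp horth.symm hT2 hT1 (hY y (m2 y hy).1) ?_ (m2 y hy).2
    have := hcl' y (m2 y hy).1
    convert this using 3
    simp [or_comm]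
  have hpp : X1.prod * X2.prod = Y1.prod * Y2.prod := by
    rw [← List.prod_append, ← List.prod_append, ← hXX.prod_eq, ← hYY.prod_eq, hp]
  obtain ⟨p1, p2⟩ := D.prod_split horth hT1 hT2 (a := X1.prod) (c := Y1.prod) (b := X2.prod) (d := Y2.prod)
    prod_mem (Subgroup.list_prod_mem _ c1) prod_mem (Subgroup.list_prod_mem _ c2) hpp
  have tY1 : AllT T Y1 := fun y hy => hY y (m1 y hy).1
  have tY2 : AllT T Y2 := fun y hy => hY y (m2 y hy).1
  have min1 : ∀ Z, AllT T Z → Z.prod = X1.prod → X1.length ≤ Z.length := by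
    intro Z hZ hZp
    have := hmin (Z ++ X2) (by intro z hz; rcases List.mem_append.1 hz with h | h; exacts [hZ z h, hT2 z h])
      (by rw [List.prod_append, hZp, hXX.prod_eq, List.prod_append])
    rw [List.length_append] at this
    omega
  have min2 : ∀ Z, AllT T Z → Z.prod = X2.prod → X2.length ≤ Z.length := by
    intro Z hZ hZp
    have := hmin (X1 ++ Z) (by intro z hz; rcases List.mem_append.1 hz with h | h; exacts [hT1 z h, hZ z h])
      (by rw [List.prod_append, hZp, hXX.prod_eq, List.prod_append])
    rw [List.length_append] at this
    omega
  have hlY := hYY.length_eq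
  rw [List.length_append] at hlY
  have le1 := min1 Y1 tY1 p1.symm
  have le2 := min2 Y2 tY2 p2.symm
  have r1 : HurwitzEquiv X1 Y1 := IH X1.length (by omega) rfl hT1 tY1 hR1 p1 (by omega) min1 c1
    (fun y hy => D.InLat_split hdis (hin' y (m1 y hy).1) (m1 y hy).2)
  have r2 : HurwitzEquiv X2 Y2 := IH X2.length (by omega) rfl hT2 tY2 hR2 p2 (by omega) min2 c2
    (fun y hy => D.InLat_split hdis.symm
      (fun i => by rw [D.Lat_comm]; exact hin' y (m2 y hy).1 i) (m2 y hy).2)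
  exact hXX.trans (((r1.appR X2).trans (r2.appL Y1)).trans hYY.symm)

end Datum


/-- Geometric set-up: an affine reflection group with a Coxeter system inside. -/
structure Setup (W : Type*) [Group W] (T : Set W) (E : Type*) [NormedAddCommGroup E]
    [InnerProductSpace ℝ E] (n : ℕ) where
  Φ : Set E
  isRoot : IsCrystRootSystem Φ
  φ : W →* Equiv.Perm E
  φ_inj : Function.Injective φ
  φ_mem : ∀ g, φ g ∈ AffWeylGroup Φ
  s : Fin n → W
  s_inj : Function.Injective s
  B : Type
  M : CoxeterMatrix B
  cs : CoxeterSystem M W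
  idx : B → Fin n
  s_idx : ∀ b, s (idx b) = cs.simple b
  idx_surj : Function.Surjective idx
  mem_T : ∀ t, t ∈ T ↔ cs.IsReflection t
  α : Fin n → E
  k : Fin n → ℤ
  α_mem : ∀ i, α i ∈ Φ
  φ_s : ∀ i, φ (s i) = sAff (α i) (k i)

namespace Setup
variable {W : Type*} [Group W] {T : Set W} {E : Type*} [NormedAddCommGroup E]
    [InnerProductSpace ℝ E] {n : ℕ} (S : Setup W T E n)

theorem sAff_apply' (a : E) (c : ℝ) (v : E) : sAff a c v = v - (⟪v, a⟫ - c) • coroot a := rfl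

theorem coroot_smul_eq (a : E) (c : ℝ) (v : E) : (⟪v, a⟫ - c) • coroot a
    = cf v a • a - (c * (2 / ⟪a, a⟫)) • a := by
  simp only [coroot, smul_smul, cf, ← sub_smul]
  congr 1
  ring

theorem exists_lin (p : Equiv.Perm E) (hp : p ∈ AffWeylGroup S.Φ) :
    ∃ L : E →ₗ[ℝ] E, (∀ v, p v = L v + p 0) ∧ (∀ a b, ⟪L a, L b⟫ = ⟪a, b⟫) ∧ ∀ a ∈ S.Φ, L a ∈ S.Φ := by
  -- generators and their products suffice since generators are involutions
  have hrefl : ∀ a ∈ S.Φ, ∃ L : E →ₗ[ℝ] E, (∀ v, L v = v - cf v a • a) ∧ (∀ x y, ⟪L x, L y⟫ = ⟪x, y⟫) ∧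
      ∀ x ∈ S.Φ, L x ∈ S.Φ := by
    intro a ha
    have h0 := S.isRoot.ne_zero a ha
    have h2 := (inner_self_pos' h0).ne'
    let L : E →ₗ[ℝ] E :=
      { toFun := fun v => v - cf v a • a
        map_add' := by intro x y; simp only [cf_add, add_smul]; abel
        map_smul' := by intro c x; simp only [cf_smul, mul_smul, smul_sub, RingHom.id_apply] }
    refine ⟨L, fun v => rfl, ?_, ?_⟩
    · intro x y
      change ⟪x - cf x a • a, y - cf y a • a⟫ = _
      simp only [inner_sub_left, inner_sub_right, real_inner_smul_left, real_inner_smul_right, cf,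
        real_inner_comm a y]
      rw [real_inner_comm y a]
      field_simp
      ring
    · intro x hx
      change x - cf x a • a ∈ _
      have := S.isRoot.refl_mem a ha x hx
      rw [sAffFun] at this
      have e := coroot_smul_eq a 0 x
      rw [e] at this
      simpa using this
  have key : ∀ p ∈ Submonoid.closure {g : Equiv.Perm E | ∃ α ∈ S.Φ, ∃ k : ℤ, g = sAff α k},
    ∃ L : E →ₗ[ℝ] E, (∀ v, p v = L v + p 0) ∧ (∀ a b, ⟪L a, L b⟫ = ⟪a, b⟫) ∧ ∀ a ∈ S.Φ, L a ∈ S.Φ := by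
    intro p hp
    induction hp using Submonoid.closure_induction with
    | mem x hx =>
      obtain ⟨a, ha, k, rfl⟩ := hx
      obtain ⟨L, h1, h2, h3⟩ := hrefl a ha
      refine ⟨L, ?_, h2, h3⟩
      intro v
      rw [sAff_apply', sAff_apply', coroot_smul_eq, coroot_smul_eq, h1, cf_zero]
      simp only [zero_smul]
      abel
    | one => exact ⟨LinearMap.id, by simp, by simp, by simp⟩
    | mul x y _ _ hx hy =>
      obtain ⟨L, h1, h2, h3⟩ := hx
      obtain ⟨L', h1', h2', h3'⟩ := hy
      refine ⟨L ∘ₗ L', ?_, ?_, ?_⟩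
      · intro v
        rw [Equiv.Perm.mul_apply, Equiv.Perm.mul_apply, h1' v, h1 (L' v + y 0), h1 (y 0), map_add]
        simp only [LinearMap.comp_apply]
        abel
      · intro a b; simp [h2, h2']
      · intro a ha; exact h3 _ (h3' _ ha)
  apply key
  have : (AffWeylGroup S.Φ).toSubmonoid = Submonoid.closure {g : Equiv.Perm E | ∃ α ∈ S.Φ, ∃ k : ℤ, g = sAff α k} := by
    rw [AffWeylGroup, Subgroup.closure_toSubmonoid]
    congr 1
    apply Set.union_eq_self_of_subset_right
    rintro x ⟨a, ha, k, hk⟩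
    refine ⟨a, ha, k, ?_⟩
    rw [← inv_inv x, hk]
    rfl
  rw [← this]
  exact hp

noncomputable def L (g : W) : E →ₗ[ℝ] E := (S.exists_lin (S.φ g) (S.φ_mem g)).choose

theorem φ_eq (g : W) (v : E) : S.φ g v = S.L g v + S.φ g 0 :=
  (S.exists_lin (S.φ g) (S.φ_mem g)).choose_spec.1 v
theorem L_inner (g : W) (a b : E) : ⟪S.L g a, S.L g b⟫ = ⟪a, b⟫ :=
  (S.exists_lin (S.φ g) (S.φ_mem g)).choose_spec.2.1 a b
theorem L_Φ (g : W) {a : E} (ha : a ∈ S.Φ) : S.L g a ∈ S.Φ :=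
  (S.exists_lin (S.φ g) (S.φ_mem g)).choose_spec.2.2 a ha

theorem L_apply (g : W) (v : E) : S.L g v = S.φ g v - S.φ g 0 := by rw [S.φ_eq g v]; abel

theorem φ_add (g : W) (a b : E) : S.φ g (a + b) = S.φ g a + S.L g b := by
  rw [S.φ_eq g (a + b), S.φ_eq g a, map_add]; abel

theorem φ_mul (g h : W) (v : E) : S.φ (g * h) v = S.φ g (S.φ h v) := by rw [map_mul]; rfl

noncomputable def lin : W →* Module.End ℝ E where
  toFun := S.L
  map_one' := by ext v; simp [L_apply]
  map_mul' := by
    intro g h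
    ext v
    change _ = S.L g (S.L h v)
    rw [L_apply, S.φ_mul, S.φ_mul, S.φ_eq h v, add_comm, S.φ_add]
    abel

theorem lin_def (g : W) (v : E) : S.lin g v = S.L g v := rfl

theorem lin_fin (g : W) : ∃ h : ℕ, 0 < h ∧ S.lin g ^ h = 1 := by
  have : Finite S.Φ := S.isRoot.finite
  obtain ⟨a, b, hab, he⟩ := Finite.exists_ne_map_eq_of_infinite
    (fun (k : ℕ) => (fun x : S.Φ => (⟨S.L (g ^ k) x, S.L_Φ _ x.2⟩ : S.Φ)))
  have main : ∀ a b : ℕ, a < b → (fun x : S.Φ => (⟨S.L (g ^ a) x, S.L_Φ _ x.2⟩ : S.Φ)) =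
      (fun x : S.Φ => (⟨S.L (g ^ b) x, S.L_Φ _ x.2⟩ : S.Φ)) → ∃ h : ℕ, 0 < h ∧ S.lin g ^ h = 1 := by
    intro a b hab he
    refine ⟨b - a, by omega, ?_⟩
    have h1 : S.lin (g ^ a) = S.lin (g ^ b) := by
      apply LinearMap.ext_on S.isRoot.spanning
      intro x hx
      have := congrFun he ⟨x, hx⟩
      exact congrArg Subtype.val this
    rw [← map_pow]
    have h2 : g ^ (b - a) = (g ^ a)⁻¹ * g ^ b := by
      rw [eq_inv_mul_iff_mul_eq, ← pow_add]; congr 1; omega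
    rw [h2, map_mul, ← h1, ← map_mul, inv_mul_cancel, map_one]
  rcases lt_or_gt_of_ne hab with h | h
  · exact main a b h he
  · exact main b a h he.symm

theorem ne0 (i : Fin n) : S.α i ≠ 0 := S.isRoot.ne_zero _ (S.α_mem i)

theorem lin_s (i : Fin n) (v : E) : S.lin (S.s i) v = v - cf v (S.α i) • S.α i := by
  rw [lin_def, L_apply, S.φ_s, sAff_apply', sAff_apply', coroot_smul_eq, coroot_smul_eq, cf_zero]
  simp only [zero_smul]
  abel

theorem s_sq (i : Fin n) : S.s i * S.s i = 1 := by
  obtain ⟨b, rfl⟩ := S.idx_surj i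
  rw [S.s_idx]; simp

theorem induct {p : W → Prop} (w : W) (hs : ∀ i, p (S.s i)) (h1 : p 1)
    (hm : ∀ a b, p a → p b → p (a * b)) : p w :=
  S.cs.simple_induction w (fun b => by rw [← S.s_idx]; exact hs _) h1 hm

theorem transl {g : W} {μ : E} (h : ∀ v, S.φ g v = v + μ) (z : ℤ) (v : E) :
    S.φ (g ^ z) v = v + z • μ := by
  have hinv : ∀ v, S.φ g⁻¹ v = v - μ := by
    intro v
    rw [map_inv]
    rw [Equiv.Perm.inv_eq_iff_eq, h]; abel
  induction z using Int.induction_on generalizing v with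
  | zero => simp
  | succ i ih => rw [zpow_add_one, S.φ_mul, h, ih, add_smul, one_smul]; abel
  | pred i ih => rw [zpow_sub_one, S.φ_mul, hinv, ih, sub_smul, one_smul]; abel

theorem nonpar {i j : Fin n} (hij : i ≠ j) {m : ℕ} (hm : m ≠ 0) (h : (S.s i * S.s j) ^ m = 1)
    (c d : ℝ) (hcd : c • S.α i + d • S.α j = 0) : c = 0 ∧ d = 0 := by
  by_contra hne
  have hi := S.ne0 i
  have hj := S.ne0 j
  have hc : c ≠ 0 := by
    intro hc
    apply hne
    subst hc
    simpa [hj] using hcd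
  have e : S.α i = (-(d / c)) • S.α j := by
    have : S.α i = c⁻¹ • (c • S.α i) := by rw [smul_smul, inv_mul_cancel₀ hc, one_smul]
    rw [this, eq_neg_of_add_eq_zero_left hcd, smul_neg, smul_smul, neg_smul]
    congr 2; field_simp
  have hε := S.isRoot.reduced _ (S.α_mem j) _ (e ▸ S.α_mem i)
  generalize -(d / c) = ε at e hε
  have hj2 := (inner_self_pos' hj).ne'
  obtain ⟨μ, hμ⟩ : ∃ μ : E, ∀ v, S.φ (S.s i * S.s j) v = v + μ := by
    have : ∃ c : ℝ, ∀ v, S.φ (S.s i) v = v - cf v (S.α j) • S.α j + c • S.α j := by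
      refine ⟨ε * (S.k i * (2 / ⟪S.α j, S.α j⟫)), ?_⟩
      intro v
      rw [S.φ_s, sAff_apply', coroot_smul_eq, e]
      rcases hε with rfl | rfl
      · simp only [one_smul, one_mul]; abel
      · simp only [neg_smul, one_smul, cf_neg_right, inner_neg_neg, smul_neg, neg_mul, one_mul]; simp; abel
    obtain ⟨c1, h1⟩ := this
    refine ⟨(c1 - (S.k j * (2 / ⟪S.α j, S.α j⟫))) • S.α j, ?_⟩
    intro v
    rw [S.φ_mul, h1, S.φ_s, sAff_apply', coroot_smul_eq]
    simp only [cf_sub, cf_smul, cf_self hj]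
    module
  have h2 := S.transl hμ m 0
  rw [zpow_natCast, h] at h2
  simp only [map_one, Equiv.Perm.coe_one, id_eq, zero_add] at h2
  have hμ0 : μ = 0 := by
    have h3 : (m : ℤ) • μ = 0 := h2.symm
    rw [← Int.cast_smul_eq_zsmul ℝ] at h3
    rcases smul_eq_zero.mp h3 with h4 | h4
    · exfalso; apply hm; exact_mod_cast h4
    · exact h4
  have h5 : S.s i * S.s j = 1 := by
    apply S.φ_inj
    ext v
    rw [hμ, hμ0]; simp
  apply hij
  apply S.s_inj
  have := S.s_sq j
  exact mul_right_cancel (h5.trans this.symm)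

theorem det_ne {i j : Fin n} (h : ∀ c d : ℝ, c • S.α i + d • S.α j = 0 → c = 0 ∧ d = 0) :
    4 - cf (S.α i) (S.α j) * cf (S.α j) (S.α i) ≠ 0 := by
  intro h0
  have hi := (inner_self_pos' (S.ne0 i)).ne'
  have hj := (inner_self_pos' (S.ne0 j)).ne'
  have h1 : ⟪S.α i + (-(cf (S.α i) (S.α j) / 2)) • S.α j, S.α i + (-(cf (S.α i) (S.α j) / 2)) • S.α j⟫ = 0 := by
    have : ⟪S.α i + (-(cf (S.α i) (S.α j) / 2)) • S.α j, S.α i + (-(cf (S.α i) (S.α j) / 2)) • S.α j⟫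
      = ⟪S.α i, S.α i⟫ / 4 * (4 - cf (S.α i) (S.α j) * cf (S.α j) (S.α i)) := by
      simp only [inner_add_left, inner_add_right, real_inner_smul_left, real_inner_smul_right, cf,
        real_inner_comm (S.α i) (S.α j)]
      field_simp
      ring
    rw [this, h0, mul_zero]
  have h2 := h 1 (-(cf (S.α i) (S.α j) / 2)) (by rw [one_smul]; exact inner_self_eq_zero.mp h1)
  exact one_ne_zero h2.1

end Setup


namespace Setup
variable {W : Type*} [Group W] {T : Set W} {E : Type*} [NormedAddCommGroup E]
    [InnerProductSpace ℝ E] {n : ℕ} (S : Setup W T E n)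

noncomputable def π : (Fin n → ℝ) →ₗ[ℝ] E := Fintype.linearCombination ℝ S.α

def e (i : Fin n) : Fin n → ℝ := Pi.single i 1

theorem π_e (i : Fin n) : S.π (e i) = S.α i := by
  rw [π, e, Fintype.linearCombination_apply_single, one_smul]

/-- the coefficient occurring in `ρ i` -/
noncomputable def co (i : Fin n) (v : (Fin n → ℝ) × (Fin n → ℝ)) : ℝ := cf (S.π v.1) (S.α i) + v.2 i

theorem co_add (i : Fin n) (v w : (Fin n → ℝ) × (Fin n → ℝ)) : S.co i (v + w) = S.co i v + S.co i w := by
  simp only [co, Prod.fst_add, map_add, cf_add, Prod.snd_add, Pi.add_apply]; ring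
theorem co_smul (i : Fin n) (c : ℝ) (v : (Fin n → ℝ) × (Fin n → ℝ)) : S.co i (c • v) = c * S.co i v := by
  simp only [co, Prod.smul_fst, map_smul, cf_smul, Prod.smul_snd, Pi.smul_apply, smul_eq_mul]; ring

def E0 (i : Fin n) : (Fin n → ℝ) × (Fin n → ℝ) := (e i, 0)

theorem co_E0 (i j : Fin n) : S.co i (E0 j) = cf (S.α j) (S.α i) := by
  simp [co, E0, π_e]

noncomputable def ρ (i : Fin n) : Module.End ℝ ((Fin n → ℝ) × (Fin n → ℝ)) where
  toFun v := v - S.co i v • E0 i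
  map_add' v w := by rw [co_add, add_smul]; abel
  map_smul' c v := by rw [co_smul, mul_smul, smul_sub, RingHom.id_apply]

theorem ρ_apply (i : Fin n) (v : (Fin n → ℝ) × (Fin n → ℝ)) : S.ρ i v = v - S.co i v • E0 i := rfl

theorem ρ_sq (i : Fin n) : S.ρ i * S.ρ i = 1 := by
  apply LinearMap.ext
  intro v
  simp only [Module.End.mul_apply, Module.End.one_apply, ρ_apply, sub_eq_add_neg, ← neg_smul, co_add, co_smul, co_E0,
      cf_self (S.ne0 i)]
  module

theorem π_ρ (i : Fin n) (v : (Fin n → ℝ) × (Fin n → ℝ)) (hv : v.2 = 0) :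
    (S.ρ i v).2 = 0 ∧ S.π (S.ρ i v).1 = S.lin (S.s i) (S.π v.1) := by
  rw [ρ_apply, lin_s]
  constructor
  · simp [E0, hv]
  · simp [E0, co, hv, π_e]

theorem liftable : S.M.IsLiftable (fun b => S.ρ (S.idx b)) := by
  intro b c
  change (S.ρ (S.idx b) * S.ρ (S.idx c)) ^ S.M b c = 1
  by_cases hbc : S.idx b = S.idx c
  · rw [hbc, ρ_sq, one_pow]
  by_cases hm : S.M b c = 0
  · rw [hm, pow_zero]
  have hW : (S.s (S.idx b) * S.s (S.idx c)) ^ S.M b c = 1 := by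
    rw [S.s_idx, S.s_idx]; exact S.cs.simple_mul_simple_pow b c
  have hnp := S.nonpar hbc hm hW
  have hdet := S.det_ne hnp
  generalize S.M b c = m at *
  generalize S.idx b = i at *
  generalize S.idx c = j at *
  -- vectors fixed by both
  have hfix : ∀ v, S.co i v = 0 → S.co j v = 0 → ∀ m : ℕ, ((S.ρ i * S.ρ j) ^ m) v = v := by
    intro v h1 h2 m
    induction m with
    | zero => simp
    | succ m ih =>
      rw [pow_succ, Module.End.mul_apply, Module.End.mul_apply, S.ρ_apply j, h2, zero_smul, sub_zero, S.ρ_apply i, h1,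
        zero_smul, sub_zero, ih]
  have hspan : ∀ v, ∀ m : ℕ, ∃ x y : ℝ, ((S.ρ i * S.ρ j) ^ m) v = v + x • E0 i + y • E0 j := by
    intro v m
    induction m with
    | zero => exact ⟨0, 0, by simp⟩
    | succ m ih =>
      obtain ⟨x, y, h⟩ := ih
      rw [pow_succ', Module.End.mul_apply, h, Module.End.mul_apply, S.ρ_apply j, S.ρ_apply i]
      refine ⟨x - S.co i (v + x • E0 i + y • E0 j - S.co j (v + x • E0 i + y • E0 j) • E0 j), y - S.co j (v + x • E0 i + y • E0 j), ?_⟩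
      module
  have hπ : ∀ v, v.2 = 0 → ∀ m : ℕ, (((S.ρ i * S.ρ j) ^ m) v).2 = 0 ∧
      S.π (((S.ρ i * S.ρ j) ^ m) v).1 = S.lin ((S.s i * S.s j) ^ m) (S.π v.1) := by
    intro v hv m
    induction m with
    | zero => simp [hv]
    | succ m ih =>
      have h1 := S.π_ρ j _ ih.1
      have h2 := S.π_ρ i _ h1.1
      rw [pow_succ', Module.End.mul_apply, Module.End.mul_apply]
      refine ⟨h2.1, ?_⟩
      rw [h2.2, h1.2, ih.2, pow_succ', map_mul, map_mul]
      rfl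
  have hU : ∀ v, v.2 = 0 → ((S.ρ i * S.ρ j) ^ m) v = v := by
    intro v hv
    obtain ⟨x, y, h⟩ := hspan v m
    have h2 := (hπ v hv m).2
    rw [hW, map_one, Module.End.one_apply, h] at h2
    simp only [Prod.fst_add, Prod.smul_fst, map_add, map_smul, E0, π_e] at h2
    have h3 := hnp x y (by
      have : S.π v.1 + (x • S.α i + y • S.α j) = S.π v.1 := by rw [← add_assoc]; exact h2
      simpa using this)
    rw [h, h3.1, h3.2]; simp
  apply LinearMap.ext
  intro v
  rw [Module.End.one_apply]
  let D := 4 - cf (S.α i) (S.α j) * cf (S.α j) (S.α i)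
  let p := S.co i v
  let q := S.co j v
  let x := (2 * p - cf (S.α j) (S.α i) * q) / D
  let y := (2 * q - cf (S.α i) (S.α j) * p) / D
  have e1 : v = (v + (-x) • E0 i + (-y) • E0 j) + (x • E0 i + y • E0 j) := by module
  have hDD : D ≠ 0 := hdet
  rw [e1, map_add, hU (x • E0 i + y • E0 j) (by simp [E0]), hfix _ _ _ m]
  · simp only [co_add, co_smul, co_E0, cf_self (S.ne0 i)]
    have : S.co i v = p := rfl
    rw [this]
    simp only [x, y]
    field_simp
    simp only [D]; ring
  · simp only [co_add, co_smul, co_E0, cf_self (S.ne0 j)]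
    have : S.co j v = q := rfl
    rw [this]
    simp only [x, y]
    field_simp
    simp only [D]; ring

noncomputable def ρh : W →* Module.End ℝ ((Fin n → ℝ) × (Fin n → ℝ)) :=
  S.cs.lift ⟨_, S.liftable⟩

theorem ρh_s (i : Fin n) : S.ρh (S.s i) = S.ρ i := by
  obtain ⟨b, rfl⟩ := S.idx_surj i
  rw [S.s_idx, ρh]
  exact S.cs.lift_apply_simple S.liftable b

theorem ρh_mul (g h : W) (v) : S.ρh (g * h) v = S.ρh g (S.ρh h v) := by rw [map_mul]; rfl

theorem ρh_snd (g : W) : ∀ v, (S.ρh g v).2 = v.2 := by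
  induction g using S.induct with
  | hs i => intro v; rw [ρh_s, ρ_apply]; simp [E0]
  | h1 => simp
  | hm a b ha hb => intro v; rw [ρh_mul, ha, hb]

noncomputable def act : W →* Module.End ℝ (Fin n → ℝ) where
  toFun g := LinearMap.fst ℝ _ _ ∘ₗ S.ρh g ∘ₗ LinearMap.inl ℝ _ _
  map_one' := by
    apply LinearMap.ext; intro u; simp
  map_mul' g h := by
    apply LinearMap.ext; intro u
    rw [Module.End.mul_apply]
    simp only [LinearMap.comp_apply, LinearMap.inl_apply, LinearMap.fst_apply, ρh_mul]
    congr 2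
    ext1
    · rfl
    · rw [ρh_snd]

theorem ρh_inl (g : W) (u : Fin n → ℝ) : S.ρh g (u, 0) = (S.act g u, 0) := by
  ext1
  · rfl
  · rw [ρh_snd]

theorem act_mul (g h : W) (u : Fin n → ℝ) : S.act (g * h) u = S.act g (S.act h u) := by
  rw [map_mul]; rfl
theorem lin_mul (g h : W) (u : E) : S.lin (g * h) u = S.lin g (S.lin h u) := by
  rw [map_mul]; rfl

theorem act_s (i : Fin n) (u : Fin n → ℝ) : S.act (S.s i) u = u - cf (S.π u) (S.α i) • e i := by
  have h := S.ρh_inl (S.s i) u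
  rw [ρh_s, ρ_apply] at h
  have := congrArg Prod.fst h
  simpa [co, E0] using this.symm

theorem π_act (g : W) : ∀ u, S.π (S.act g u) = S.lin g (S.π u) := by
  induction g using S.induct with
  | hs i => intro u; rw [act_s, lin_s]; simp [π_e]
  | h1 => simp
  | hm a b ha hb => intro v; rw [act_mul, ha, hb, lin_mul]

theorem act_inv_act (g : W) (u : Fin n → ℝ) : S.act g (S.act g⁻¹ u) = u := by
  rw [← act_mul]; simp
theorem lin_inv_lin (g : W) (u : E) : S.lin g (S.lin g⁻¹ u) = u := by
  rw [← lin_mul]; simp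
theorem cf_lin (g : W) (a b : E) : cf (S.lin g a) (S.lin g b) = cf a b := by
  simp only [cf, lin_def, L_inner]

theorem cf_lin_inv (g : W) (a b : E) : cf (S.lin g⁻¹ a) b = cf a (S.lin g b) := by
  rw [← S.cf_lin g, lin_inv_lin]

theorem mem_T_iff (t : W) : t ∈ T ↔ ∃ p : W × Fin n, t = p.1 * S.s p.2 * p.1⁻¹ := by
  rw [S.mem_T]
  constructor
  · rintro ⟨g, b, h⟩
    exact ⟨(g, S.idx b), by rw [h, S.s_idx]⟩
  · rintro ⟨⟨g, i⟩, h⟩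
    obtain ⟨b, rfl⟩ := S.idx_surj i
    exact ⟨g, b, by rw [h, S.s_idx]⟩

/-- `x` is a root for the reflection `t` -/
def IsRt (t : W) (x : Fin n → ℝ) : Prop := ∃ g i, t = g * S.s i * g⁻¹ ∧ x = S.act g (e i)

theorem IsRt.act_T {S : Setup W T E n} {t : W} {x : Fin n → ℝ} (h : S.IsRt t x) (u : Fin n → ℝ) :
    S.act t u = u - cf (S.π u) (S.π x) • x := by
  obtain ⟨g, i, rfl, rfl⟩ := h
  rw [act_mul, act_mul, act_s, map_sub, map_smul, act_inv_act, π_act, π_act, cf_lin_inv, π_e]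

theorem IsRt.lin_T {S : Setup W T E n} {t : W} {x : Fin n → ℝ} (h : S.IsRt t x) (u : E) :
    S.lin t u = u - cf u (S.π x) • S.π x := by
  obtain ⟨g, i, rfl, rfl⟩ := h
  rw [lin_mul, lin_mul, lin_s, map_sub, map_smul, lin_inv_lin, π_act, cf_lin_inv, π_e]

theorem IsRt.π_mem {S : Setup W T E n} {t : W} {x : Fin n → ℝ} (h : S.IsRt t x) : S.π x ∈ S.Φ := by
  obtain ⟨g, i, rfl, rfl⟩ := h
  rw [π_act, π_e]; exact S.L_Φ g (S.α_mem i)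

theorem IsRt.conj {S : Setup W T E n} {t : W} {x : Fin n → ℝ} (h : S.IsRt t x) (g : W) :
    S.IsRt (g * t * g⁻¹) (S.act g x) := by
  obtain ⟨g', i, rfl, rfl⟩ := h
  exact ⟨g * g', i, by group, by rw [act_mul]⟩

theorem IsRt.uniq {S : Setup W T E n} {t : W} {x y : Fin n → ℝ} (h : S.IsRt t x) (h' : S.IsRt t y) :
    x = y ∨ x = -y := by
  have h1 := (h.act_T x).symm.trans (h'.act_T x)
  have hx := S.isRoot.ne_zero _ h.π_mem
  rw [cf_self hx] at h1
  have h2 : (2 : ℝ) • x = cf (S.π x) (S.π y) • y := by simpa using h1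
  generalize cf (S.π x) (S.π y) = c at h2
  have h3 : x = (c / 2) • y := by
    rw [div_eq_inv_mul, mul_smul, ← h2, smul_smul]; norm_num
  have h4 : S.π x = (c / 2) • S.π y := by rw [← map_smul, ← h3]
  rcases S.isRoot.reduced _ h'.π_mem (c / 2) (h4 ▸ h.π_mem) with h5 | h5
  · left; rw [h3, h5, one_smul]
  · right; rw [h3, h5, neg_smul, one_smul]

open Classical in
noncomputable def rt (t : W) : Fin n → ℝ :=
  if h : ∃ x, S.IsRt t x then h.choose else 0

theorem rt_spec {t : W} (ht : t ∈ T) : S.IsRt t (S.rt t) := by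
  obtain ⟨⟨g, i⟩, h⟩ := (S.mem_T_iff t).mp ht
  have h' : ∃ x, S.IsRt t x := ⟨_, g, i, h, rfl⟩
  rw [rt, dif_pos h']
  exact h'.choose_spec

/-- the affine functional attached to a vector -/
noncomputable def A (u : Fin n → ℝ) (v : E) : ℝ := ⟪v, S.π u⟫ - ∑ i, u i * S.k i

theorem A_sub (u u' : Fin n → ℝ) (v : E) : S.A (u - u') v = S.A u v - S.A u' v := by
  simp only [A, map_sub, inner_sub_right, Pi.sub_apply, sub_mul, Finset.sum_sub_distrib]; ring
theorem A_smul (c : ℝ) (u : Fin n → ℝ) (v : E) : S.A (c • u) v = c * S.A u v := by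
  simp only [A, map_smul, real_inner_smul_right, Pi.smul_apply, smul_eq_mul, mul_assoc, ← Finset.mul_sum]; ring
theorem A_neg (u : Fin n → ℝ) (v : E) : S.A (-u) v = - S.A u v := by
  rw [← neg_one_smul ℝ u, A_smul]; ring
theorem A_add (u u' : Fin n → ℝ) (v : E) : S.A (u + u') v = S.A u v + S.A u' v := by
  rw [← sub_neg_eq_add, A_sub, A_neg]; ring
theorem A_e (i : Fin n) (v : E) : S.A (e i) v = ⟪v, S.α i⟫ - S.k i := by
  rw [A, π_e, Finset.sum_eq_single i]
  · simp [e]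
  · intro j _ hj; simp [e, hj]
  · simp
theorem A_trans (u : Fin n → ℝ) (v w : E) : S.A u (v + w) = S.A u v + ⟪w, S.π u⟫ := by
  simp only [A, inner_add_left]; ring

theorem A_act (g : W) : ∀ u v, S.A (S.act g u) (S.φ g v) = S.A u v := by
  induction g using S.induct with
  | hs i =>
    intro u v
    have h2 := (inner_self_pos' (S.ne0 i)).ne'
    rw [act_s, A_sub, A_smul, S.φ_s, sAff_apply', A_e, sub_eq_add_neg v, A_trans, inner_neg_left, inner_add_left, inner_neg_left]
    simp only [coroot, real_inner_smul_left, cf, real_inner_comm (S.π u) (S.α i)]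
    field_simp
    ring
  | h1 => simp
  | hm a b ha hb => intro u v; rw [act_mul, φ_mul, ha, hb]

theorem lin_coroot (g : W) (a : E) : S.lin g (coroot a) = coroot (S.lin g a) := by
  simp only [coroot, map_smul, lin_def, L_inner]

theorem IsRt.φ_T {S : Setup W T E n} {t : W} {x : Fin n → ℝ} (h : S.IsRt t x) (v : E) :
    S.φ t v = v - S.A x v • coroot (S.π x) := by
  obtain ⟨g, i, rfl, rfl⟩ := h
  have h1 : S.φ g (S.φ g⁻¹ v) = v := by rw [← φ_mul]; simp
  have h2 : S.A (e i) (S.φ g⁻¹ v) = S.A (S.act g (e i)) v := by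
    rw [← S.A_act g, h1]
  rw [φ_mul, φ_mul, S.φ_s, sAff_apply', ← A_e, h2, sub_eq_add_neg, φ_add, h1, ← S.lin_def, map_neg, map_smul,
    lin_coroot, π_act, π_e, sub_eq_add_neg]

theorem IsRt.inj {S : Setup W T E n} {t t' : W} {x x' : Fin n → ℝ} (h : S.IsRt t x) (h' : S.IsRt t' x')
    (hx : x = x' ∨ x = -x') : t = t' := by
  apply S.φ_inj
  ext v
  rw [h.φ_T, h'.φ_T]
  rcases hx with rfl | rfl
  · rfl
  · rw [A_neg, map_neg]; simp [coroot]

end Setup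


namespace Setup
variable {W : Type*} [Group W] {T : Set W} {E : Type*} [NormedAddCommGroup E]
    [InnerProductSpace ℝ E] {n : ℕ} (S : Setup W T E n)

noncomputable def c (i : Bool) (j : Fin n) : ℝ := if i then 2 / ⟪S.α j, S.α j⟫ else 1

theorem c_int (b : Bool) (i j : Fin n) : ∃ z : ℤ, S.c b j * cf (S.α j) (S.α i) = z * S.c b i := by
  have hi := (inner_self_pos' (S.ne0 i)).ne'
  have hj := (inner_self_pos' (S.ne0 j)).ne'
  cases b with
  | false =>
    obtain ⟨z, hz⟩ := S.isRoot.cryst _ (S.α_mem i) _ (S.α_mem j)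
    exact ⟨z, by simp only [c, cf]; simpa using hz⟩
  | true =>
    obtain ⟨z, hz⟩ := S.isRoot.cryst _ (S.α_mem j) _ (S.α_mem i)
    refine ⟨z, ?_⟩
    rw [← hz]
    simp only [c, cf, if_true, real_inner_comm (S.α i) (S.α j)]
    field_simp

/-- lattice in the extended space -/
def InLam (b : Bool) (v : (Fin n → ℝ) × (Fin n → ℝ)) : Prop :=
  ∀ i, (∃ z : ℤ, v.1 i = z * S.c b i) ∧ ∃ z : ℤ, v.2 i = z * S.c b i

theorem co_int {b : Bool} {v : (Fin n → ℝ) × (Fin n → ℝ)} (h : S.InLam b v) (i : Fin n) :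
    ∃ z : ℤ, S.co i v = z * S.c b i := by
  choose z1 hz1 using fun i => (h i).1
  choose z2 hz2 using fun i => (h i).2
  choose w hw using fun j => S.c_int b i j
  refine ⟨∑ j, z1 j * w j + z2 i, ?_⟩
  rw [co, hz2, π, Fintype.linearCombination_apply, cf_sum]
  push_cast
  rw [add_mul, Finset.sum_mul]
  congr 1
  apply Finset.sum_congr rfl
  intro j _
  rw [cf_smul, hz1, mul_assoc, hw, mul_assoc]

theorem InLam_ρh {b : Bool} (g : W) : ∀ v, S.InLam b v → S.InLam b (S.ρh g v) := by
  induction g using S.induct with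
  | hs i =>
    intro v hv
    obtain ⟨z, hz⟩ := S.co_int hv i
    rw [ρh_s, ρ_apply]
    intro j
    obtain ⟨⟨z1, h1⟩, z2, h2⟩ := hv j
    constructor
    · by_cases hij : j = i
      · subst hij
        refine ⟨z1 - z, ?_⟩
        simp only [E0, e, Prod.fst_sub, Prod.smul_fst, Pi.sub_apply, Pi.smul_apply, Pi.single_eq_same, smul_eq_mul, h1, hz]
        push_cast; ring
      · refine ⟨z1, ?_⟩
        simp [E0, e, hij, h1]
    · exact ⟨z2, by simp [E0, h2]⟩
  | h1 => simp
  | hm a b ha hb => intro v hv; rw [ρh_mul]; exact ha _ (hb _ hv)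

theorem InLam_E0 (i : Fin n) : S.InLam false (E0 i) := by
  intro j
  constructor
  · by_cases hij : j = i
    · subst hij; exact ⟨1, by simp [E0, e, c]⟩
    · exact ⟨0, by simp [E0, e, hij]⟩
  · exact ⟨0, by simp [E0]⟩

theorem IsRt.int {S : Setup W T E n} {t : W} {x : Fin n → ℝ} (h : S.IsRt t x) (j : Fin n) : ∃ z : ℤ, x j = z := by
  obtain ⟨g, i, rfl, rfl⟩ := h
  have h1 := S.InLam_ρh g _ (S.InLam_E0 i)
  rw [E0, ρh_inl] at h1
  obtain ⟨z, hz⟩ := (h1 j).1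
  exact ⟨z, by simpa [c] using hz⟩

theorem IsRt.neg_eq {S : Setup W T E n} {t t' : W} {x y r : Fin n → ℝ} (h : S.IsRt t x) (h' : S.IsRt t' y)
    (hr : S.π r = 0) (hy : y = x + r ∨ y = -(x + r)) :
    ∃ κ : ℤ, (∀ v, S.φ (t * t') v = v + (κ : ℝ) • coroot (S.π x)) ∧
      ∀ u, S.act (t * t') u = u - cf (S.π u) (S.π x) • r := by
  have hx0 := S.isRoot.ne_zero _ h.π_mem
  have hrint : ∀ j, ∃ z : ℤ, r j = z := by
    intro j
    obtain ⟨z, hz⟩ := h.int j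
    obtain ⟨z', hz'⟩ := h'.int j
    rcases hy with hy | hy
    · refine ⟨z' - z, ?_⟩
      have := congrFun hy j
      simp only [Pi.add_apply] at this
      push_cast; linarith
    · refine ⟨-z' - z, ?_⟩
      have := congrFun hy j
      simp only [Pi.neg_apply, Pi.add_apply] at this
      push_cast; linarith
  choose z hz using hrint
  have hA : ∀ v, S.A r v = ((-∑ i, z i * S.k i : ℤ) : ℝ) := by
    intro v
    rw [A, hr]; push_cast; simp [hz]
  refine ⟨-∑ i, z i * S.k i, ?_, ?_⟩
  · intro v
    have h1 : S.φ t' v = v - (S.A x v + S.A r v) • coroot (S.π x) := by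
      rw [h'.φ_T]
      rcases hy with hy | hy
      · rw [hy, A_add, map_add, hr, add_zero]
      · rw [hy, A_neg, map_neg, A_add, map_add, hr, add_zero]; simp [coroot]; module
    have h2 : ⟪coroot (S.π x), S.π x⟫ = 2 := by
      have := (inner_self_pos' hx0).ne'
      simp only [coroot, real_inner_smul_left]; field_simp
    rw [φ_mul, h.φ_T, h1, sub_eq_add_neg v, A_trans, ← hA v, inner_neg_left, real_inner_smul_left, h2]
    module
  · intro u
    have h1 : S.act t' u = u - cf (S.π u) (S.π x) • (x + r) := by
      rw [h'.act_T]
      rcases hy with hy | hy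
      · rw [hy, map_add, hr, add_zero]
      · rw [hy, map_neg, map_add, hr, add_zero, cf_neg_right]; module
    rw [act_mul, h1, map_sub, map_smul, h.act_T u, h.act_T, map_add, hr, add_zero, cf_self hx0]
    module

theorem act_zpow {g : W} {a : E} {r : Fin n → ℝ} (hr : S.π r = 0)
    (h : ∀ u, S.act g u = u - cf (S.π u) a • r) (z : ℤ) (u : Fin n → ℝ) :
    S.act (g ^ z) u = u - (z * cf (S.π u) a) • r := by
  have hinv : ∀ u, S.act g⁻¹ u = u + cf (S.π u) a • r := by
    intro u
    have h1 : u = S.act g (u + cf (S.π u) a • r) := by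
      rw [h]; simp [hr]
    conv_lhs => rw [h1]
    rw [← act_mul]; simp
  induction z using Int.induction_on generalizing u with
  | zero => simp
  | succ i ih =>
    rw [zpow_add_one, act_mul, h, ih, map_sub, map_smul, hr, smul_zero, sub_zero]; push_cast; module
  | pred i ih =>
    rw [zpow_sub_one, act_mul, hinv, ih, map_add, map_smul, hr, smul_zero, add_zero]; push_cast; module

theorem dep : ∀ t₁ ∈ T, ∀ t₂ ∈ T, ∀ t₃ ∈ T, ∀ r r' : Fin n → ℝ, S.π r = 0 → S.π r' = 0 →
    (S.rt t₂ = S.rt t₁ + r ∨ S.rt t₂ = -(S.rt t₁ + r)) → (S.rt t₃ = S.rt t₁ + r' ∨ S.rt t₃ = -(S.rt t₁ + r')) →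
    ∃ p q : ℝ, (p ≠ 0 ∨ q ≠ 0) ∧ p • r + q • r' = 0 := by
  intro t₁ h1 t₂ h2 t₃ h3 r r' hr hr' e2 e3
  obtain ⟨κ, a1, a2⟩ := (S.rt_spec h1).neg_eq (S.rt_spec h2) hr e2
  obtain ⟨κ', b1, b2⟩ := (S.rt_spec h1).neg_eq (S.rt_spec h3) hr' e3
  have hx0 := S.isRoot.ne_zero _ (S.rt_spec h1).π_mem
  have key : (t₁ * t₂) ^ κ' = (t₁ * t₃) ^ κ := by
    apply S.φ_inj
    ext v
    rw [S.transl a1, S.transl b1, ← Int.cast_smul_eq_zsmul ℝ, ← Int.cast_smul_eq_zsmul ℝ, smul_smul, smul_smul, mul_comm]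
  by_cases hκ : κ = 0
  · refine ⟨1, 0, Or.inl one_ne_zero, ?_⟩
    have : t₁ * t₂ = 1 := by
      apply S.φ_inj
      ext v
      rw [a1, hκ]; simp
    have h4 := a2 (S.rt t₁)
    rw [this, cf_self hx0] at h4
    rw [map_one, Module.End.one_apply] at h4
    have h5 : (2 : ℝ) • r = 0 := by
      have : (2 : ℝ) • r = S.rt t₁ - (S.rt t₁ - (2 : ℝ) • r) := by abel
      rw [this, ← h4, sub_self]
    rw [(smul_eq_zero.mp h5).resolve_left two_ne_zero]; simp
  · refine ⟨κ', -κ, Or.inr (by simpa using hκ), ?_⟩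
    have h4 := S.act_zpow hr a2 κ' (S.rt t₁)
    have h5 := S.act_zpow hr' b2 κ (S.rt t₁)
    rw [key, h5, cf_self hx0] at h4
    have h6 : (κ * 2 : ℝ) • r' = (κ' * 2 : ℝ) • r := by simpa using h4
    have h7 : (2 : ℝ) • ((κ' : ℝ) • r + (-κ : ℝ) • r') = 0 := by
      have : (2 : ℝ) • ((κ' : ℝ) • r + (-κ : ℝ) • r') = (κ' * 2 : ℝ) • r - (κ * 2 : ℝ) • r' := by module
      rw [this, h6, sub_self]
    exact (smul_eq_zero.mp h7).resolve_left two_ne_zero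

theorem faithful [FiniteDimensional ℝ E] (X : Set W) (hX : X ⊆ T) (g : W) (hg : g ∈ Subgroup.closure X)
    (hfix : ∀ x ∈ X, S.act g (S.rt x) = S.rt x) : g = 1 := by
  let K : Submodule ℝ E := Submodule.span ℝ {a | ∃ x ∈ X, a = S.π (S.rt x)}
  have h1 : ∀ h ∈ Subgroup.closure X, ∀ v, S.φ h v - v ∈ K := by
    intro h hh
    induction hh using Subgroup.closure_induction with
    | mem x hx =>
      intro v
      rw [(S.rt_spec (hX hx)).φ_T, coroot]
      have : v - S.A (S.rt x) v • (2 / ⟪S.π (S.rt x), S.π (S.rt x)⟫) • S.π (S.rt x) - v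
        = (- S.A (S.rt x) v * (2 / ⟪S.π (S.rt x), S.π (S.rt x)⟫)) • S.π (S.rt x) := by module
      rw [this]
      exact K.smul_mem _ (Submodule.subset_span ⟨x, hx, rfl⟩)
    | one => intro v; simp
    | mul a b _ _ ha hb =>
      intro v
      rw [φ_mul]
      have := K.add_mem (ha (S.φ b v)) (hb v)
      simpa using this
    | inv a _ ha =>
      intro v
      have h2 := K.neg_mem (ha (S.φ a⁻¹ v))
      rw [← φ_mul] at h2
      simpa using h2
  have h2 : ∀ a ∈ Kᗮ, ∀ h ∈ Subgroup.closure X, S.lin h a = a := by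
    intro a ha h hh
    induction hh using Subgroup.closure_induction with
    | mem x hx =>
      rw [(S.rt_spec (hX hx)).lin_T]
      have h0 := S.isRoot.ne_zero _ (S.rt_spec (hX hx)).π_mem
      have h3 : ⟪a, S.π (S.rt x)⟫ = 0 := by
        rw [real_inner_comm]
        exact (Submodule.mem_orthogonal K a).mp ha _ (Submodule.subset_span ⟨x, hx, rfl⟩)
      rw [(cf_eq_zero h0).mpr h3]; simp
    | one => simp
    | mul x y _ _ hx hy => rw [lin_mul, hy, hx]
    | inv x _ hx =>
      conv_lhs => rw [← hx]
      rw [← lin_mul]; simp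
  have h3 : ∀ a ∈ K, S.lin g a = a := by
    intro a ha
    induction ha using Submodule.span_induction with
    | mem a ha =>
      obtain ⟨x, hx, rfl⟩ := ha
      rw [← π_act, hfix x hx]
    | zero => simp
    | add a b _ _ ha hb => rw [map_add, ha, hb]
    | smul r a _ ha => rw [map_smul, ha]
  have h4 : ∀ a, S.lin g a = a := by
    intro a
    obtain ⟨y, hy, z, hz, e⟩ := K.exists_add_mem_mem_orthogonal a
    rw [e, map_add, h3 y hy, h2 z hz g hg]
  have h5 : S.φ g 0 ∈ K := by simpa using h1 g hg 0
  have h6 : ∀ b ∈ K, ⟪S.φ g 0, b⟫ = 0 := by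
    intro b hb
    induction hb using Submodule.span_induction with
    | mem a ha =>
      obtain ⟨x, hx, rfl⟩ := ha
      have h7 := S.A_act g (S.rt x) 0
      rw [hfix x hx] at h7
      have h8 := S.A_trans (S.rt x) 0 (S.φ g 0)
      rw [zero_add, h7] at h8
      linarith
    | zero => simp
    | add a b _ _ ha hb => rw [inner_add_right, ha, hb, add_zero]
    | smul r a _ ha => rw [real_inner_smul_right, ha, mul_zero]
  have h7 : S.φ g 0 = 0 := inner_self_eq_zero.mp (h6 _ h5)
  apply S.φ_inj
  ext v
  rw [φ_eq, ← lin_def, h4, h7]; simp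

noncomputable def datum [FiniteDimensional ℝ E] : Datum W T (Fin n → ℝ) E where
  Φ := S.Φ
  isRoot := S.isRoot
  π := S.π
  act := S.act
  lin := S.lin
  rt := S.rt
  π_act := S.π_act
  lin_inner := S.L_inner
  lin_fin := S.lin_fin
  invol := by
    intro t ht
    obtain ⟨⟨g, i⟩, rfl⟩ := (S.mem_T_iff t).mp ht
    have := S.s_sq i
    calc g * S.s i * g⁻¹ * (g * S.s i * g⁻¹) = g * (S.s i * S.s i) * g⁻¹ := by group
      _ = 1 := by rw [this]; group
  act_T := fun t ht => (S.rt_spec ht).act_T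
  lin_T := fun t ht => (S.rt_spec ht).lin_T
  π_rt := fun t ht => (S.rt_spec ht).π_mem
  rt_inj := fun t ht t' ht' => (S.rt_spec ht).inj (S.rt_spec ht')
  conj_T := by
    intro g t ht
    obtain ⟨⟨g', i⟩, rfl⟩ := (S.mem_T_iff t).mp ht
    exact (S.mem_T_iff _).mpr ⟨⟨g * g', i⟩, by group⟩
  rt_conj := by
    intro g t ht
    have h : g * t * g⁻¹ ∈ T := by
      obtain ⟨⟨g', i⟩, rfl⟩ := (S.mem_T_iff t).mp ht
      exact (S.mem_T_iff _).mpr ⟨⟨g * g', i⟩, by group⟩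
    exact (S.rt_spec h).uniq ((S.rt_spec ht).conj g)
  dep := S.dep
  faithful := S.faithful

theorem s_mem (j : Fin n) : S.s j ∈ T := (S.mem_T_iff _).mpr ⟨(1, j), by simp⟩

theorem rt_s (j : Fin n) : S.rt (S.s j) = e j ∨ S.rt (S.s j) = - e j :=
  (S.rt_spec (S.s_mem j)).uniq ⟨1, j, by simp, by simp⟩

variable [FiniteDimensional ℝ E]

theorem wt_of_rt {b : Bool} {g : W} {i : Fin n} : S.datum.wt b (g * S.s i * g⁻¹) = S.c b i := by
  rw [S.datum.wt_conj b g (S.s_mem i)]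
  have : ⟪S.datum.π (S.datum.rt (S.s i)), S.datum.π (S.datum.rt (S.s i))⟫ = ⟪S.α i, S.α i⟫ := by
    change ⟪S.π (S.rt (S.s i)), S.π (S.rt (S.s i))⟫ = _
    rcases S.rt_s i with h | h
    · rw [h, π_e]
    · rw [h, map_neg, inner_neg_neg, π_e]
  simp only [Datum.wt, c, this]

theorem InLat_s {X : List W} (hX : AllT T X) (j : Fin n) (hj : S.s j ∈ Subgroup.closure {x | x ∈ X}) :
    S.datum.InLat X (S.s j) := by
  intro b
  have key : ∀ h ∈ Subgroup.closure {x | x ∈ X}, ∀ v, S.InLam b v →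
      ∃ w ∈ S.datum.Lat b X, S.ρh h v = v + (w, 0) := by
    intro h hh
    induction hh using Subgroup.closure_induction with
    | mem x hx =>
      intro v hv
      have hxT := hX x hx
      have hmem := S.datum.mem_Lat b hx
      have hrt := S.rt_spec hxT
      obtain ⟨⟨g, i⟩, hgi⟩ := (S.mem_T_iff x).mp hxT
      simp only at hgi
      have hun := hrt.uniq ⟨g, i, hgi, rfl⟩
      obtain ⟨z, hz⟩ := S.co_int (S.InLam_ρh g⁻¹ v hv) i
      have hwt : S.datum.wt b x = S.c b i := by rw [hgi]; exact S.wt_of_rt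
      have hmem2 : S.c b i • S.act g (e i) ∈ S.datum.Lat b X := by
        rw [hwt] at hmem
        change S.c b i • S.rt x ∈ _ at hmem
        rcases hun with h | h
        · rw [h] at hmem; exact hmem
        · rw [h, smul_neg] at hmem; simpa using neg_mem hmem
      refine ⟨-(z • (S.c b i • S.act g (e i))), neg_mem (zsmul_mem hmem2 z), ?_⟩
      have e1 : S.ρh g (S.ρh g⁻¹ v) = v := by rw [← ρh_mul]; simp
      rw [hgi, ρh_mul, ρh_mul, ρh_s, ρ_apply, hz, map_sub, map_smul, e1, E0, ρh_inl]
      ext1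
      · simp only [Prod.fst_sub, Prod.smul_fst, Prod.fst_add, ← Int.cast_smul_eq_zsmul ℝ]
        module
      · simp
    | one => intro v _; exact ⟨0, zero_mem _, by simp⟩
    | mul x y _ _ hx hy =>
      intro v hv
      obtain ⟨w, hw, e1⟩ := hy v hv
      obtain ⟨w', hw', e2⟩ := hx _ (S.InLam_ρh y v hv)
      refine ⟨w + w', add_mem hw hw', ?_⟩
      rw [ρh_mul, e2, e1, add_assoc]; simp
    | inv x _ hx =>
      intro v hv
      obtain ⟨w, hw, e1⟩ := hx _ (S.InLam_ρh x⁻¹ v hv)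
      refine ⟨-w, neg_mem hw, ?_⟩
      rw [← ρh_mul] at e1
      simp only [mul_inv_cancel, map_one, Module.End.one_apply] at e1
      conv_rhs => rw [e1]
      rw [add_assoc]; simp
  have hv : S.InLam b (0, S.c b j • e j) := by
    intro i
    refine ⟨⟨0, by simp⟩, ?_⟩
    by_cases hij : i = j
    · subst hij; exact ⟨1, by simp [e]⟩
    · exact ⟨0, by simp [e, hij]⟩
  obtain ⟨w, hw, e1⟩ := key _ hj _ hv
  rw [ρh_s, ρ_apply] at e1
  have e2 : w = -(S.c b j • e j) := by
    have := congrArg Prod.fst e1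
    simpa [co, cf_zero, E0, e] using this.symm
  have hwt : S.datum.wt b (S.s j) = S.c b j := by
    have := S.wt_of_rt (b := b) (g := 1) (i := j)
    simpa using this
  rw [hwt]
  change S.c b j • S.rt (S.s j) ∈ _
  rcases S.rt_s j with h | h
  · rw [h]; rw [e2] at hw; simpa using neg_mem hw
  · rw [h, smul_neg, ← e2]; exact hw

theorem RC_of {m : ℕ} (hmn : m ≤ n) {X : List W} (hX : AllT T X) (hlen : X.length = m)
    (h : ∀ j : Fin m, S.s (Fin.castLE hmn j) ∈ Subgroup.closure {x | x ∈ X}) : S.datum.RC X := by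
  apply le_antisymm (S.datum.finrank_le X)
  have hmem : ∀ j : Fin m, e (Fin.castLE hmn j) ∈ S.datum.sp X := by
    intro j
    have h1 := S.datum.sp_of_InLat (S.InLat_s hX _ (h j))
    change S.rt _ ∈ _ at h1
    rcases S.rt_s (Fin.castLE hmn j) with h2 | h2
    · rwa [h2] at h1
    · rw [h2] at h1; simpa using neg_mem h1
  have hli : LinearIndependent ℝ (fun j : Fin m => (e (Fin.castLE hmn j) : Fin n → ℝ)) := by
    have := (Pi.basisFun ℝ (Fin n)).linearIndependent.comp (Fin.castLE hmn) (Fin.castLE_injective hmn)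
    convert this using 2
    simp [e]
  have hli2 : LinearIndependent ℝ (fun j : Fin m => (⟨e (Fin.castLE hmn j), hmem j⟩ : S.datum.sp X)) := by
    apply LinearIndependent.of_comp (S.datum.sp X).subtype
    exact hli
  have := hli2.fintype_card_le_finrank
  rw [hlen]
  simpa using this

end Setup


theorem statement_0 {W : Type*} [Group W] (T : Set W)
    (hdual : IsDualCoxeterSystem W T)
    (haffine : Nonempty (AffineDualCoxeterModel W T))
    (w : W) (hw : IsParabolicQuasiCoxeter T w)
    (l l' : List W) (hl : IsRedFac T w l) (hl' : IsRedFac T w l') :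
    HurwitzEquiv l l' := by
  classical
  obtain ⟨𝓜⟩ := haffine
  obtain ⟨n, m, hmn, s, t, hs, ⟨B, M, cs, hrange, hT⟩, hX, hcl⟩ := hw
  letI := 𝓜.normed
  letI := 𝓜.ips
  haveI := 𝓜.fd
  have h1 : ∀ b, ∃ i, s i = cs.simple b := by
    intro b
    have : cs.simple b ∈ Set.range s := by rw [hrange]; exact ⟨b, rfl⟩
    exact this
  choose idx hidx using h1
  have hsurj : Function.Surjective idx := by
    intro i
    have : s i ∈ Set.range cs.simple := by rw [← hrange]; exact ⟨i, rfl⟩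
    obtain ⟨b, hb⟩ := this
    exact ⟨b, hs (by rw [hidx, hb])⟩
  have hmT : ∀ t, t ∈ T ↔ cs.IsReflection t := by intro t; rw [hT]; rfl
  have hsT : ∀ i, s i ∈ T := by
    intro i
    obtain ⟨b, rfl⟩ := hsurj i
    rw [hidx, hmT]
    exact cs.isReflection_simple b
  choose α hα k hk using fun i => (𝓜.mem_T_iff (s i)).mp (hsT i)
  let S : Setup W T 𝓜.E n :=
    { Φ := 𝓜.Φ
      isRoot := 𝓜.isRoot
      φ := (AffWeylGroup 𝓜.Φ).subtype.comp 𝓜.iso.toMonoidHom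
      φ_inj := fun a b h => 𝓜.iso.injective (Subtype.ext h)
      φ_mem := fun g => (𝓜.iso g).2
      s := s
      s_inj := hs
      B := B
      M := M
      cs := cs
      idx := idx
      s_idx := hidx
      idx_surj := hsurj
      mem_T := hmT
      α := α
      k := k
      α_mem := hα
      φ_s := hk }
  have hXc : Subgroup.closure {x | x ∈ List.ofFn t} = Subgroup.closure (Set.range fun j : Fin m => s (Fin.castLE hmn j)) := by
    rw [← hcl]
    congr 1
    ext x
    simp [List.mem_ofFn]
  let J : Set B := {b | ∃ j : Fin m, s (Fin.castLE hmn j) = cs.simple b}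
  have hJ : cs.simple '' J = Set.range fun j : Fin m => s (Fin.castLE hmn j) := by
    ext x
    constructor
    · rintro ⟨b, ⟨j, hj⟩, rfl⟩
      exact ⟨j, hj⟩
    · rintro ⟨j, rfl⟩
      obtain ⟨b, hb⟩ := hsurj (Fin.castLE hmn j)
      exact ⟨b, ⟨j, by rw [← hb, hidx]⟩, by simp only [← hb, hidx]⟩
  have hXT : AllT T (List.ofFn t) := hX.1
  have hmem : ∀ j : Fin m, S.s (Fin.castLE hmn j) ∈ Subgroup.closure {x | x ∈ List.ofFn t} := by
    intro j
    rw [hXc]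
    exact Subgroup.subset_closure ⟨j, rfl⟩
  have hRC : S.datum.RC (List.ofFn t) := S.RC_of hmn hXT (by simp) hmem
  have hmin : ∀ Z : List W, (∀ t ∈ Z, t ∈ T) → Z.prod = w → reflLength T w ≤ Z.length := by
    intro Z hZ hp
    exact Nat.sInf_le ⟨Z, hZ, hp, rfl⟩
  have main : ∀ Y, IsRedFac T w Y → HurwitzEquiv (List.ofFn t) Y := by
    intro Y hY
    have hgood := BDSW.main cs (J := J) Y (fun x hx => (hmT x).mp (hY.1 x hx))
      (fun Z hZ hp => by
        rw [hY.2.2]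
        exact hmin Z (fun x hx => (hmT x).mpr (hZ x hx)) (hp.trans hY.2.1))
      (by
        rw [hJ, ← hXc, hY.2.1, ← hX.2.1]
        exact Datum.prod_mem)
    refine S.datum.MAIN _ rfl hXT hY.1 hRC (hX.2.1.trans hY.2.1.symm) (hX.2.2.trans hY.2.2.symm) ?_ ?_ ?_
    · intro Z hZ hp
      rw [hX.2.2]
      exact hmin Z hZ (hp.trans hX.2.1)
    · intro y hy
      rw [hXc, ← hJ]
      exact (hgood y hy).mem
    · intro y hy
      obtain ⟨g, hg, b, ⟨j, hj⟩, rfl⟩ := hgood y hy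
      rw [hJ, ← hXc] at hg
      rw [← hj]
      exact S.datum.InLat_conj hXT hg (hsT _) (S.InLat_s hXT _ (hmem j))
  exact (main l hl).symm.trans (main l' hl')
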